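/- Let a = (a_n)_{n≥1} be a sequence of positive integers such that the infinite word a₁a₂a₃… begins in arbitrarily long palindromes, i.e., for every N there exists n ≥ N such that a_j = a_{n+1−j} for all 1 ≤ j ≤ n. Then the real number α = [0; a₁, a₂, …, a_n, …] is either a quadratic irrational or transcendental (i.e., α is not algebraic of degree ≥ 3 over ℚ). -/

import Mathlib

open Filter Topology

/-- Numerators of the convergents of `[0; a 1, a 2, ...]`. -/
def cfNum (a : ℕ → ℕ) : ℕ → ℕ
  | 0 => 0
  | 1 => 1
  | n + 2 => a (n + 2) * cfNum a (n + 1) + cfNum a n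

/-- Denominators of the convergents of `[0; a 1, a 2, ...]`. -/
def cfDen (a : ℕ → ℕ) : ℕ → ℕ
  | 0 => 1
  | 1 => a 1
  | n + 2 => a (n + 2) * cfDen a (n + 1) + cfDen a n

namespace PalCF
open MvPolynomial

/-- weight of an exponent -/
noncomputable def ew {σ : Type*} (ρ : σ → ℝ) (e : σ →₀ ℕ) : ℝ := e.prod (fun v k => ρ v ^ k)

/-- weighted l1 norm of a real polynomial -/
noncomputable def wn {σ : Type*} (ρ : σ → ℝ) (P : MvPolynomial σ ℝ) : ℝ :=
  ∑ e ∈ P.support, |coeff e P| * ew ρ e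

section
variable {σ : Type*} {ρ : σ → ℝ}

lemma ew_add (e f : σ →₀ ℕ) : ew ρ (e + f) = ew ρ e * ew ρ f := by
  classical
  unfold ew
  exact Finsupp.prod_add_index' (by simp) (by intros; ring)

lemma ew_nonneg (hρ : ∀ v, 0 ≤ ρ v) (e : σ →₀ ℕ) : 0 ≤ ew ρ e :=
  Finset.prod_nonneg (fun v _ => pow_nonneg (hρ v) _)

lemma ew_one (e : σ →₀ ℕ) : ew (fun _ : σ => (1:ℝ)) e = 1 := by
  simp [ew, Finsupp.prod]

lemma wn_eq_sum {P : MvPolynomial σ ℝ} {s : Finset (σ →₀ ℕ)} (hs : P.support ⊆ s) :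
    wn ρ P = ∑ e ∈ s, |coeff e P| * ew ρ e := by
  unfold wn
  apply Finset.sum_subset hs
  intro e _ he
  simp [notMem_support_iff.mp he]

lemma wn_nonneg (hρ : ∀ v, 0 ≤ ρ v) (P : MvPolynomial σ ℝ) : 0 ≤ wn ρ P :=
  Finset.sum_nonneg (fun e _ => mul_nonneg (abs_nonneg _) (ew_nonneg hρ e))

lemma coeff_le_wn (hρ : ∀ v, 0 ≤ ρ v) (P : MvPolynomial σ ℝ) (e : σ →₀ ℕ) :
    |coeff e P| * ew ρ e ≤ wn ρ P := by
  classical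
  rw [wn_eq_sum (s := insert e P.support) (Finset.subset_insert _ _)]
  exact Finset.single_le_sum (f := fun e => |coeff e P| * ew ρ e)
    (fun e _ => mul_nonneg (abs_nonneg _) (ew_nonneg hρ e)) (Finset.mem_insert_self _ _)

lemma wn_zero : wn ρ 0 = 0 := by simp [wn]

lemma wn_add_le (hρ : ∀ v, 0 ≤ ρ v) (P Q : MvPolynomial σ ℝ) :
    wn ρ (P + Q) ≤ wn ρ P + wn ρ Q := by
  classical
  rw [wn_eq_sum (s := P.support ∪ Q.support) support_add,
    wn_eq_sum (P := P) (s := P.support ∪ Q.support) Finset.subset_union_left,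
    wn_eq_sum (P := Q) (s := P.support ∪ Q.support) Finset.subset_union_right,
    ← Finset.sum_add_distrib]
  apply Finset.sum_le_sum
  intro e _
  rw [← add_mul, coeff_add]
  exact mul_le_mul_of_nonneg_right (abs_add_le _ _) (ew_nonneg hρ e)

lemma wn_sum_le (hρ : ∀ v, 0 ≤ ρ v) {ι : Type*} (s : Finset ι) (f : ι → MvPolynomial σ ℝ) :
    wn ρ (∑ i ∈ s, f i) ≤ ∑ i ∈ s, wn ρ (f i) := by
  classical
  induction s using Finset.induction_on with
  | empty => simp [wn_zero]
  | insert a s ha ih =>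
    rw [Finset.sum_insert ha, Finset.sum_insert ha]
    exact (wn_add_le hρ _ _).trans (by linarith)

lemma wn_monomial (e : σ →₀ ℕ) (c : ℝ) : wn ρ (monomial e c) = |c| * ew ρ e := by
  classical
  rw [wn_eq_sum (s := {e}) support_monomial_subset]
  simp

lemma wn_mul_le (hρ : ∀ v, 0 ≤ ρ v) (P Q : MvPolynomial σ ℝ) :
    wn ρ (P * Q) ≤ wn ρ P * wn ρ Q := by
  classical
  conv_lhs => rw [P.as_sum, Q.as_sum, Finset.sum_mul_sum]
  refine (wn_sum_le hρ _ _).trans ?_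
  unfold wn
  rw [Finset.sum_mul_sum]
  apply Finset.sum_le_sum
  intro e _
  refine (wn_sum_le hρ _ _).trans ?_
  apply Finset.sum_le_sum
  intro f _
  rw [monomial_mul, wn_monomial, ew_add, abs_mul]
  apply le_of_eq; ring

lemma wn_C (c : ℝ) : wn ρ (C c) = |c| := by
  have := wn_monomial (ρ := ρ) 0 c
  simpa [ew] using this

lemma wn_one : wn ρ 1 = 1 := by
  have := wn_C (ρ := ρ) 1
  simpa using this

lemma wn_X (v : σ) : wn ρ (X v) = ρ v := by
  have := wn_monomial (ρ := ρ) (Finsupp.single v 1) 1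
  simpa [ew, X] using this

lemma wn_C_mul (c : ℝ) (P : MvPolynomial σ ℝ) (hρ : ∀ v, 0 ≤ ρ v) :
    wn ρ (C c * P) ≤ |c| * wn ρ P := by
  have := wn_mul_le hρ (C c) P
  rwa [wn_C] at this

lemma wn_pow_le (hρ : ∀ v, 0 ≤ ρ v) (P : MvPolynomial σ ℝ) (n : ℕ) :
    wn ρ (P ^ n) ≤ wn ρ P ^ n := by
  induction n with
  | zero => simp [wn_one]
  | succ n ih =>
    rw [pow_succ, pow_succ]
    exact (wn_mul_le hρ _ _).trans (mul_le_mul_of_nonneg_right ih (wn_nonneg hρ _))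

lemma wn_prod_le (hρ : ∀ v, 0 ≤ ρ v) {ι : Type*} (s : Finset ι) (f : ι → MvPolynomial σ ℝ) :
    wn ρ (∏ i ∈ s, f i) ≤ ∏ i ∈ s, wn ρ (f i) := by
  classical
  induction s using Finset.induction_on with
  | empty => simp [wn_one]
  | insert a s ha ih =>
    rw [Finset.prod_insert ha, Finset.prod_insert ha]
    exact (wn_mul_le hρ _ _).trans (mul_le_mul_of_nonneg_left ih (wn_nonneg hρ _))

lemma wn_neg (P : MvPolynomial σ ℝ) : wn ρ (-P) = wn ρ P := by
  simp [wn]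

/-- l1 norm of an integer polynomial -/
noncomputable def zn (P : MvPolynomial σ ℤ) : ℝ :=
  wn (fun _ => 1) (P.map (Int.castRingHom ℝ))

lemma zn_nonneg (P : MvPolynomial σ ℤ) : 0 ≤ zn P := wn_nonneg (by simp) _

lemma zn_mul_le (P Q : MvPolynomial σ ℤ) : zn (P * Q) ≤ zn P * zn Q := by
  unfold zn; rw [map_mul]; exact wn_mul_le (by simp) _ _

lemma zn_prod_le {ι : Type*} (s : Finset ι) (f : ι → MvPolynomial σ ℤ) :
    zn (∏ i ∈ s, f i) ≤ ∏ i ∈ s, zn (f i) := by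
  unfold zn; rw [map_prod]; exact wn_prod_le (by simp) _ _

lemma zn_sum_le {ι : Type*} (s : Finset ι) (f : ι → MvPolynomial σ ℤ) :
    zn (∑ i ∈ s, f i) ≤ ∑ i ∈ s, zn (f i) := by
  unfold zn; rw [map_sum]; exact wn_sum_le (by simp) _ _

lemma zn_neg (P : MvPolynomial σ ℤ) : zn (-P) = zn P := by
  unfold zn; rw [map_neg, wn_neg]

lemma zn_eq_sum {P : MvPolynomial σ ℤ} {s : Finset (σ →₀ ℕ)} (hs : P.support ⊆ s) :
    zn P = ∑ e ∈ s, |((coeff e P : ℤ) : ℝ)| := by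
  unfold zn
  rw [wn_eq_sum (s := s) ((support_map_subset _ _).trans hs)]
  simp [ew_one, coeff_map]

lemma coeff_le_zn (P : MvPolynomial σ ℤ) (e : σ →₀ ℕ) : |((coeff e P : ℤ) : ℝ)| ≤ zn P := by
  have := coeff_le_wn (ρ := fun _ => 1) (by simp) (P.map (Int.castRingHom ℝ)) e
  simpa [ew_one, coeff_map, zn] using this

lemma one_le_zn {P : MvPolynomial σ ℤ} (hP : P ≠ 0) : 1 ≤ zn P := by
  obtain ⟨e, he⟩ := ne_zero_iff.mp hP
  refine le_trans ?_ (coeff_le_zn P e)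
  exact_mod_cast Int.one_le_abs he

lemma zn_monomial (e : σ →₀ ℕ) (c : ℤ) : zn (monomial e c) = |(c : ℝ)| := by
  unfold zn
  rw [map_monomial, wn_monomial, ew_one]
  simp

end
end PalCF

namespace PalCF
open MvPolynomial

section hasse
variable {σ : Type*} {R : Type*} [CommRing R]

/-- generic Taylor expansion -/
noncomputable def Tay : MvPolynomial σ R →ₐ[R] MvPolynomial σ (MvPolynomial σ R) :=
  aeval (fun v => C (X v) + X v)

/-- multivariate Hasse derivative -/
noncomputable def HD (I : σ →₀ ℕ) : MvPolynomial σ R →ₗ[R] MvPolynomial σ R where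
  toFun P := coeff I (Tay P)
  map_add' P Q := by simp
  map_smul' c P := by simp [MvPolynomial.coeff_smul]

/-- translation -/
noncomputable def Sh (β : σ → R) : MvPolynomial σ R →ₐ[R] MvPolynomial σ R :=
  aeval (fun v => X v + C (β v))

lemma HD_apply (I : σ →₀ ℕ) (P : MvPolynomial σ R) : HD I P = coeff I (Tay P) := rfl

lemma Tay_Sh (β : σ → R) (P : MvPolynomial σ R) :
    Tay (Sh β P) = MvPolynomial.map (Sh β : MvPolynomial σ R →ₐ[R] MvPolynomial σ R).toRingHom (Tay P) := by
  have h : (Tay (R := R) (σ := σ)).toRingHom.comp (Sh β).toRingHom =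
      (MvPolynomial.map (Sh β).toRingHom).comp (Tay (R := R) (σ := σ)).toRingHom := by
    apply MvPolynomial.ringHom_ext
    · intro a
      simp [Tay, Sh, MvPolynomial.algebraMap_eq, MvPolynomial.algebraMap_apply]
    · intro v
      simp [Tay, Sh, MvPolynomial.algebraMap_eq, MvPolynomial.algebraMap_apply]
      ring
  exact DFunLike.congr_fun h P

lemma HD_Sh (β : σ → R) (I : σ →₀ ℕ) (P : MvPolynomial σ R) :
    HD I (Sh β P) = Sh β (HD I P) := by
  rw [HD_apply, Tay_Sh, coeff_map]; rfl

lemma Sh_injective (β : σ → R) : Function.Injective (Sh β : MvPolynomial σ R →ₐ[R] _) := by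
  have : (Sh (fun v => - β v)).comp (Sh β : MvPolynomial σ R →ₐ[R] _) = AlgHom.id R _ := by
    ext v; simp [Sh, MvPolynomial.algebraMap_eq]
  intro P Q h
  have h2 := congrArg (Sh (fun v => - β v)) h
  have e : ∀ P, Sh (fun v => - β v) (Sh β P) = P := fun P => DFunLike.congr_fun this P
  rwa [e, e] at h2

variable [Fintype σ]

/-- product of binomials -/
def bn (e I : σ →₀ ℕ) : ℕ := ∏ v, (e v).choose (I v)

lemma HD_monomial (I e : σ →₀ ℕ) (c : R) :
    HD I (monomial e c) = monomial (e - I) (c * bn e I) := by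
  classical
  have h1 : Tay (monomial e c : MvPolynomial σ R) =
      ∑ f ∈ Fintype.piFinset (fun v => Finset.range (e v + 1)),
        monomial (Finsupp.equivFunOnFinite.symm f)
          (monomial (e - Finsupp.equivFunOnFinite.symm f)
            (c * bn e (Finsupp.equivFunOnFinite.symm f))) := by
    rw [Tay, aeval_monomial, Finsupp.prod_fintype _ _ (by simp)]
    simp_rw [add_comm (C (X _)) (X _), add_pow]
    rw [Finset.prod_univ_sum, Finset.mul_sum]
    apply Finset.sum_congr rfl
    intro f hf
    rw [monomial_eq, monomial_eq]
    rw [Finsupp.prod_fintype _ _ (by simp), Finsupp.prod_fintype _ _ (by simp)]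
    simp only [Finset.prod_mul_distrib, bn, Finsupp.equivFunOnFinite_symm_apply_apply,
      Finsupp.tsub_apply, map_mul, map_prod, map_pow, map_natCast, Nat.cast_prod,
      MvPolynomial.algebraMap_apply, MvPolynomial.algebraMap_eq]
    ring
  rw [HD_apply, h1, coeff_sum]
  simp_rw [coeff_monomial]
  by_cases hI : (I : σ → ℕ) ∈ Fintype.piFinset (fun v => Finset.range (e v + 1))
  · rw [Finset.sum_eq_single (I : σ → ℕ)]
    · have : Finsupp.equivFunOnFinite.symm (I : σ → ℕ) = I := by ext; simp
      simp [this]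
    · intro b _ hb
      rw [if_neg]
      rintro rfl
      exact hb (by ext; simp)
    · intro h; exact absurd hI h
  · rw [Finset.sum_eq_zero]
    · have : bn e I = 0 := by
        simp only [Fintype.mem_piFinset, Finset.mem_range, not_forall, not_lt] at hI
        obtain ⟨v, hv⟩ := hI
        exact Finset.prod_eq_zero (Finset.mem_univ v) (Nat.choose_eq_zero_of_lt (by omega))
      simp [this]
    · intro f hf
      rw [if_neg]
      rintro rfl
      exact hI (by simpa using hf)

lemma bn_eq_zero {e I : σ →₀ ℕ} (h : ¬ I ≤ e) : bn e I = 0 := by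
  have : ∃ v, e v < I v := by
    by_contra hc
    push Not at hc
    exact h hc
  obtain ⟨v, hv⟩ := this
  exact Finset.prod_eq_zero (Finset.mem_univ v) (Nat.choose_eq_zero_of_lt hv)

lemma coeff_HD (I e : σ →₀ ℕ) (P : MvPolynomial σ R) :
    coeff e (HD I P) = bn (e + I) I * coeff (e + I) P := by
  classical
  induction P using MvPolynomial.induction_on' with
  | monomial f c =>
    rw [HD_monomial, coeff_monomial, coeff_monomial]
    by_cases hI : I ≤ f
    · have : f - I = e ↔ f = e + I := tsub_eq_iff_eq_add_of_le hI
      by_cases h : f = e + I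
      · rw [if_pos (this.2 h), if_pos h, h, mul_comm]
      · rw [if_neg (fun h' => h (this.1 h')), if_neg h, mul_zero]
    · rw [bn_eq_zero hI]
      have : f ≠ e + I := by rintro rfl; exact hI (by simp)
      simp [this]
  | add p q hp hq => simp only [map_add, coeff_add, hp, hq, mul_add]

lemma HD_map {S : Type*} [CommRing S] (g : R →+* S) (I : σ →₀ ℕ) (P : MvPolynomial σ R) :
    HD I (P.map g) = (HD I P).map g := by
  ext e
  simp [coeff_HD, coeff_map]

lemma bn_le (e I : σ →₀ ℕ) : bn e I ≤ 2 ^ (∑ v, e v) := by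
  rw [← Finset.prod_pow_eq_pow_sum]
  exact Finset.prod_le_prod (by simp) (fun v _ => Nat.choose_le_two_pow _ _)

lemma coeff_HD_ne_zero {I e : σ →₀ ℕ} {P : MvPolynomial σ R} (h : coeff e (HD I P) ≠ 0) :
    coeff (e + I) P ≠ 0 := by
  rw [coeff_HD] at h
  exact right_ne_zero_of_mul h

lemma zn_HD_le (I : σ →₀ ℕ) (P : MvPolynomial σ ℤ) (N : ℕ)
    (hN : ∀ e, coeff e P ≠ 0 → ∑ v, e v ≤ N) : zn (HD I P) ≤ 2 ^ N * zn P := by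
  classical
  conv_lhs => rw [P.as_sum, map_sum]
  refine (zn_sum_le _ _).trans ?_
  rw [zn_eq_sum (subset_refl _), Finset.mul_sum]
  apply Finset.sum_le_sum
  intro e he
  rw [HD_monomial, zn_monomial]
  push_cast
  rw [abs_mul, mul_comm]
  apply mul_le_mul_of_nonneg_right _ (abs_nonneg _)
  rw [Nat.abs_cast]
  have h1 : bn e I ≤ 2 ^ N := (bn_le e I).trans
    (Nat.pow_le_pow_right (by norm_num) (hN e (mem_support_iff.mp he)))
  exact_mod_cast h1

end hasse
end PalCF

namespace PalCF
open MvPolynomial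

section wronskian
variable {σ : Type*} {K : Type*} [Field K]

/-- multiply coefficients by a function -/
noncomputable def Gop (g : (σ →₀ ℕ) → K) (P : MvPolynomial σ K) : MvPolynomial σ K :=
  ∑ e ∈ P.support, monomial e (g e * coeff e P)

lemma coeff_Gop (g : (σ →₀ ℕ) → K) (P : MvPolynomial σ K) (e : σ →₀ ℕ) :
    coeff e (Gop g P) = g e * coeff e P := by
  classical
  rw [Gop, coeff_sum]
  simp_rw [coeff_monomial]
  rw [Finset.sum_ite_eq']
  by_cases h : e ∈ P.support
  · rw [if_pos h]
  · rw [if_neg h, notMem_support_iff.mp h, mul_zero]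

variable [Fintype σ]

/-- span of products of binomials of order at most s -/
def Bs (σ K : Type*) [Field K] [Fintype σ] (s : ℕ) : Submodule K ((σ →₀ ℕ) → K) :=
  Submodule.span K {g | ∃ I : σ →₀ ℕ, ∑ v, I v ≤ s ∧ g = fun e => (bn e I : K)}

lemma bn_succ (e I : σ →₀ ℕ) (v : σ) :
    e v * bn e I = (I v + 1) * bn e (I + Finsupp.single v 1) + I v * bn e I := by
  classical
  have h1 : bn e I = (e v).choose (I v) * ∏ w ∈ Finset.univ.erase v, (e w).choose (I w) := by
    rw [bn, Finset.mul_prod_erase _ (fun w => (e w).choose (I w)) (Finset.mem_univ v)]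
  have h2 : bn e (I + Finsupp.single v 1) = (e v).choose (I v + 1) *
      ∏ w ∈ Finset.univ.erase v, (e w).choose (I w) := by
    rw [bn, ← Finset.mul_prod_erase _ _ (Finset.mem_univ v)]
    congr 1
    · simp
    · apply Finset.prod_congr rfl
      intro w hw
      have : w ≠ v := (Finset.mem_erase.mp hw).1
      simp [Finsupp.single_apply, this.symm]
  rw [h1, h2]
  have h3 := Nat.choose_succ_right_eq (e v) (I v)
  by_cases h : I v ≤ e v
  · obtain ⟨t, ht⟩ := Nat.exists_eq_add_of_le h
    have h4 : e v - I v = t := by omega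
    rw [h4] at h3
    set Q := ∏ w ∈ Finset.univ.erase v, (e w).choose (I w)
    calc e v * ((e v).choose (I v) * Q) = (I v + t) * ((e v).choose (I v) * Q) := by rw [← ht]
      _ = ((e v).choose (I v) * t) * Q + I v * ((e v).choose (I v) * Q) := by ring
      _ = _ := by rw [← h3]; ring
  · rw [Nat.choose_eq_zero_of_lt (by omega : e v < I v), Nat.choose_eq_zero_of_lt (by omega : e v < I v + 1)]
    simp

lemma Bs_mono {s t : ℕ} (h : s ≤ t) : Bs σ K s ≤ Bs σ K t :=
  Submodule.span_mono (fun g ⟨I, hI, hg⟩ => ⟨I, hI.trans h, hg⟩)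

lemma Bs_mul {s : ℕ} {g : (σ →₀ ℕ) → K} (hg : g ∈ Bs σ K s) (v : σ) (c : K) :
    (fun e => ((e v : K) - c) * g e) ∈ Bs σ K (s + 1) := by
  induction hg using Submodule.span_induction with
  | mem g hg =>
    obtain ⟨I, hI, rfl⟩ := hg
    have h1 : (fun e : σ →₀ ℕ => (bn e I : K)) ∈ Bs σ K (s+1) :=
      Submodule.subset_span ⟨I, by omega, rfl⟩
    have h2 : (fun e : σ →₀ ℕ => (bn e (I + Finsupp.single v 1) : K)) ∈ Bs σ K (s+1) := by
      refine Submodule.subset_span ⟨_, ?_, rfl⟩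
      classical
      simp [Finset.sum_add_distrib, Finsupp.single_apply]
      exact hI
    have := Submodule.add_mem _ (Submodule.smul_mem _ ((I v + 1 : ℕ) : K) h2)
      (Submodule.smul_mem _ ((I v : K) - c) h1)
    convert this using 1
    funext e
    simp only [Pi.add_apply, Pi.smul_apply, smul_eq_mul]
    have h := congrArg (Nat.cast : ℕ → K) (bn_succ e I v)
    push_cast at h ⊢
    linear_combination h
  | zero =>
    convert Submodule.zero_mem (Bs σ K (s+1)) using 1
    funext e; simp
  | add g h _ _ hg hh =>
    convert Submodule.add_mem _ hg hh using 1
    funext e; simp; ring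
  | smul a g _ hg =>
    convert Submodule.smul_mem _ a hg using 1
    funext e; simp; ring

lemma Bs_interp [CharZero K] {ι : Type*} (s : Finset ι) (e : ι → (σ →₀ ℕ)) (e0 : σ →₀ ℕ)
    (h : ∀ ν ∈ s, e ν ≠ e0) :
    ∃ g ∈ Bs σ K s.card, (∀ ν ∈ s, g (e ν) = 0) ∧ g e0 ≠ 0 := by
  classical
  induction s using Finset.induction_on with
  | empty =>
    refine ⟨fun e => (bn e 0 : K), Submodule.subset_span ⟨0, by simp, rfl⟩, by simp, ?_⟩
    simp [bn]
  | insert a s ha ih =>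
    obtain ⟨g, hg, h0, h1⟩ := ih (fun ν hν => h ν (Finset.mem_insert_of_mem hν))
    have hne := h a (Finset.mem_insert_self _ _)
    obtain ⟨v, hv⟩ : ∃ v, e a v ≠ e0 v := by
      by_contra hc
      push Not at hc
      exact hne (Finsupp.ext hc)
    refine ⟨fun f => ((f v : K) - (e a v : K)) * g f, ?_, ?_, ?_⟩
    · rw [Finset.card_insert_of_notMem ha]
      exact Bs_mul hg v _
    · intro ν hν
      rcases Finset.mem_insert.mp hν with rfl | hν
      · simp
      · simp [h0 ν hν]
    · refine mul_ne_zero ?_ h1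
      rw [sub_ne_zero]
      exact_mod_cast hv.symm

lemma Gop_bn (I : σ →₀ ℕ) (P : MvPolynomial σ K) :
    Gop (fun e => (bn e I : K)) P = monomial I 1 * HD I P := by
  classical
  ext e
  rw [coeff_Gop]
  rw [coeff_monomial_mul']
  by_cases h : I ≤ e
  · rw [if_pos h, coeff_HD, tsub_add_cancel_of_le h, one_mul]
  · rw [if_neg h, bn_eq_zero h]; simp

lemma Gop_sum_eq_zero {k : ℕ} {s : ℕ} (φ f : Fin k → MvPolynomial σ K)
    (H : ∀ I : σ →₀ ℕ, ∑ v, I v ≤ s → ∑ ν, f ν * HD I (φ ν) = 0)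
    {g : (σ →₀ ℕ) → K} (hg : g ∈ Bs σ K s) : ∑ ν, f ν * Gop g (φ ν) = 0 := by
  induction hg using Submodule.span_induction with
  | mem g hg =>
    obtain ⟨I, hI, rfl⟩ := hg
    simp_rw [Gop_bn]
    have := congrArg (fun x => monomial I (1:K) * x) (H I hI)
    simp only [Finset.mul_sum, mul_zero] at this
    rw [← this]
    apply Finset.sum_congr rfl
    intros; ring
  | zero =>
    apply Finset.sum_eq_zero
    intro ν _
    have : Gop 0 (φ ν) = 0 := by ext e; rw [coeff_Gop]; simp
    rw [this, mul_zero]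
  | add g h _ _ hg hh =>
    have : ∀ ν, Gop (g + h) (φ ν) = Gop g (φ ν) + Gop h (φ ν) := by
      intro ν; ext e; rw [coeff_add, coeff_Gop, coeff_Gop, coeff_Gop]; simp [add_mul]
    simp_rw [this, mul_add, Finset.sum_add_distrib, hg, hh, add_zero]
  | smul a g _ hg =>
    have : ∀ ν, Gop (a • g) (φ ν) = C a * Gop g (φ ν) := by
      intro ν; ext e; rw [coeff_C_mul, coeff_Gop, coeff_Gop]; simp [mul_assoc]
    simp_rw [this]
    have h := congrArg (fun x => C a * x) hg
    simp only [Finset.mul_sum, mul_zero] at h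
    rw [← h]
    apply Finset.sum_congr rfl
    intros; ring

lemma wr_distinct [CharZero K] (m : MonomialOrder σ) {k : ℕ} (φ f : Fin k → MvPolynomial σ K)
    (hφ : ∀ ν, φ ν ≠ 0) (hd : Function.Injective (fun ν => m.degree (φ ν)))
    (H : ∀ I : σ →₀ ℕ, ∑ v, I v ≤ k - 1 → ∑ ν, f ν * HD I (φ ν) = 0) : f = 0 := by
  classical
  by_contra hf
  have hne : (Finset.univ.filter (fun ν => f ν ≠ 0)).Nonempty := by
    obtain ⟨ν, hν⟩ := Function.ne_iff.mp hf
    exact ⟨ν, by simpa using hν⟩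
  obtain ⟨ν0, hν0, hmax⟩ := Finset.exists_max_image _
    (fun ν => m.toSyn (m.degree (f ν) + m.degree (φ ν))) hne
  have hf0 : f ν0 ≠ 0 := (Finset.mem_filter.mp hν0).2
  obtain ⟨g, hg, hg0, hg1⟩ := Bs_interp (K := K) (Finset.univ.erase ν0)
    (fun ν => m.degree (φ ν)) (m.degree (φ ν0))
    (fun ν hν h => (Finset.mem_erase.mp hν).1 (hd h))
  have hc : (Finset.univ.erase ν0).card = k - 1 := by
    rw [Finset.card_erase_of_mem (Finset.mem_univ _)]; simp
  rw [hc] at hg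
  have h0 := congrArg (coeff (m.degree (f ν0) + m.degree (φ ν0))) (Gop_sum_eq_zero φ f H hg)
  have hG : ∀ ν, m.toSyn (m.degree (Gop g (φ ν))) ≤ m.toSyn (m.degree (φ ν)) := by
    intro ν
    rw [m.degree_le_iff]
    intro c hc
    rw [mem_support_iff, coeff_Gop] at hc
    exact m.le_degree (mem_support_iff.mpr (right_ne_zero_of_mul hc))
  rw [coeff_sum, coeff_zero, Finset.sum_eq_single ν0] at h0
  · rw [m.coeff_mul_of_add_of_degree_le le_rfl (hG ν0), coeff_Gop] at h0
    refine mul_ne_zero ?_ (mul_ne_zero hg1 ?_) h0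
    · exact (m.coeff_degree_ne_zero_iff).mpr hf0
    · exact (m.coeff_degree_ne_zero_iff).mpr (hφ ν0)
  · intro ν _ hν
    by_cases hfν : f ν = 0
    · simp [hfν]
    have hle := hmax ν (by simpa using hfν)
    rcases hle.lt_or_eq with hlt | heq
    · apply m.coeff_eq_zero_of_lt
      refine lt_of_le_of_lt (m.degree_mul_le.trans ?_) hlt
      rw [map_add, map_add]
      exact add_le_add le_rfl (hG ν)
    · rw [← m.toSyn.injective heq, m.coeff_mul_of_add_of_degree_le le_rfl (hG ν), coeff_Gop,
        hg0 ν (Finset.mem_erase.mpr ⟨hν, Finset.mem_univ _⟩)]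
      simp
  · simp

lemma wr_indep [CharZero K] (m : MonomialOrder σ) {k : ℕ} (φ f : Fin k → MvPolynomial σ K)
    (hφ : LinearIndependent K φ)
    (H : ∀ I : σ →₀ ℕ, ∑ v, I v ≤ k - 1 → ∑ ν, f ν * HD I (φ ν) = 0) : f = 0 := by
  classical
  suffices ∀ d : Fin k → m.syn, ∀ φ f : Fin k → MvPolynomial σ K,
      LinearIndependent K φ → (fun ν => m.toSyn (m.degree (φ ν))) = d →
      (∀ I : σ →₀ ℕ, ∑ v, I v ≤ k - 1 → ∑ ν, f ν * HD I (φ ν) = 0) → f = 0 from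
    this _ φ f hφ rfl H
  intro d
  induction d using WellFoundedLT.induction with
  | ind d ih =>
  intro φ f hφ hd H
  by_cases hinj : Function.Injective (fun ν => m.degree (φ ν))
  · exact wr_distinct m φ f (fun ν => hφ.ne_zero ν) hinj H
  · simp only [Function.Injective, not_forall] at hinj
    obtain ⟨i, j, hij, hne⟩ := hinj
    set c : K := m.leadingCoeff (φ i) / m.leadingCoeff (φ j) with hc
    have hj : m.leadingCoeff (φ j) ≠ 0 := m.leadingCoeff_ne_zero_iff.mpr (hφ.ne_zero j)
    set φ' := Function.update φ i (φ i - C c * φ j) with hφ'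
    set f' := Function.update f j (f j + C c * f i) with hf'
    have hli : LinearIndependent K φ' := by
      rw [Fintype.linearIndependent_iff] at hφ ⊢
      intro w hw
      have := hφ (Function.update w j (w j - c * w i)) (by
        rw [← hw]
        rw [← Finset.add_sum_erase _ _ (Finset.mem_univ i),
          ← Finset.add_sum_erase (Finset.univ.erase i) _ (Finset.mem_erase.mpr ⟨Ne.symm hne, Finset.mem_univ j⟩),
          ← Finset.add_sum_erase Finset.univ (fun x => w x • φ' x) (Finset.mem_univ i),
          ← Finset.add_sum_erase (Finset.univ.erase i) (fun x => w x • φ' x) (Finset.mem_erase.mpr ⟨Ne.symm hne, Finset.mem_univ j⟩)]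
        have : ∑ x ∈ (Finset.univ.erase i).erase j, Function.update w j (w j - c * w i) x • φ x
            = ∑ x ∈ (Finset.univ.erase i).erase j, w x • φ' x := by
          apply Finset.sum_congr rfl
          intro x hx
          simp only [Finset.mem_erase] at hx
          rw [hφ', Function.update_of_ne hx.1, Function.update_of_ne hx.2.1]
        rw [this, hφ']
        simp only [Function.update_self, Function.update_of_ne hne, Function.update_of_ne (Ne.symm hne),
          MvPolynomial.smul_eq_C_mul, map_sub, map_mul]
        ring)
      have hi : w i = 0 := by simpa [Function.update_of_ne hne] using this i
      intro x
      by_cases hx : x = j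
      · subst hx
        simpa [hi] using this x
      · simpa [Function.update_of_ne hx] using this x
    have hdlt : m.toSyn (m.degree (φ i - C c * φ j)) < m.toSyn (m.degree (φ i)) := by
      have hle : m.toSyn (m.degree (φ i - C c * φ j)) ≤ m.toSyn (m.degree (φ i)) := by
        refine m.degree_sub_le.trans ?_
        refine sup_le le_rfl ?_
        refine m.degree_mul_le.trans ?_
        have hij : m.degree (φ i) = m.degree (φ j) := hij
        rw [m.degree_C, zero_add, hij]
      refine lt_of_le_of_ne hle ?_
      intro heq
      have heq := m.toSyn.injective heq
      have h1 : φ i - C c * φ j ≠ 0 := by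
        have := hli.ne_zero i
        simpa [hφ'] using this
      apply m.coeff_degree_ne_zero_iff.mpr h1
      rw [heq, coeff_sub, coeff_C_mul]
      have h2 : coeff (m.degree (φ i)) (φ j) = m.leadingCoeff (φ j) := by
        have hij : m.degree (φ i) = m.degree (φ j) := hij
        rw [hij]; rfl
      have h3 : coeff (m.degree (φ i)) (φ i) = m.leadingCoeff (φ i) := rfl
      rw [h2, h3, hc, div_mul_cancel₀ _ hj, sub_self]
    have key := ih (fun ν => m.toSyn (m.degree (φ' ν))) (by
      rw [← hd, Pi.lt_def]
      constructor
      · intro x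
        by_cases hx : x = i
        · subst hx; simpa [hφ'] using hdlt.le
        · simp [hφ', Function.update_of_ne hx]
      · exact ⟨i, by simpa [hφ'] using hdlt⟩) φ' f' hli rfl (by
      intro I hI
      rw [← H I hI]
      rw [← Finset.add_sum_erase _ _ (Finset.mem_univ i),
          ← Finset.add_sum_erase (Finset.univ.erase i) _ (Finset.mem_erase.mpr ⟨Ne.symm hne, Finset.mem_univ j⟩),
          ← Finset.add_sum_erase Finset.univ (fun x => f x * HD I (φ x)) (Finset.mem_univ i),
          ← Finset.add_sum_erase (Finset.univ.erase i) (fun x => f x * HD I (φ x)) (Finset.mem_erase.mpr ⟨Ne.symm hne, Finset.mem_univ j⟩)]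
      have : ∑ x ∈ (Finset.univ.erase i).erase j, f' x * HD I (φ' x)
            = ∑ x ∈ (Finset.univ.erase i).erase j, f x * HD I (φ x) := by
          apply Finset.sum_congr rfl
          intro x hx
          simp only [Finset.mem_erase] at hx
          rw [hφ', hf', Function.update_of_ne hx.1, Function.update_of_ne hx.2.1]
      rw [this, hφ', hf']
      simp only [Function.update_self, Function.update_of_ne hne, Function.update_of_ne (Ne.symm hne),
          ← MvPolynomial.smul_eq_C_mul, map_sub, map_smul]
      simp only [MvPolynomial.smul_eq_C_mul]
      ring)
    have hi : f i = 0 := by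
      have := congrFun key i
      simpa [hf', Function.update_of_ne hne] using this
    funext x
    by_cases hx : x = j
    · subst hx
      have := congrFun key x
      simpa [hf', hi] using this
    · have := congrFun key x
      simpa [hf', Function.update_of_ne hx] using this

end wronskian
end PalCF

namespace PalCF
open MvPolynomial

lemma exists_det_ne_zero_aux {R : Type*} [CommRing R] [IsDomain R] (F : Type*) [Field F]
    [Algebra R F] [IsFractionRing R F] {J : Type*} {k : ℕ}
    (w : J → Fin k → R) (H : ∀ f : Fin k → R, (∀ j, ∑ ν, f ν * w j ν = 0) → f = 0) :
    ∃ i : Fin k → J, (Matrix.of (fun μ ν => w (i μ) ν)).det ≠ 0 := by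
  classical
  set w' : J → Fin k → F := fun j ν => algebraMap R F (w j ν) with hw'
  have hspan : Submodule.span F (Set.range w') = ⊤ := by
    by_contra hlt
    obtain ⟨g, hg0, hg⟩ := Submodule.exists_le_ker_of_lt_top _ (lt_top_iff_ne_top.mpr hlt)
    obtain ⟨b, hb⟩ := IsLocalization.exist_integer_multiples_of_finite (nonZeroDivisors R)
      (fun ν : Fin k => g (Pi.single ν 1))
    choose f hf using hb
    have hf0 : f = 0 := by
      apply H
      intro j
      apply FaithfulSMul.algebraMap_injective R F
      rw [map_zero, map_sum]
      simp_rw [map_mul, hf]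
      have h1 : g (w' j) = 0 := hg (Submodule.subset_span ⟨j, rfl⟩)
      rw [LinearMap.pi_apply_eq_sum_univ g (w' j)] at h1
      calc _ = (b : R) • ∑ i, w' j i • g (fun j => if i = j then 1 else 0) := by
            rw [Finset.smul_sum]
            apply Finset.sum_congr rfl
            intro ν _
            have : (Pi.single ν 1 : Fin k → F) = fun j => if ν = j then 1 else 0 := by
              funext x; simp [Pi.single_apply, eq_comm]
            rw [this]
            simp only [hw', Algebra.smul_def, Algebra.algebraMap_self, RingHom.id_apply]
            ring
        _ = 0 := by rw [h1, smul_zero]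
    apply hg0
    apply LinearMap.pi_ext'
    intro ν
    apply LinearMap.ext_ring
    have h2 := hf ν
    rw [hf0] at h2
    simp only [Pi.zero_apply, map_zero, Algebra.smul_def] at h2
    have h3 : algebraMap R F (b : R) ≠ 0 := by
      intro h
      have := FaithfulSMul.algebraMap_injective R F (h.trans (map_zero _).symm)
      exact nonZeroDivisors.coe_ne_zero b this
    have h4 := (mul_eq_zero.mp h2.symm).resolve_left h3
    simpa using h4
  obtain ⟨s, hs, hss, hsi⟩ := exists_linearIndependent F (Set.range w')
  have hsfin : Finite s := hsi.finite
  have : Fintype s := Fintype.ofFinite s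
  let B := Module.Basis.mk hsi (by
    rw [Subtype.range_coe_subtype, Set.ofPred_mem_eq, hss, hspan])
  have hcard : Fintype.card s = k := by
    rw [← Module.finrank_eq_card_basis B]; simp
  let E : Fin k ≃ s := (Fintype.equivFinOfCardEq hcard).symm
  choose i hi using fun μ : Fin k => hs (E μ).2
  refine ⟨i, fun h0 => ?_⟩
  have h1 : (Matrix.of (fun μ ν => w' (i μ) ν)).det = 0 := by
    have := congrArg (algebraMap R F) h0
    rw [RingHom.map_det, map_zero] at this
    exact this
  have hli : LinearIndependent F (fun μ => w' (i μ)) := by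
    have := hsi.comp E E.injective
    have he : (fun μ => w' (i μ)) = Subtype.val ∘ E := funext hi
    rw [he]
    exact this
  have hu := (Matrix.linearIndependent_rows_iff_isUnit (A := Matrix.of (fun μ ν => w' (i μ) ν))).mp hli
  rw [Matrix.isUnit_iff_isUnit_det, h1] at hu
  exact not_isUnit_zero hu

lemma exists_det_ne_zero {R : Type*} [CommRing R] [IsDomain R] {J : Type*} {k : ℕ}
    (w : J → Fin k → R) (H : ∀ f : Fin k → R, (∀ j, ∑ ν, f ν * w j ν = 0) → f = 0) :
    ∃ i : Fin k → J, (Matrix.of (fun μ ν => w (i μ) ν)).det ≠ 0 :=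
  exists_det_ne_zero_aux (FractionRing R) w H

lemma wronskian {σ : Type*} [Fintype σ] {K : Type*} [Field K] [CharZero K] (m : MonomialOrder σ)
    {k : ℕ} (φ : Fin k → MvPolynomial σ K) (hφ : LinearIndependent K φ) :
    ∃ i : Fin k → (σ →₀ ℕ), (∀ μ, ∑ v, i μ v ≤ k - 1) ∧
      (Matrix.of (fun μ ν => HD (i μ) (φ ν))).det ≠ 0 := by
  obtain ⟨i, hi⟩ := exists_det_ne_zero
    (fun (I : {I : σ →₀ ℕ // ∑ v, I v ≤ k - 1}) ν => HD I.1 (φ ν))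
    (fun f hf => wr_indep m φ f hφ (fun I hI => hf ⟨I, hI⟩))
  exact ⟨fun μ => (i μ).1, fun μ => (i μ).2, hi⟩

end PalCF

namespace PalCF
open MvPolynomial

section tensor
variable {R : Type*} [CommRing R] {m : ℕ}

/-- external product of a polynomial in the last variables and one in variable zero -/
noncomputable def rS : MvPolynomial (Fin m) R →ₐ[R] MvPolynomial (Fin (m+1)) R := rename Fin.succ

noncomputable def rZ (m : ℕ) : MvPolynomial (Fin 1) R →ₐ[R] MvPolynomial (Fin (m+1)) R :=
  rename (fun _ => (0 : Fin (m+1)))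

lemma cons_eq (a : Fin 1 →₀ ℕ) (b : Fin m →₀ ℕ) :
    Finsupp.mapDomain Fin.succ b + Finsupp.mapDomain (fun _ : Fin 1 => (0 : Fin (m+1))) a =
      Finsupp.cons (a 0) b := by
  ext x
  refine Fin.cases ?_ (fun x => ?_) x
  · rw [Finsupp.add_apply, Finsupp.cons_zero, Finsupp.mapDomain_notin_range]
    · rw [zero_add]
      exact Finsupp.mapDomain_apply (f := fun _ : Fin 1 => (0 : Fin (m+1)))
        (fun a b _ => Subsingleton.elim a b) a 0
    · rintro ⟨y, hy⟩; exact Fin.succ_ne_zero y hy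
  · rw [Finsupp.add_apply, Finsupp.cons_succ, Finsupp.mapDomain_apply (Fin.succ_injective m),
      Finsupp.mapDomain_notin_range, add_zero]
    rintro ⟨y, hy⟩; exact Fin.succ_ne_zero x hy.symm

lemma coeff_op (φ : MvPolynomial (Fin m) R) (ψ : MvPolynomial (Fin 1) R) (a : ℕ) (b : Fin m →₀ ℕ) :
    coeff (Finsupp.cons a b) (rS φ * rZ m ψ) = coeff b φ * coeff (Finsupp.single 0 a) ψ := by
  classical
  induction φ using MvPolynomial.induction_on' with
  | add p q hp hq => simp only [map_add, add_mul, coeff_add, hp, hq]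
  | monomial b' c =>
    induction ψ using MvPolynomial.induction_on' with
    | add p q hp hq => simp only [map_add, mul_add, coeff_add, hp, hq]
    | monomial a' d =>
      rw [rS, rZ, rename_monomial, rename_monomial, monomial_mul, cons_eq]
      simp only [coeff_monomial]
      by_cases h1 : b' = b
      · by_cases h2 : a' = Finsupp.single 0 a
        · simp [h1, h2]
        · have : Finsupp.cons (a' 0) b' ≠ Finsupp.cons a b := by
            intro h
            apply h2
            have := DFunLike.congr_fun h 0
            simp only [Finsupp.cons_zero] at this
            refine Finsupp.ext fun x => ?_
            rw [Subsingleton.elim x 0, this]; simp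
          simp [this, h2]
      · have : Finsupp.cons (a' 0) b' ≠ Finsupp.cons a b := by
          intro h
          apply h1
          have := congrArg Finsupp.tail h
          simpa using this
        simp [this, h1]

lemma single_zero_eq (a : Fin 1 →₀ ℕ) : Finsupp.single 0 (a 0) = a := by
  refine Finsupp.ext fun x => ?_
  rw [Subsingleton.elim x 0]; simp

lemma bn_cons (a c : ℕ) (b d : Fin m →₀ ℕ) :
    bn (Finsupp.cons a b) (Finsupp.cons c d) = a.choose c * bn b d := by
  simp [bn, Fin.prod_univ_succ]

lemma cons_add_cons (a c : ℕ) (b d : Fin m →₀ ℕ) :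
    (Finsupp.cons a b + Finsupp.cons c d : Fin (m+1) →₀ ℕ) = Finsupp.cons (a + c) (b + d) := by
  ext x
  refine Fin.cases ?_ (fun x => ?_) x <;> simp

lemma HD_op (ν : Fin 1 →₀ ℕ) (i : Fin m →₀ ℕ) (φ : MvPolynomial (Fin m) R)
    (ψ : MvPolynomial (Fin 1) R) :
    HD (Finsupp.cons (ν 0) i) (rS φ * rZ m ψ) = rS (HD i φ) * rZ m (HD ν ψ) := by
  ext e
  rw [← Finsupp.cons_tail e, coeff_op, coeff_HD, coeff_HD, coeff_HD, cons_add_cons, coeff_op, bn_cons]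
  have : (Finsupp.single 0 (e 0) + ν : Fin 1 →₀ ℕ) = Finsupp.single 0 (e 0 + ν 0) := by
    refine Finsupp.ext fun x => ?_
    rw [Subsingleton.elim x 0]; simp
  rw [this]
  simp [bn]
  ring

lemma Sh_rS (β : Fin (m+1) → R) (φ : MvPolynomial (Fin m) R) :
    Sh β (rS φ) = rS (Sh (fun h => β h.succ) φ) := by
  have : (Sh β).comp (rS (R := R) (m := m)) = (rS (R := R) (m := m)).comp (Sh (fun h => β h.succ)) := by
    ext v; simp [Sh, rS]
  exact DFunLike.congr_fun this φ

lemma Sh_rZ (β : Fin (m+1) → R) (ψ : MvPolynomial (Fin 1) R) :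
    Sh β (rZ m ψ) = rZ m (Sh (fun _ => β 0) ψ) := by
  have : (Sh β).comp (rZ (R := R) m) = (rZ (R := R) m).comp (Sh (fun _ => β 0)) := by
    ext v; simp [Sh, rZ]
  exact DFunLike.congr_fun this ψ

/-- decomposition into a sum of products with independent factors -/
lemma decomp {K : Type*} [Field K] (P : MvPolynomial (Fin (m+1)) K) (hP : P ≠ 0) (r0 : ℕ)
    (hr : ∀ e, coeff e P ≠ 0 → e 0 ≤ r0) :
    ∃ (k : ℕ) (φ : Fin k → MvPolynomial (Fin m) K) (ψ : Fin k → MvPolynomial (Fin 1) K),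
      1 ≤ k ∧ k ≤ r0 + 1 ∧ LinearIndependent K φ ∧ LinearIndependent K ψ ∧
      P = ∑ j, rS (φ j) * rZ m (ψ j) := by
  classical
  set p : Fin (r0+1) → MvPolynomial (Fin m) K := fun l => (finSuccEquiv K m P).coeff l with hp
  set S := Submodule.span K (Set.range p) with hS
  have hfin : FiniteDimensional K S := FiniteDimensional.span_of_finite K (Set.finite_range p)
  let b := Module.finBasis K S
  let P' : Fin (r0+1) → S := fun l => ⟨p l, Submodule.subset_span ⟨l, rfl⟩⟩
  set φ : Fin (Module.finrank K S) → MvPolynomial (Fin m) K := fun j => (b j : MvPolynomial (Fin m) K) with hφ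
  set ψ : Fin (Module.finrank K S) → MvPolynomial (Fin 1) K :=
    fun j => ∑ l : Fin (r0+1), monomial (Finsupp.single 0 (l:ℕ)) (b.repr (P' l) j) with hψ
  have hψc : ∀ j (l : Fin (r0+1)), coeff (Finsupp.single 0 (l:ℕ)) (ψ j) = b.repr (P' l) j := by
    intro j l
    simp only [hψ, coeff_sum, coeff_monomial]
    rw [Finset.sum_eq_single l]
    · simp
    · intro l' _ hne
      rw [if_neg]
      intro h
      have := DFunLike.congr_fun h 0
      simp only [Finsupp.single_eq_same] at this
      exact hne (Fin.ext this)
    · simp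
  have hψc2 : ∀ j (l : ℕ), r0 < l → coeff (Finsupp.single 0 l) (ψ j) = 0 := by
    intro j l hl
    simp only [hψ, coeff_sum, coeff_monomial]
    apply Finset.sum_eq_zero
    intro l' _
    rw [if_neg]
    intro h
    have := DFunLike.congr_fun h 0
    simp only [Finsupp.single_eq_same] at this
    omega
  have hexp : P = ∑ j, rS (φ j) * rZ m (ψ j) := by
    ext e
    rw [← Finsupp.cons_tail e, coeff_sum]
    simp_rw [coeff_op]
    by_cases h : e 0 ≤ r0
    · have h1 := b.sum_repr (P' ⟨e 0, by omega⟩)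
      have h2 := congrArg (fun x : S => coeff (Finsupp.tail e) (x : MvPolynomial (Fin m) K)) h1
      simp only [Submodule.coe_sum, coeff_sum, Submodule.coe_smul, coeff_smul, P', p,
        finSuccEquiv_coeff_coeff] at h2
      rw [← h2]
      apply Finset.sum_congr rfl
      intro j _
      rw [show (Finsupp.single 0 (e 0) : Fin 1 →₀ ℕ) = Finsupp.single 0 ((⟨e 0, by omega⟩ : Fin (r0+1)) : ℕ) from rfl, hψc]
      rw [smul_eq_mul, mul_comm]
    · push Not at h
      rw [Finset.sum_eq_zero]
      · by_contra hc
        have := hr _ hc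
        simp at this
        omega
      · intro j _
        rw [hψc2 j _ h, mul_zero]
  refine ⟨Module.finrank K S, φ, ψ, ?_, ?_, ?_, ?_, hexp⟩
  · by_contra hk
    have hk : Module.finrank K S = 0 := by omega
    apply hP
    rw [hexp]
    apply Finset.sum_eq_zero
    intro j; exact absurd j.2 (by omega)
  · have := finrank_range_le_card (R := K) p
    simpa [Set.finrank] using this
  · exact b.linearIndependent.map' S.subtype (by simp)
  · rw [Fintype.linearIndependent_iff]
    intro d hd
    have h1 : ∀ l, ∑ j, d j * b.repr (P' l) j = 0 := by
      intro l
      have := congrArg (coeff (Finsupp.single 0 (l:ℕ))) hd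
      simpa [coeff_sum, coeff_smul, hψc] using this
    set F : S →ₗ[K] K := ∑ j, d j • b.coord j with hF
    have h2 : ∀ x : MvPolynomial (Fin m) K, ∀ hx : x ∈ S, F ⟨x, hx⟩ = 0 := by
      intro x hx
      induction hx using Submodule.span_induction with
      | mem x hx =>
        obtain ⟨l, rfl⟩ := hx
        have := h1 l
        simpa [hF, P'] using this
      | zero => exact map_zero F
      | add x y hx hy h1 h2 =>
        have : (⟨x + y, Submodule.add_mem _ hx hy⟩ : S) = ⟨x, hx⟩ + ⟨y, hy⟩ := rfl
        rw [this, map_add, h1, h2, add_zero]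
      | smul a x hx h1 =>
        have : (⟨a • x, Submodule.smul_mem _ a hx⟩ : S) = a • ⟨x, hx⟩ := rfl
        rw [this, map_smul, h1, smul_zero]
    intro j
    have h3 := h2 (b j) (b j).2
    have h4 : F (b j) = d j := by
      simp [hF, Finsupp.single_apply]
    rw [← h4]; exact h3

end tensor
end PalCF

namespace PalCF
open MvPolynomial

section index
variable {σ : Type*} [Fintype σ] {R : Type*} [CommRing R]

/-- index at least t at the origin, with respect to weights r -/
def IdxGe (r : σ → ℕ) (Q : MvPolynomial σ R) (t : ℝ) : Prop :=
  ∀ I, coeff I Q ≠ 0 → t ≤ ∑ h, (I h : ℝ) / r h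

variable {r : σ → ℕ}

lemma IdxGe.sum {ι : Type*} (s : Finset ι) (f : ι → MvPolynomial σ R) {t : ℝ}
    (h : ∀ i ∈ s, IdxGe r (f i) t) : IdxGe r (∑ i ∈ s, f i) t := by
  intro I hI
  rw [coeff_sum] at hI
  obtain ⟨i, hi, hne⟩ := Finset.exists_ne_zero_of_sum_ne_zero hI
  exact h i hi I hne

lemma IdxGe.mul {P Q : MvPolynomial σ R} {t s : ℝ} (hP : IdxGe r P t) (hQ : IdxGe r Q s) :
    IdxGe r (P * Q) (t + s) := by
  classical
  intro I hI
  rw [coeff_mul] at hI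
  obtain ⟨x, hx, hne⟩ := Finset.exists_ne_zero_of_sum_ne_zero hI
  rw [Finset.HasAntidiagonal.mem_antidiagonal] at hx
  have h1 := hP _ (left_ne_zero_of_mul hne)
  have h2 := hQ _ (right_ne_zero_of_mul hne)
  calc t + s ≤ _ := add_le_add h1 h2
    _ = _ := by
      rw [← hx, ← Finset.sum_add_distrib]
      apply Finset.sum_congr rfl
      intro h _
      simp [add_div]

lemma IdxGe.zero (Q : MvPolynomial σ R) : IdxGe r Q 0 := by
  intro I _
  positivity

lemma IdxGe.prod {ι : Type*} (s : Finset ι) (f : ι → MvPolynomial σ R) (t : ι → ℝ)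
    (h : ∀ i ∈ s, IdxGe r (f i) (t i)) : IdxGe r (∏ i ∈ s, f i) (∑ i ∈ s, t i) := by
  classical
  induction s using Finset.induction_on with
  | empty => simpa using IdxGe.zero _
  | insert a s ha ih =>
    rw [Finset.prod_insert ha, Finset.sum_insert ha]
    exact (h a (Finset.mem_insert_self _ _)).mul (ih (fun i hi => h i (Finset.mem_insert_of_mem hi)))

lemma IdxGe.neg {P : MvPolynomial σ R} {t : ℝ} (hP : IdxGe r P t) : IdxGe r (-P) t := by
  intro I hI
  apply hP
  simpa using hI

lemma IdxGe.HD {P : MvPolynomial σ R} {t : ℝ} (hP : IdxGe r P t) (I : σ →₀ ℕ) :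
    IdxGe r (HD I P) (t - ∑ h, (I h : ℝ) / r h) := by
  intro e he
  have := hP _ (coeff_HD_ne_zero he)
  rw [sub_le_iff_le_add, ← Finset.sum_add_distrib]
  convert this using 2 with h
  simp [add_div]

lemma IdxGe.max {P : MvPolynomial σ R} {t : ℝ} (hP : IdxGe r P t) : IdxGe r P (max 0 t) := by
  intro e he
  exact max_le (IdxGe.zero P e he) (hP e he)

lemma IdxGe.mono {P : MvPolynomial σ R} {t s : ℝ} (hP : IdxGe r P t) (h : s ≤ t) : IdxGe r P s :=
  fun e he => h.trans (hP e he)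

lemma IdxGe.det {k : ℕ} (M : Matrix (Fin k) (Fin k) (MvPolynomial σ R)) (t : Fin k → ℝ)
    (h : ∀ i j, IdxGe r (M i j) (t j)) : IdxGe r M.det (∑ j, t j) := by
  rw [Matrix.det_apply]
  apply IdxGe.sum
  intro s _
  have := IdxGe.prod Finset.univ (fun i => M (s i) i) t (fun i _ => h _ _)
  rcases Int.units_eq_one_or (Equiv.Perm.sign s) with h | h
  · simpa [h] using this
  · simpa [h] using this.neg

lemma zn_det_le {k : ℕ} (M : Matrix (Fin k) (Fin k) (MvPolynomial σ ℤ)) (B : ℝ)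
    (h : ∀ i j, zn (M i j) ≤ B) : zn M.det ≤ k.factorial * B ^ k := by
  rw [Matrix.det_apply]
  refine (zn_sum_le _ _).trans ?_
  have : ∀ s ∈ (Finset.univ : Finset (Equiv.Perm (Fin k))),
      zn (Equiv.Perm.sign s • ∏ i, M (s i) i) ≤ B ^ k := by
    intro s _
    have h1 : zn (∏ i, M (s i) i) ≤ B ^ k := by
      refine (zn_prod_le _ _).trans ?_
      refine (Finset.prod_le_prod (fun i _ => zn_nonneg _) (fun i _ => h (s i) i)).trans ?_
      simp
    rcases Int.units_eq_one_or (Equiv.Perm.sign s) with h | h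
    · simpa [h] using h1
    · simpa [h, zn_neg] using h1
  refine (Finset.sum_le_sum this).trans ?_
  simp [Fintype.card_perm]

lemma degreeOf_det_le {k : ℕ} (M : Matrix (Fin k) (Fin k) (MvPolynomial σ R)) (v : σ) (d : ℕ)
    (h : ∀ i j, degreeOf v (M i j) ≤ d) : degreeOf v M.det ≤ k * d := by
  rw [Matrix.det_apply]
  refine (degreeOf_sum_le v _ _).trans ?_
  apply Finset.sup_le
  intro s _
  have h1 : degreeOf v (∏ i, M (s i) i) ≤ k * d := by
    refine (degreeOf_prod_le v _ _).trans ?_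
    refine (Finset.sum_le_sum (fun i _ => h (s i) i)).trans ?_
    simp
  rcases Int.units_eq_one_or (Equiv.Perm.sign s) with h | h
  · simpa [h] using h1
  · simpa [h, degreeOf_neg] using h1

end index

/-- counting estimate -/
lemma sum_max_ge {k r0 : ℕ} (hk : k ≤ r0 + 1) (hr0 : 1 ≤ r0) {δ : ℝ} (hδ : 0 ≤ δ) (hδ1 : δ ≤ 1) :
    k * δ ^ 2 / 8 ≤ ∑ ν ∈ Finset.range k, max 0 (δ - (ν : ℝ) / r0) := by
  have hr0' : (0:ℝ) < r0 := by exact_mod_cast hr0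
  set n := min k (⌊(r0:ℝ) * δ / 2⌋₊ + 1) with hn
  have h1 : (k : ℝ) * δ / 4 ≤ n := by
    rw [hn]; push_cast
    have hk' : (k:ℝ) ≤ r0 + 1 := by exact_mod_cast hk
    have hr1 : (1:ℝ) ≤ r0 := by exact_mod_cast hr0
    have hk0 : (0:ℝ) ≤ k := by positivity
    apply le_min
    · nlinarith
    · have := Nat.lt_floor_add_one ((r0:ℝ) * δ / 2)
      nlinarith
  calc (k:ℝ) * δ^2/8 = (k * δ / 4) * (δ / 2) := by ring
    _ ≤ n * (δ / 2) := by gcongr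
    _ = ∑ ν ∈ Finset.range n, δ / 2 := by simp
    _ ≤ ∑ ν ∈ Finset.range n, max 0 (δ - (ν : ℝ) / r0) := by
      apply Finset.sum_le_sum
      intro ν hν
      apply le_max_of_le_right
      have h2 : ν ≤ ⌊(r0:ℝ) * δ / 2⌋₊ := by
        have := Finset.mem_range.mp hν
        omega
      have h3 := (Nat.le_floor_iff (by positivity)).mp h2
      have : (ν:ℝ) / r0 ≤ δ / 2 := by
        rw [div_le_iff₀ hr0']; linarith
      linarith
    _ ≤ _ := by
      apply Finset.sum_le_sum_of_subset_of_nonneg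
      · intro x hx
        simp only [Finset.mem_range] at hx ⊢
        omega
      · intros; positivity

/-- Gauss lemma estimate -/
lemma gauss_bound (V : MvPolynomial (Fin 1) ℚ) (hV : V ≠ 0) (p q : ℤ) (hq : 1 ≤ q)
    (hpq : IsCoprime p q) (V' : Polynomial ℤ) (c : ℚ) (hc : c ≠ 0)
    (hV' : ∀ e : ℕ, (V'.coeff e : ℚ) = c * coeff (Finsupp.single 0 e) V) :
    ∃ e1 : ℕ, coeff (Finsupp.single 0 e1) (Sh (fun _ => (p:ℚ)/q) V) ≠ 0 ∧
      q ^ e1 ∣ V'.leadingCoeff ∧ V' ≠ 0 := by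
  classical
  set β : ℚ := (p:ℚ)/q with hβ
  let Φ : MvPolynomial (Fin 1) ℚ →ₐ[ℚ] Polynomial ℚ := aeval (fun _ => Polynomial.X)
  have hΦ : ∀ Q e, (Φ Q).coeff e = coeff (Finsupp.single 0 e) Q := by
    intro Q e
    induction Q using MvPolynomial.induction_on' with
    | add p q hp hq => rw [map_add, Polynomial.coeff_add, hp, hq, coeff_add]
    | monomial a d =>
      simp only [Φ, aeval_monomial, coeff_monomial]
      rw [Finsupp.prod_fintype _ _ (by simp)]
      simp only [Finset.univ_unique, Finset.prod_singleton, Polynomial.algebraMap_eq,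
        Polynomial.coeff_C_mul, Polynomial.coeff_X_pow]
      by_cases h : a = Finsupp.single 0 e
      · subst h; simp
      · rw [if_neg h, if_neg]
        · simp
        · intro h'
          apply h
          rw [h']
          exact (single_zero_eq a).symm
  have hSh : ∀ Q, Φ (Sh (fun _ => β) Q) = Polynomial.taylor β (Φ Q) := by
    intro Q
    have : Φ.comp (Sh (fun _ => β)) = (Polynomial.taylorAlgHom β).comp Φ := by
      ext v; simp [Φ, Sh]
    exact DFunLike.congr_fun this Q
  have hΦV : Φ V ≠ 0 := by
    intro h
    apply hV
    ext e
    rw [← single_zero_eq e, ← hΦ, h]; simp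
  have hmap : V'.map (Int.castRingHom ℚ) = Polynomial.C c * Φ V := by
    ext e
    rw [Polynomial.coeff_map, Polynomial.coeff_C_mul, hΦ]
    exact hV' e
  have hV'0 : V' ≠ 0 := by
    rintro rfl
    simp [hc, hΦV] at hmap
  set T := Polynomial.taylor β (Φ V) with hT
  have hT0 : T ≠ 0 := by
    rw [hT]; simpa using hΦV
  set e1 := T.natTrailingDegree with he1
  have hdvd : Polynomial.X ^ e1 ∣ T := by
    rw [Polynomial.X_pow_dvd_iff]
    intro d hd
    exact Polynomial.coeff_eq_zero_of_lt_natTrailingDegree hd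
  have hq0 : (q:ℚ) ≠ 0 := by positivity
  have hdvd2 : (Polynomial.C (q:ℚ) * Polynomial.X - Polynomial.C (p:ℚ)) ^ e1 ∣ Φ V := by
    obtain ⟨S, hS⟩ := hdvd
    have h1 := congrArg (Polynomial.taylorAlgHom (-β)) hS
    rw [map_mul, map_pow] at h1
    have h2 : Polynomial.taylorAlgHom (-β) T = Φ V := by
      rw [hT, Polynomial.taylorAlgHom_apply, Polynomial.taylor_taylor]; simp
    rw [h2] at h1
    rw [h1]
    refine Dvd.dvd.mul_right ?_ _
    refine pow_dvd_pow_of_dvd ⟨Polynomial.C (q:ℚ)⁻¹, ?_⟩ _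
    simp only [Polynomial.taylorAlgHom_apply, Polynomial.taylor_X]
    rw [sub_mul, mul_right_comm, ← Polynomial.C_mul, mul_inv_cancel₀ hq0, hβ, ← Polynomial.C_mul, Polynomial.C_1,
      one_mul, Polynomial.C_neg, div_eq_mul_inv, sub_eq_add_neg]
  refine ⟨e1, ?_, ?_, hV'0⟩
  · rw [← hΦ, hSh]
    exact fun h => hT0 (Polynomial.trailingCoeff_eq_zero.mp h)
  · set L : Polynomial ℤ := Polynomial.C q * Polynomial.X - Polynomial.C p with hL
    have hLp : L.IsPrimitive := by
      intro r hr
      rw [Polynomial.C_dvd_iff_dvd_coeff] at hr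
      have h0 := hr 0
      have h1 := hr 1
      simp only [hL, Polynomial.coeff_sub, Polynomial.coeff_C_mul, Polynomial.coeff_X_zero,
        Polynomial.coeff_X_one, Polynomial.coeff_C_zero, Polynomial.coeff_C_succ, mul_zero, zero_sub,
        mul_one, sub_zero, dvd_neg] at h0 h1
      exact hpq.isUnit_of_dvd' h0 h1
    have hLlc : (L ^ e1).leadingCoeff = q ^ e1 := by
      rw [Polynomial.leadingCoeff_pow]
      congr 1
      have : L = Polynomial.C q * Polynomial.X + Polynomial.C (-p) := by rw [hL]; simp [sub_eq_add_neg]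
      rw [this, Polynomial.leadingCoeff_linear (by omega)]
    have hLe : (L ^ e1).IsPrimitive := by
      clear hLlc
      induction e1 with
      | zero => simp [Polynomial.isPrimitive_one]
      | succ n ih => rw [pow_succ]; exact ih.mul hLp
    have h5 : (L ^ e1) ∣ V' := by
      apply (Polynomial.IsPrimitive.Int.dvd_iff_map_cast_dvd_map_cast _ _ hLe).mpr
      rw [hmap]
      refine Dvd.dvd.mul_left ?_ _
      simpa [hL, Polynomial.map_pow] using hdvd2
    rw [← hLlc]
    exact Polynomial.leadingCoeff_dvd_leadingCoeff h5

end PalCF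

namespace PalCF
open MvPolynomial

lemma exists_row {m : ℕ} (W : MvPolynomial (Fin (m+1)) ℤ) (b : Fin m →₀ ℕ) :
    ∃ V' : Polynomial ℤ, ∀ e, V'.coeff e = coeff (Finsupp.cons e b) W := by
  classical
  refine ⟨∑ e ∈ Finset.range (degreeOf 0 W + 1), Polynomial.monomial e (coeff (Finsupp.cons e b) W), ?_⟩
  intro e
  rw [Polynomial.finsetSum_coeff]
  simp_rw [Polynomial.coeff_monomial]
  rw [Finset.sum_ite_eq']
  split_ifs with h
  · rfl
  · by_contra hc
    have hc : coeff (Finsupp.cons e b) W ≠ 0 := fun h => hc h.symm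
    have := monomial_le_degreeOf 0 (mem_support_iff.mpr hc)
    simp at this h
    omega

lemma zn_slice_le {m : ℕ} (W : MvPolynomial (Fin (m+1)) ℤ) (U : MvPolynomial (Fin m) ℤ) (e : ℕ)
    (h : ∀ b, coeff b U = coeff (Finsupp.cons e b) W) : zn U ≤ zn W := by
  classical
  rw [zn_eq_sum (subset_refl _), zn_eq_sum (subset_refl _)]
  have hinj : Function.Injective (fun b : Fin m →₀ ℕ => (Finsupp.cons e b : Fin (m+1) →₀ ℕ)) := by
    intro b b' hb
    have := congrArg Finsupp.tail hb
    simpa using this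
  calc _ = ∑ x ∈ U.support.image (fun b => (Finsupp.cons e b : Fin (m+1) →₀ ℕ)), |((coeff x W : ℤ) : ℝ)| := by
        rw [Finset.sum_image (fun a _ b _ h => hinj h)]
        simp_rw [h]
    _ ≤ _ := by
      apply Finset.sum_le_sum_of_subset_of_nonneg
      · intro x hx
        obtain ⟨b, hb, rfl⟩ := Finset.mem_image.mp hx
        rw [mem_support_iff, h] at hb
        exact mem_support_iff.mpr hb
      · intros; positivity

lemma sum_inj_range {k : ℕ} (ν : Fin k → ℕ) (hν : ∀ a, ν a ≤ k - 1) (hi : Function.Injective ν)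
    (F : ℕ → ℝ) : ∑ a, F (ν a) = ∑ n ∈ Finset.range k, F n := by
  have hlt : ∀ a, ν a < k := fun a => by have := hν a; have := a.2; omega
  let g : Fin k → Fin k := fun a => ⟨ν a, hlt a⟩
  have hg : Function.Bijective g := by
    rw [← Finite.injective_iff_bijective]
    intro a b h
    exact hi (by simpa [g] using h)
  rw [Finset.sum_range]
  exact hg.sum_comp (fun x : Fin k => F x)

set_option maxHeartbeats 2000000 in
theorem roth_lemma (m : ℕ) : ∀ ε : ℝ, 0 < ε → ∃ ω : ℝ, 0 < ω ∧
    ∀ (r : Fin m → ℕ) (p q : Fin m → ℤ) (E : ℝ) (P : MvPolynomial (Fin m) ℤ), P ≠ 0 →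
      (∀ h, degreeOf h P ≤ r h) → (∀ h, 1 ≤ r h) → (∀ h, 1 ≤ q h) →
      (∀ h, IsCoprime (p h) (q h)) → (∀ i j, i < j → (r i : ℝ) ≤ ω * r j) →
      (∀ h, E ≤ r h * Real.log (q h)) → (∀ h, (r h : ℝ) ≤ ω * E) →
      Real.log (zn P) ≤ ω * E →
      ∃ I, coeff I (Sh (fun h => (p h : ℚ) / q h) (P.map (Int.castRingHom ℚ))) ≠ 0 ∧
        ∑ h, (I h : ℝ) / r h < ε := by
  induction m with
  | zero =>
    intro ε hε
    refine ⟨1, one_pos, ?_⟩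
    intro r p q E P hP _ _ _ _ _ _ _ _
    refine ⟨0, ?_, by simpa using hε⟩
    have hne : Sh (fun h => (p h : ℚ) / q h) (P.map (Int.castRingHom ℚ)) ≠ 0 := by
      intro h0
      apply hP
      have := Sh_injective _ (h0.trans (map_zero _).symm)
      exact map_injective _ Int.cast_injective (this.trans (map_zero _).symm)
    intro h0
    apply hne
    ext e
    rw [Subsingleton.elim e 0, h0]; simp
  | succ m ih =>
    intro ε hε
    set ε1 := min ε 1 with hε1
    have hpos_eps : 0 < ε1 := lt_min hε one_pos
    have hε11 : ε1 ≤ 1 := min_le_right _ _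
    obtain ⟨ω', hω', IH⟩ := ih (ε1^2/64) (by positivity)
    set ω := min (ε1/4) (min ω' (ε1^2/64) / (m+3)) with hω
    have hm3 : (0:ℝ) < m + 3 := by positivity
    have hωp : 0 < ω := by positivity
    have hω1 : ω ≤ ε1/4 := min_le_left _ _
    have hω0 : (m+3) * ω ≤ min ω' (ε1^2/64) := by
      have : ω ≤ min ω' (ε1^2/64) / (m+3) := min_le_right _ _
      rw [le_div_iff₀ hm3] at this
      linarith
    have hω2 : (m+3) * ω ≤ ω' := hω0.trans (min_le_left _ _)
    have hω3 : (m+3) * ω ≤ ε1^2/64 := hω0.trans (min_le_right _ _)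
    have hωω' : ω ≤ ω' := by nlinarith [(by positivity : (0:ℝ) ≤ m)]
    refine ⟨ω, hωp, ?_⟩
    intro r p q E P hP hdeg hr hq hco hord hE hrE hz
    by_contra hcon
    push Not at hcon
    set β : Fin (m+1) → ℚ := fun h => (p h : ℚ) / q h with hβ
    set Pq := P.map (Int.castRingHom ℚ) with hPq
    have hidx : IdxGe r (Sh β Pq) ε1 := fun I hI => (min_le_left _ _).trans (hcon I hI)
    have hrpos : ∀ h, (0:ℝ) < r h := fun h => by exact_mod_cast hr h
    have hEp : 0 < E := by
      have h1 := hrE 0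
      have h2 := hrpos 0
      by_contra hc
      push Not at hc
      nlinarith
    have hPq0 : Pq ≠ 0 := by
      intro h0
      exact hP (map_injective _ Int.cast_injective (h0.trans (map_zero _).symm))
    obtain ⟨k, φ, ψ, hk1, hk2, hφ, hψ, hdec⟩ := decomp Pq hPq0 (r 0) (by
      intro e he
      rw [hPq, coeff_map] at he
      have : coeff e P ≠ 0 := by intro h; rw [h] at he; simp at he
      exact (monomial_le_degreeOf 0 (mem_support_iff.mpr this)).trans (hdeg 0))
    obtain ⟨i, hi, hU⟩ := wronskian MonomialOrder.lex φ hφ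
    obtain ⟨ν, hν, hV⟩ := wronskian MonomialOrder.lex ψ hψ
    set A := Matrix.of (fun μ j => HD (i μ) (φ j)) with hA
    set B := Matrix.of (fun μ j => HD (ν μ) (ψ j)) with hB
    set U := A.det with hUdef
    set V := B.det with hVdef
    set M : Matrix (Fin k) (Fin k) (MvPolynomial (Fin (m+1)) ℤ) :=
      Matrix.of (fun μ a => HD (Finsupp.cons (ν a 0) (i μ)) P) with hM
    set W := M.det with hW
    have hMq : (MvPolynomial.map (Int.castRingHom ℚ)).mapMatrix M =
        (A.map (rS (m := m))) * (B.map (rZ m)).transpose := by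
      refine Matrix.ext fun μ a => ?_
      rw [Matrix.mul_apply]
      simp only [RingHom.mapMatrix_apply, Matrix.map_apply, hM, Matrix.of_apply, hA, hB,
        Matrix.transpose_apply]
      rw [← HD_map, ← hPq, hdec, map_sum]
      apply Finset.sum_congr rfl
      intro j _
      rw [HD_op]
    have hWq : W.map (Int.castRingHom ℚ) = rS U * rZ m V := by
      rw [hW, RingHom.map_det, hMq, Matrix.det_mul, Matrix.det_transpose, hUdef, hVdef,
        AlgHom.map_det, AlgHom.map_det]
      rfl
    have hWc : ∀ a b, ((coeff (Finsupp.cons a b) W : ℤ) : ℚ) =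
        coeff b U * coeff (Finsupp.single 0 a) V := by
      intro a b
      rw [← coeff_op, ← hWq, coeff_map]; rfl
    have hkpos : (0:ℝ) < k := by exact_mod_cast hk1
    -- nonzero coefficients
    obtain ⟨b0, hb0⟩ : ∃ b0, coeff b0 U ≠ 0 := MvPolynomial.ne_zero_iff.mp hU
    obtain ⟨a0', ha0'⟩ : ∃ a0, coeff a0 V ≠ 0 := MvPolynomial.ne_zero_iff.mp hV
    rw [← single_zero_eq a0'] at ha0'
    set a0 := a0' 0 with ha0
    have hW0 : W ≠ 0 := by
      intro h
      have := hWc a0 b0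
      rw [h] at this
      simp at this
      tauto
    have hinj : Function.Injective (fun a => ν a 0) := by
      intro a b hab
      by_contra hne
      apply hV
      apply Matrix.det_zero_of_row_eq hne
      have : ν a = ν b := by
        rw [← single_zero_eq (ν a), ← single_zero_eq (ν b)]
        exact congrArg _ hab
      funext j
      simp [hB, this]
    have hν' : ∀ a, ν a 0 ≤ k - 1 := fun a => by simpa using hν a
    -- norm bound
    have hsumr : ((∑ h, r h : ℕ) : ℝ) ≤ (m+1) * (ω * E) := by
      push_cast
      refine (Finset.sum_le_sum (fun h _ => hrE h)).trans ?_
      simp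
    have hznP : 1 ≤ zn P := one_le_zn hP
    have hznW1 : 1 ≤ zn W := one_le_zn hW0
    have hk0 : (k:ℝ) ≤ r 0 + 1 := by exact_mod_cast hk2
    have hlogW : Real.log (zn W) ≤ k * ((m+3) * (ω * E)) := by
      have h1 : zn W ≤ k.factorial * (2 ^ (∑ h, r h) * zn P) ^ k := by
        apply zn_det_le
        intro μ a
        apply zn_HD_le
        intro e he
        apply Finset.sum_le_sum
        intro h _
        exact (monomial_le_degreeOf h (mem_support_iff.mpr he)).trans (hdeg h)
      have h2 : (k.factorial : ℝ) ≤ (k:ℝ) ^ k := by exact_mod_cast Nat.factorial_le_pow k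
      have h3 : zn W ≤ (k * (2 ^ (∑ h, r h) * zn P)) ^ k := by
        rw [mul_pow]
        refine h1.trans ?_
        gcongr
      have h4 := Real.log_le_log (by linarith) h3
      rw [Real.log_pow, Real.log_mul (by positivity) (by positivity),
        Real.log_mul (by positivity) (by positivity), Real.log_pow] at h4
      refine h4.trans ?_
      have h5 : Real.log k ≤ ω * E := by
        have := Real.log_le_sub_one_of_pos hkpos
        linarith [hrE 0]
      have h6 : ((∑ h, r h : ℕ) : ℝ) * Real.log 2 ≤ (m+1) * (ω * E) := by
        have : Real.log 2 ≤ 1 := by linarith [Real.log_two_lt_d9]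
        refine le_trans ?_ hsumr
        exact mul_le_of_le_one_right (by positivity) this
      gcongr
      linarith
    -- the polynomial U
    obtain ⟨I, hI, hIs⟩ := IH (fun h => k * r h.succ) (fun h => p h.succ) (fun h => q h.succ)
      (k * E) ((finSuccEquiv ℤ m W).coeff a0) (by
        intro h
        have h1 := hWc a0 b0
        rw [← finSuccEquiv_coeff_coeff, h] at h1
        simp at h1
        tauto) (by
        intro h
        rw [degreeOf_le_iff]
        intro b hb
        rw [mem_support_iff, finSuccEquiv_coeff_coeff] at hb
        have h1 := monomial_le_degreeOf h.succ (mem_support_iff.mpr hb)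
        rw [Finsupp.cons_succ] at h1
        refine h1.trans ?_
        apply degreeOf_det_le
        intro μ a
        rw [degreeOf_le_iff]
        intro e he
        have h2 := coeff_HD_ne_zero (mem_support_iff.mp he)
        have h3 := (monomial_le_degreeOf h.succ (mem_support_iff.mpr h2)).trans (hdeg h.succ)
        rw [Finsupp.add_apply] at h3
        omega)
      (fun h => Nat.mul_pos hk1 (hr _)) (fun h => hq _) (fun h => hco _)
      (by
        intro x y hxy
        have := hord x.succ y.succ (by simpa using hxy)
        push_cast
        have h2 : ω * r y.succ ≤ ω' * r y.succ := by gcongr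
        nlinarith)
      (by
        intro h
        push_cast
        rw [mul_assoc]
        exact mul_le_mul_of_nonneg_left (hE h.succ) hkpos.le)
      (by
        intro h
        push_cast
        have h1 := hrE h.succ
        have h2 : ω * E ≤ ω' * E := by gcongr
        nlinarith)
      (by
        have h1 : zn ((finSuccEquiv ℤ m W).coeff a0) ≤ zn W :=
          zn_slice_le _ _ a0 (fun b => finSuccEquiv_coeff_coeff _ _ _)
        by_cases h0 : zn ((finSuccEquiv ℤ m W).coeff a0) = 0
        · rw [h0, Real.log_zero]; positivity
        have h2 := Real.log_le_log (lt_of_le_of_ne (zn_nonneg _) (Ne.symm h0)) h1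
        have h3 : (m+3) * (ω * E) ≤ ω' * E := by
          rw [← mul_assoc]; gcongr
        nlinarith)
    have hIU : coeff I (Sh (fun h : Fin m => β h.succ) U) ≠ 0 := by
      intro h0
      apply hI
      have h1 : ((finSuccEquiv ℤ m W).coeff a0).map (Int.castRingHom ℚ) =
          coeff (Finsupp.single 0 a0) V • U := by
        ext b
        rw [coeff_map, finSuccEquiv_coeff_coeff, coeff_smul, smul_eq_mul, mul_comm, ← hWc]
        rfl
      rw [h1, map_smul, coeff_smul]
      have : (fun h : Fin m => β h.succ) = fun h : Fin m => (p h.succ : ℚ) / q h.succ := rfl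
      rw [← this, h0, smul_zero]
    -- the polynomial V
    obtain ⟨V', hV'⟩ := exists_row W b0
    obtain ⟨e1, he1, he1d, hV'0⟩ := gauss_bound V hV (p 0) (q 0) (hq 0) (hco 0) V' (coeff b0 U) hb0
      (fun e => by rw [hV', hWc])
    have hlogq : Real.log (zn W) ≥ e1 * Real.log (q 0) := by
      have h1 : (q 0)^e1 ≤ |V'.leadingCoeff| :=
        Int.le_of_dvd (abs_pos.mpr (by simpa using hV'0)) ((dvd_abs _ _).mpr he1d)
      have h2 : ((q 0 : ℝ))^e1 ≤ zn W := by
        have h3 : |((V'.leadingCoeff : ℤ) : ℝ)| ≤ zn W := by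
          rw [Polynomial.leadingCoeff, hV']
          exact coeff_le_zn _ _
        refine le_trans ?_ h3
        exact_mod_cast h1
      have hq0 : (0:ℝ) < q 0 := by exact_mod_cast (hq 0)
      have := Real.log_le_log (by positivity) h2
      rwa [Real.log_pow] at this
    have he1b : (e1 : ℝ) / r 0 ≤ k * (ε1^2/64) := by
      rw [div_le_iff₀ (hrpos 0)]
      have h1 := hE 0
      have hlq : 0 < Real.log (q 0) := by
        by_contra hc
        push Not at hc
        nlinarith [hrpos 0]
      have h2 : (e1 : ℝ) * Real.log (q 0) ≤ (k * (ε1^2/64) * r 0) * Real.log (q 0) := by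
        calc (e1 : ℝ) * Real.log (q 0) ≤ k * ((m+3) * (ω * E)) := by linarith
          _ = k * ((m+3) * ω) * E := by ring
          _ ≤ k * (ε1^2/64) * (r 0 * Real.log (q 0)) := by gcongr
          _ = _ := by ring
      exact le_of_mul_le_mul_right h2 hlq
    have hfin : coeff (Finsupp.cons e1 I) (Sh β (W.map (Int.castRingHom ℚ))) ≠ 0 := by
      rw [hWq, map_mul, Sh_rS, Sh_rZ, coeff_op]
      exact mul_ne_zero hIU he1
    -- index lower bound
    have hidxW : IdxGe r (Sh β (W.map (Int.castRingHom ℚ)))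
        (∑ a, max 0 ((ε1 - ω) - ((ν a 0 : ℕ) : ℝ) / r 0)) := by
      rw [hW, RingHom.map_det, AlgHom.map_det]
      apply IdxGe.det (t := fun a => max 0 ((ε1 - ω) - ((ν a 0 : ℕ) : ℝ) / r 0))
      intro μ a
      apply IdxGe.max
      have h1 : (Sh β).mapMatrix ((MvPolynomial.map (Int.castRingHom ℚ)).mapMatrix M) μ a
          = HD (Finsupp.cons (ν a 0) (i μ)) (Sh β Pq) := by
        simp only [AlgHom.mapMatrix_apply, RingHom.mapMatrix_apply, Matrix.map_apply, hM,
          Matrix.of_apply]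
        rw [← HD_map, HD_Sh]
      rw [h1]
      refine (hidx.HD _).mono ?_
      rw [Fin.sum_univ_succ]
      simp only [Finsupp.cons_zero, Finsupp.cons_succ]
      have h2 : ∑ h : Fin m, ((i μ h : ℕ) : ℝ) / r h.succ ≤ ω := by
        have h3 : ∀ h : Fin m, ((i μ h : ℕ) : ℝ) / r h.succ ≤ (i μ h : ℕ) * (ω / r 0) := by
          intro h
          rw [div_eq_mul_inv]
          gcongr
          rw [inv_eq_one_div, div_le_div_iff₀ (hrpos _) (hrpos 0), one_mul]
          exact hord 0 h.succ (Fin.succ_pos h)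
        refine (Finset.sum_le_sum (fun h _ => h3 h)).trans ?_
        rw [← Finset.sum_mul]
        have h4 : (∑ h : Fin m, ((i μ h : ℕ) : ℝ)) ≤ r 0 := by
          have := hi μ
          have h5 : ∑ h : Fin m, i μ h ≤ r 0 := by omega
          exact_mod_cast h5
        calc _ ≤ (r 0 : ℝ) * (ω / r 0) := by gcongr
          _ = ω := by field_simp [(hrpos 0).ne']
      linarith
    have hge := hidxW _ hfin
    rw [sum_inj_range (fun a => ν a 0) hν' hinj (fun n => max 0 ((ε1 - ω) - (n : ℝ) / r 0))] at hge
    have hge2 := sum_max_ge hk2 (hr 0) (δ := ε1 - ω) (by linarith) (by linarith)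
    rw [Fin.sum_univ_succ] at hge
    simp only [Finsupp.cons_zero, Finsupp.cons_succ] at hge
    have hIs2 : ∑ h : Fin m, ((I h : ℕ) : ℝ) / r h.succ < k * (ε1^2/64) := by
      have h1 : ∑ h : Fin m, ((I h : ℕ) : ℝ) / ((k * r h.succ : ℕ) : ℝ) =
          (∑ h : Fin m, ((I h : ℕ) : ℝ) / r h.succ) / k := by
        rw [Finset.sum_div]
        apply Finset.sum_congr rfl
        intro h _
        push_cast
        rw [div_div, mul_comm]
      rw [h1, div_lt_iff₀ hkpos] at hIs
      linarith
    have h3 : (9/16) * ε1^2 ≤ (ε1 - ω)^2 := by nlinarith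
    have h4 : 0 < k * ε1^2 := by positivity
    nlinarith

end PalCF

namespace PalCF

/-- An integer matrix with eigenvector of independent entries. -/
lemma exists_mat (α : ℝ) (hα : IsAlgebraic ℚ α) :
    ∃ (d : ℕ) (D : ℤ) (A : Matrix (Fin (d+1)) (Fin (d+1)) ℤ) (e : Fin (d+1) → ℝ), 1 ≤ D ∧ e 0 = 1 ∧
      (∀ i, ∑ j, (A i j : ℝ) * e j = D * α * e i) ∧
      (∀ x : Fin (d+1) → ℤ, ∑ l, (x l : ℝ) * e l = 0 → x = 0) := by
  have hZ : IsAlgebraic ℤ α := (IsFractionRing.isAlgebraic_iff ℤ ℚ ℝ).mpr hα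
  obtain ⟨y, hy0, hy⟩ := hZ.exists_integral_multiple
  set D : ℤ := |y| with hD
  have hD1 : 1 ≤ D := Int.one_le_abs hy0
  have hintg : IsIntegral ℤ ((D : ℝ) * α) := by
    have h1 : IsIntegral ℤ ((y : ℝ) * α) := by simpa [Algebra.smul_def] using hy
    rcases abs_choice y with h | h
    · rw [hD, h]; exact h1
    · rw [hD, h]; simpa using h1.neg
  set β := (D : ℝ) * α with hβ
  set f := minpoly ℤ β with hf
  have hmon : f.Monic := minpoly.monic hintg
  have hpos : 0 < f.natDegree := minpoly.natDegree_pos hintg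
  obtain ⟨d, hd⟩ : ∃ d, f.natDegree = d + 1 := ⟨f.natDegree - 1, by omega⟩
  refine ⟨d, D, Matrix.of (fun i j => if (i:ℕ) < d then (if (j:ℕ) = i + 1 then 1 else 0) else - f.coeff j),
    fun l => β ^ (l:ℕ), hD1, by simp, ?_, ?_⟩
  · intro i
    by_cases hi : (i:ℕ) < d
    · rw [Finset.sum_eq_single (⟨i+1, by omega⟩ : Fin (d+1))]
      · simp [hi, pow_succ]; ring
      · intro j _ hj
        have : ¬ ((j:ℕ) = i + 1) := fun h => hj (Fin.ext h)
        simp [hi, this]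
      · simp
    · have hid : (i:ℕ) = d := by have := i.2; omega
      have h0 : Polynomial.aeval β f = 0 := minpoly.aeval ℤ β
      rw [Polynomial.aeval_eq_sum_range, hd, Finset.sum_range_succ] at h0
      have h1 : f.coeff (d+1) = 1 := by rw [← hd]; exact hmon
      rw [h1, Finset.sum_range] at h0
      simp only [Matrix.of_apply, hid, lt_irrefl, if_false, Int.cast_neg]
      simp only [one_smul, zsmul_eq_mul] at h0
      simp only [neg_mul, Finset.sum_neg_distrib]
      rw [pow_succ] at h0
      linarith
  · intro x hx
    classical
    set g : Polynomial ℤ := ∑ l : Fin (d+1), Polynomial.monomial (l:ℕ) (x l) with hg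
    have hgc : ∀ l : Fin (d+1), g.coeff l = x l := by
      intro l
      rw [hg, Polynomial.finsetSum_coeff]
      simp_rw [Polynomial.coeff_monomial]
      rw [Finset.sum_eq_single l]
      · simp
      · intro b _ hb; rw [if_neg (fun h => hb (Fin.ext h))]
      · simp
    have hg0 : Polynomial.aeval β g = 0 := by
      rw [hg, map_sum, ← hx]
      apply Finset.sum_congr rfl
      intro l _
      simp [Polynomial.aeval_monomial]
    have hgz : g = 0 := by
      by_contra hne
      have h1 := minpoly.IsIntegrallyClosed.degree_le_of_ne_zero (s := β) hne hg0
      have h2 : g.degree < (d+1 : ℕ) := by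
        rw [hg]
        refine lt_of_le_of_lt (Polynomial.degree_sum_le _ _) ?_
        rw [Finset.sup_lt_iff (WithBot.bot_lt_coe _)]
        intro l _
        refine lt_of_le_of_lt (Polynomial.degree_monomial_le _ _) ?_
        exact_mod_cast l.2
      have h3 : (minpoly ℤ β).degree = (d+1 : ℕ) := by
        rw [Polynomial.degree_eq_natDegree hmon.ne_zero, hd]
      rw [h3] at h1
      exact absurd (lt_of_le_of_lt h1 h2) (lt_irrefl _)
    funext l
    rw [← hgc l, hgz]; simp

/-- Liouville type inequality -/
lemma liouville_quad (α : ℝ) (hα : IsAlgebraic ℚ α)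
    (h3 : ∀ a b c : ℤ, (a:ℝ) + b * α + c * α^2 = 0 → a = 0 ∧ b = 0 ∧ c = 0) :
    ∃ (n : ℕ) (κ : ℝ), 0 < κ ∧ ∀ (a b c : ℤ) (H : ℝ), 1 ≤ H → |(a:ℝ)| ≤ H → |(b:ℝ)| ≤ H → |(c:ℝ)| ≤ H →
      ¬ (a = 0 ∧ b = 0 ∧ c = 0) → 1 ≤ κ * H ^ n * |(a:ℝ) + b * α + c * α^2| := by
  classical
  obtain ⟨d, D, A, e, hD, he0, hAe, hind⟩ := exists_mat α hα
  have hDr : (1:ℝ) ≤ D := by exact_mod_cast hD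
  -- bound on entries of A, A*A, e
  obtain ⟨K, hK1, hKA, hKA2, hKe⟩ : ∃ K : ℝ, 1 ≤ K ∧ (∀ i j, |(A i j : ℝ)| ≤ K) ∧
      (∀ i j, |((A * A) i j : ℝ)| ≤ K) ∧ (∀ i, |e i| ≤ K) := by
    refine ⟨1 + ∑ i, ∑ j, |(A i j : ℝ)| + ∑ i, ∑ j, |((A * A) i j : ℝ)| + ∑ i, |e i|, ?_, ?_, ?_, ?_⟩
    · have h1 : 0 ≤ ∑ i, ∑ j, |(A i j : ℝ)| := by positivity
      have h2 : 0 ≤ ∑ i, ∑ j, |((A * A) i j : ℝ)| := by positivity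
      have h3 : 0 ≤ ∑ i, |e i| := by positivity
      linarith
    all_goals
      have h1 : 0 ≤ ∑ i, ∑ j, |(A i j : ℝ)| := by positivity
      have h2 : 0 ≤ ∑ i, ∑ j, |((A * A) i j : ℝ)| := by positivity
      have h3 : 0 ≤ ∑ i, |e i| := by positivity
    · intro i j
      have h4 : |(A i j : ℝ)| ≤ ∑ j, |(A i j : ℝ)| :=
        Finset.single_le_sum (f := fun j => |(A i j : ℝ)|) (fun _ _ => abs_nonneg _) (Finset.mem_univ j)
      have h5 : ∑ j, |(A i j : ℝ)| ≤ ∑ i, ∑ j, |(A i j : ℝ)| :=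
        Finset.single_le_sum (f := fun i => ∑ j, |(A i j : ℝ)|) (fun _ _ => by positivity) (Finset.mem_univ i)
      linarith
    · intro i j
      have h4 : |((A * A) i j : ℝ)| ≤ ∑ j, |((A * A) i j : ℝ)| :=
        Finset.single_le_sum (f := fun j => |((A * A) i j : ℝ)|) (fun _ _ => abs_nonneg _) (Finset.mem_univ j)
      have h5 : ∑ j, |((A * A) i j : ℝ)| ≤ ∑ i, ∑ j, |((A * A) i j : ℝ)| :=
        Finset.single_le_sum (f := fun i => ∑ j, |((A * A) i j : ℝ)|) (fun _ _ => by positivity) (Finset.mem_univ i)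
      linarith
    · intro i
      have h4 : |e i| ≤ ∑ i, |e i| :=
        Finset.single_le_sum (f := fun i => |e i|) (fun _ _ => abs_nonneg _) (Finset.mem_univ i)
      linarith
  set T : ℝ := 3 * K * D^2 with hT
  refine ⟨d+1, (d+1) * ((d+1).factorial * T^(d+1) * K) * D^2, by positivity, ?_⟩
  intro a b c H hH ha hb hc hne
  set lam := (a:ℝ) + b * α + c * α^2 with hlam
  have hlam0 : lam ≠ 0 := fun h => hne (h3 a b c h)
  set M : Matrix (Fin (d+1)) (Fin (d+1)) ℤ := (a * D^2) • 1 + (b * D) • A + c • (A * A) with hM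
  have hMe : ∀ i, ∑ j, (M i j : ℝ) * e j = D^2 * lam * e i := by
    intro i
    have hA2 : ∑ j, ((A * A) i j : ℝ) * e j = (D * α)^2 * e i := by
      simp only [Matrix.mul_apply, Int.cast_sum, Int.cast_mul, Finset.sum_mul]
      rw [Finset.sum_comm]
      calc _ = ∑ x, (A i x : ℝ) * (D * α * e x) := by
            apply Finset.sum_congr rfl
            intro x _
            rw [← hAe x, Finset.mul_sum]
            apply Finset.sum_congr rfl
            intros; ring
        _ = (D * α) * ∑ x, (A i x : ℝ) * e x := by
            rw [Finset.mul_sum]; apply Finset.sum_congr rfl; intros; ring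
        _ = _ := by rw [hAe]; ring
    have h1 : ∑ j, (((1 : Matrix (Fin (d+1)) (Fin (d+1)) ℤ) i j : ℤ) : ℝ) * e j = e i := by
      simp [Matrix.one_apply]
    calc _ = ∑ j, ((a * D^2 : ℝ) * ((((1 : Matrix (Fin (d+1)) (Fin (d+1)) ℤ) i j : ℤ) : ℝ) * e j) +
          (b * D : ℝ) * ((A i j : ℝ) * e j) + (c:ℝ) * (((A * A) i j : ℝ) * e j)) := by
          apply Finset.sum_congr rfl
          intro j _
          simp only [hM, Matrix.add_apply, Matrix.smul_apply, smul_eq_mul]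
          push_cast
          ring
      _ = _ := by
          rw [Finset.sum_add_distrib, Finset.sum_add_distrib, ← Finset.mul_sum, ← Finset.mul_sum,
            ← Finset.mul_sum, hA2, h1, hAe, hlam]
          ring
  have hdet : M.det ≠ 0 := by
    intro h0
    obtain ⟨x, hx0, hx⟩ := Matrix.exists_vecMul_eq_zero_iff.mpr h0
    apply hx0
    apply hind
    have h1 : ∑ j, (((Matrix.vecMul x M) j : ℤ) : ℝ) * e j = D^2 * lam * ∑ l, (x l : ℝ) * e l := by
      simp only [Matrix.vecMul, dotProduct, Int.cast_sum, Int.cast_mul, Finset.sum_mul]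
      rw [Finset.sum_comm, Finset.mul_sum]
      apply Finset.sum_congr rfl
      intro l _
      calc _ = (x l : ℝ) * ∑ j, (M l j : ℝ) * e j := by
            rw [Finset.mul_sum]; apply Finset.sum_congr rfl; intros; ring
        _ = _ := by rw [hMe]; ring
    rw [hx] at h1
    simp only [Pi.zero_apply, Int.cast_zero, zero_mul, Finset.sum_const_zero] at h1
    have h2 : (D:ℝ)^2 * lam ≠ 0 := mul_ne_zero (by positivity) hlam0
    exact (mul_eq_zero.mp h1.symm).resolve_left h2
  have hMb : ∀ i j, |M i j| ≤ T * H := by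
    intro i j
    have hDD : (D:ℝ) ≤ D^2 := by nlinarith
    have h1D : (1:ℝ) ≤ D^2 := by nlinarith
    have h1 : |(((1 : Matrix (Fin (d+1)) (Fin (d+1)) ℤ) i j : ℤ) : ℝ)| ≤ 1 := by
      rw [Matrix.one_apply]; split_ifs <;> simp
    have e1 : (M i j : ℝ) = a * D^2 * (((1 : Matrix (Fin (d+1)) (Fin (d+1)) ℤ) i j : ℤ) : ℝ)
        + b * D * (A i j : ℝ) + c * ((A*A) i j : ℝ) := by
      simp only [hM, Matrix.add_apply, Matrix.smul_apply, smul_eq_mul]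
      push_cast
      ring
    have hK0 : 0 ≤ K := by linarith
    have hH0 : 0 ≤ H := by linarith
    rw [Int.cast_abs, e1]
    refine (abs_add_three _ _ _).trans ?_
    rw [abs_mul, abs_mul, abs_mul, abs_mul, abs_mul]
    have hDa : |(D:ℝ)| = D := abs_of_nonneg (by linarith)
    have hDa2 : |(D:ℝ)^2| = D^2 := abs_of_nonneg (by positivity)
    rw [hDa, hDa2]
    have i1 : |(a:ℝ)| * D^2 * |(((1 : Matrix (Fin (d+1)) (Fin (d+1)) ℤ) i j : ℤ) : ℝ)| ≤ H * D^2 * K := by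
      gcongr; exact h1.trans hK1
    have i2 : |(b:ℝ)| * D * |(A i j : ℝ)| ≤ H * D^2 * K := by
      gcongr; exact hKA i j
    have i3 : |(c:ℝ)| * |((A*A) i j : ℝ)| ≤ H * D^2 * K := by
      calc |(c:ℝ)| * |((A*A) i j : ℝ)| ≤ H * K := by gcongr; exact hKA2 i j
        _ ≤ H * D^2 * K := by nlinarith [mul_nonneg hH0 hK0]
    rw [hT]; linarith
  have hTH : 1 ≤ T * H := by
    have : 1 ≤ T := by rw [hT]; nlinarith [mul_le_mul hK1 (by nlinarith : (1:ℝ) ≤ D^2) zero_le_one (by linarith)]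
    nlinarith
  have hadj : ∀ i j, |((M.adjugate i j : ℤ) : ℝ)| ≤ (d+1).factorial * (T*H)^(d+1) := by
    intro i j
    rw [Matrix.adjugate_apply]
    have := Matrix.det_le (A := (M.updateRow j (Pi.single i 1)).map (Int.cast : ℤ → ℝ))
      (abv := AbsoluteValue.abs) (x := T * H) (by
        intro k l
        simp only [Matrix.map_apply, AbsoluteValue.abs_apply]
        by_cases hk : k = j
        · subst hk
          rw [Matrix.updateRow_self]
          by_cases hl : l = i
          · subst hl; simpa using hTH
          · simp [Pi.single_apply, hl]; linarith
        · rw [Matrix.updateRow_ne hk]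
          have := hMb k l
          rwa [Int.cast_abs] at this)
    rw [show (M.updateRow j (Pi.single i 1)).map (Int.cast : ℤ → ℝ) =
      (Int.castRingHom ℝ).mapMatrix (M.updateRow j (Pi.single i 1)) from rfl, ← RingHom.map_det] at this
    simpa using this
  have hkey : (M.det : ℝ) = D^2 * lam * ∑ j, ((M.adjugate 0 j : ℤ) : ℝ) * e j := by
    have h1 : ∑ k, (((M.adjugate * M) 0 k : ℤ) : ℝ) * e k = D^2 * lam * ∑ j, ((M.adjugate 0 j : ℤ) : ℝ) * e j := by
      simp only [Matrix.mul_apply, Int.cast_sum, Int.cast_mul, Finset.sum_mul]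
      rw [Finset.sum_comm, Finset.mul_sum]
      apply Finset.sum_congr rfl
      intro j _
      calc _ = ((M.adjugate 0 j : ℤ) : ℝ) * ∑ k, (M j k : ℝ) * e k := by
            rw [Finset.mul_sum]; apply Finset.sum_congr rfl; intros; ring
        _ = _ := by rw [hMe]; ring
    rw [← h1, Matrix.adjugate_mul]
    simp [Matrix.smul_apply, Matrix.one_apply, he0]
  have hone : (1:ℝ) ≤ |(M.det : ℝ)| := by
    exact_mod_cast Int.one_le_abs hdet
  rw [hkey, abs_mul, abs_mul] at hone
  have hsum : |∑ j, ((M.adjugate 0 j : ℤ) : ℝ) * e j| ≤ (d+1) * ((d+1).factorial * (T*H)^(d+1) * K) := by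
    refine (Finset.abs_sum_le_sum_abs _ _).trans ?_
    calc _ ≤ ∑ j : Fin (d+1), ((d+1).factorial * (T*H)^(d+1) * K : ℝ) := by
          apply Finset.sum_le_sum
          intro j _
          rw [abs_mul]
          gcongr
          · exact hadj 0 j
          · exact hKe j
      _ = _ := by simp
  have hDa2 : |(D:ℝ)^2| = D^2 := abs_of_nonneg (by positivity)
  rw [hDa2] at hone
  calc (1:ℝ) ≤ _ := hone
    _ ≤ D^2 * |lam| * ((d+1) * ((d+1).factorial * (T*H)^(d+1) * K)) := by gcongr
    _ = _ := by rw [mul_pow]; ring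

end PalCF

namespace PalCF

lemma pig (q : ℕ) (hq : 1 ≤ q) (x y : ℤ) (s t : ℕ) (h : q < (s+1)*(t+1)) :
    ∃ b c : ℤ, ¬ (b = 0 ∧ c = 0) ∧ b.natAbs ≤ s ∧ c.natAbs ≤ t ∧ (q:ℤ) ∣ b * x + c * y := by
  have : NeZero q := ⟨by omega⟩
  obtain ⟨u, hu, v, hv, hne, heq⟩ := Finset.exists_ne_map_eq_of_card_lt_of_maps_to
    (s := Finset.range (s+1) ×ˢ Finset.range (t+1)) (t := (Finset.univ : Finset (ZMod q)))
    (f := fun u : ℕ × ℕ => (((u.1:ℤ) * x + (u.2:ℤ) * y : ℤ) : ZMod q)) (by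
      simpa [ZMod.card] using h) (by intro u _; exact Finset.mem_coe.mpr (Finset.mem_univ _))
  simp only [Finset.mem_product, Finset.mem_range] at hu hv
  refine ⟨(u.1:ℤ) - v.1, (u.2:ℤ) - v.2, ?_, by omega, by omega, ?_⟩
  · rintro ⟨h1, h2⟩
    exact hne (Prod.ext (by omega) (by omega))
  · have h1 := (ZMod.intCast_eq_intCast_iff_dvd_sub _ _ q).mp heq
    have e : ((u.1:ℤ) - v.1) * x + ((u.2:ℤ) - v.2) * y
        = -(((v.1:ℤ) * x + (v.2:ℤ) * y) - ((u.1:ℤ) * x + (u.2:ℤ) * y)) := by ring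
    rw [e]
    exact (dvd_neg).mpr h1

lemma lat_aux (q : ℕ) (hq : 1 ≤ q) (x y : ℤ) (B : ℕ) (hB1 : 1 ≤ B) (b1 c1 : ℤ)
    (hb1 : b1.natAbs = B) (hc1 : c1.natAbs ≤ B)
    (hmin : ∀ b c : ℤ, ¬ (b = 0 ∧ c = 0) → (q:ℤ) ∣ b * x + c * y → B ≤ max b.natAbs c.natAbs) :
    ∃ b2 c2 : ℤ, (q:ℤ) ∣ b2 * x + c2 * y ∧ b1 * c2 - c1 * b2 ≠ 0 ∧ b2.natAbs ≤ B ∧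
      c2.natAbs * B ≤ q := by
  obtain ⟨b2, c2, hne, hb2, hc2, hdvd⟩ := pig q hq x y (B-1) (q/B) (by
    have h1 : B - 1 + 1 = B := by omega
    rw [h1]
    exact Nat.lt_mul_div_succ q hB1)
  refine ⟨b2, c2, hdvd, ?_, by omega, ?_⟩
  · intro h0
    have h1 : b1 * c2 = c1 * b2 := by linarith
    have h2 := congrArg Int.natAbs h1
    rw [Int.natAbs_mul, Int.natAbs_mul, hb1] at h2
    have h3 : B * c2.natAbs ≤ B * b2.natAbs := by rw [h2]; gcongr
    have h4 := Nat.le_of_mul_le_mul_left h3 hB1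
    have h5 := hmin b2 c2 hne hdvd
    omega
  · calc c2.natAbs * B ≤ (q/B) * B := by gcongr
      _ ≤ q := Nat.div_mul_le_self q B

lemma lat (q : ℕ) (hq : 1 ≤ q) (x y : ℤ) :
    ∃ (B : ℕ) (b1 c1 b2 c2 : ℤ), 1 ≤ B ∧ B^2 ≤ q ∧ (q:ℤ) ∣ b1 * x + c1 * y ∧ (q:ℤ) ∣ b2 * x + c2 * y ∧
      b1 * c2 - c1 * b2 ≠ 0 ∧ b1.natAbs ≤ B ∧ c1.natAbs ≤ B ∧
      ((b2.natAbs ≤ B ∧ c2.natAbs * B ≤ q) ∨ (c2.natAbs ≤ B ∧ b2.natAbs * B ≤ q)) := by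
  classical
  have hex : ∃ B : ℕ, ∃ b c : ℤ, ¬ (b = 0 ∧ c = 0) ∧ (q:ℤ) ∣ b * x + c * y ∧ max b.natAbs c.natAbs = B :=
    ⟨_, q, 0, by omega, by simp, rfl⟩
  obtain ⟨b1, c1, hne, hdvd, hB⟩ := Nat.find_spec hex
  have hmin : ∀ b c : ℤ, ¬ (b = 0 ∧ c = 0) → (q:ℤ) ∣ b * x + c * y → Nat.find hex ≤ max b.natAbs c.natAbs :=
    fun b c h1 h2 => Nat.find_min' hex ⟨b, c, h1, h2, rfl⟩
  set B := Nat.find hex with hBdef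
  have hB1 : 1 ≤ B := by omega
  have hBq : B ^ 2 ≤ q := by
    obtain ⟨b, c, h1, h2, h3, h4⟩ := pig q hq x y (Nat.sqrt q) (Nat.sqrt q) (Nat.lt_succ_sqrt q)
    have h5 := hmin b c h1 h4
    have h6 : B ≤ Nat.sqrt q := by omega
    calc B^2 ≤ (Nat.sqrt q)^2 := by gcongr
      _ ≤ q := Nat.sqrt_le' q
  rcases le_total c1.natAbs b1.natAbs with h | h
  · obtain ⟨b2, c2, h1, h2, h3, h4⟩ := lat_aux q hq x y B hB1 b1 c1 (by omega) (by omega) hmin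
    exact ⟨B, b1, c1, b2, c2, hB1, hBq, hdvd, h1, h2, by omega, by omega, Or.inl ⟨h3, h4⟩⟩
  · obtain ⟨c2, b2, h1, h2, h3, h4⟩ := lat_aux q hq y x B hB1 c1 b1 (by omega) (by omega) (by
      intro b c h1 h2
      rw [max_comm]
      exact hmin c b (by tauto) (by rwa [add_comm]))
    exact ⟨B, b1, c1, b2, c2, hB1, hBq, hdvd, by rwa [add_comm], fun h => h2 (by linarith),
      by omega, by omega, Or.inr ⟨h3, h4⟩⟩

lemma lform (q : ℕ) (hq : 1 ≤ q) (p r : ℤ) (α : ℝ) (h0 : 0 < α) (h1 : α ≤ 1)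
    (hp : |(q:ℝ) * α - p| ≤ 1 / q) (hr : |(p:ℝ) * α - r| ≤ 1 / q) (a b c : ℤ)
    (h : (q:ℤ) * a + p * b + r * c = 0) (X : ℝ) (hb : |(b:ℝ)| ≤ X) (hc : |(c:ℝ)| ≤ X) :
    |(a:ℝ) + b * α + c * α^2| ≤ 3 * X / q^2 := by
  have hq0 : (0:ℝ) < q := by exact_mod_cast hq
  have h2 : |(q:ℝ) * α^2 - r| ≤ 2 / q := by
    have e : (q:ℝ) * α^2 - r = (q * α - p) * α + (p * α - r) := by ring
    rw [e]
    refine (abs_add_le _ _).trans ?_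
    rw [abs_mul, abs_of_pos h0]
    have : |(q:ℝ) * α - p| * α ≤ 1 / q := by
      calc _ ≤ |(q:ℝ) * α - p| * 1 := by gcongr
        _ ≤ _ := by rw [mul_one]; exact hp
    calc _ ≤ 1 / (q:ℝ) + 1/q := add_le_add this hr
      _ = _ := by ring
  have hR : (q:ℝ) * a + p * b + r * c = 0 := by exact_mod_cast h
  have e : (a:ℝ) + b * α + c * α^2 = (b * (q * α - p) + c * (q * α^2 - r)) / q := by
    rw [eq_div_iff hq0.ne']
    linear_combination hR
  rw [e, abs_div, abs_of_pos hq0, div_le_iff₀ hq0]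
  refine (abs_add_le _ _).trans ?_
  rw [abs_mul, abs_mul]
  have hX : 0 ≤ X := (abs_nonneg _).trans hb
  calc _ ≤ X * (1/q) + X * (2/q) := by gcongr
    _ = 3 * X / q^2 * q := by field_simp; ring

theorem lattice_main (α : ℝ) (hα : IsAlgebraic ℚ α) (h0 : 0 < α) (h1 : α ≤ 1)
    (h3 : ∀ a b c : ℤ, (a:ℝ) + b * α + c * α^2 = 0 → a = 0 ∧ b = 0 ∧ c = 0) :
    ∃ (τ : ℝ) (q0 : ℕ), 0 < τ ∧ τ ≤ 1 ∧ ∀ (q : ℕ) (p r : ℤ), q0 ≤ q → 1 ≤ q →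
      |(q:ℝ) * α - p| ≤ 1 / q → |(p:ℝ) * α - r| ≤ 1 / q →
      ∃ (u v : Fin 3 → ℤ) (l : Fin 3 → ℝ),
        (q:ℤ) * u 0 + p * u 1 + r * u 2 = 0 ∧ (q:ℤ) * v 0 + p * v 1 + r * v 2 = 0 ∧
        u 1 * v 2 - u 2 * v 1 ≠ 0 ∧
        |(u 0:ℝ) + u 1 * α + u 2 * α^2| ≤ Real.exp (l 0) ∧
        |(v 0:ℝ) + v 1 * α + v 2 * α^2| ≤ Real.exp (l 0) ∧
        |(u 1 : ℝ)| ≤ Real.exp (l 1) ∧ |(v 1 : ℝ)| ≤ Real.exp (l 1) ∧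
        |(u 2 : ℝ)| ≤ Real.exp (l 2) ∧ |(v 2 : ℝ)| ≤ Real.exp (l 2) ∧
        l 0 + l 1 + l 2 ≤ - τ * Real.log q ∧ ∀ i, |l i| ≤ 2 * Real.log q := by
  obtain ⟨n, κ, hκ, hL⟩ := liouville_quad α hα h3
  -- constants
  set K1 : ℝ := Real.log (κ * 5^n * 3) with hK1
  have hn : (0:ℝ) < 2 * (n+1) := by positivity
  refine ⟨1 / (2 * (n+1)), ⌈Real.exp (2 * (K1 + (n+1) * Real.log 3) )⌉₊ + 3, by positivity, ?_, ?_⟩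
  · rw [div_le_one hn]; have : (0:ℝ) ≤ n := by positivity
    linarith
  intro q p r hqq hq1 hp hr
  have hqr : (0:ℝ) < q := by exact_mod_cast hq1
  obtain ⟨B, b1, c1, b2, c2, hB1, hBq, hd1, hd2, hdet, hb1, hc1, hor⟩ := lat q hq1 p r
  obtain ⟨a1, ha1⟩ := hd1
  obtain ⟨a2, ha2⟩ := hd2
  have hBr : (1:ℝ) ≤ B := by exact_mod_cast hB1
  have hB0 : (0:ℝ) < B := by linarith
  have hBqr : (B:ℝ)^2 ≤ q := by exact_mod_cast hBq
  have hBle : (B:ℝ) ≤ q / B := by rw [le_div_iff₀ hB0]; nlinarith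
  have habs : ∀ z : ℤ, ∀ N : ℕ, z.natAbs ≤ N → |(z:ℝ)| ≤ N := by
    intro z N h
    have e : |(z:ℝ)| = (z.natAbs:ℝ) := by rw [Nat.cast_natAbs, Int.cast_abs]
    rw [e]
    exact_mod_cast h
  have habs2 : ∀ z : ℤ, z.natAbs * B ≤ q → |(z:ℝ)| ≤ q / B := by
    intro z h
    have e : |(z:ℝ)| = (z.natAbs:ℝ) := by rw [Nat.cast_natAbs, Int.cast_abs]
    rw [le_div_iff₀ hB0, e]
    exact_mod_cast h
  have hb1' := habs b1 B hb1
  have hc1' := habs c1 B hc1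
  have hlinu : (q:ℤ) * (-a1) + p * b1 + r * c1 = 0 := by linarith
  have hlinv : (q:ℤ) * (-a2) + p * b2 + r * c2 = 0 := by linarith
  have hq3 : (3:ℝ) ≤ q := by
    have : 3 ≤ q := by omega
    exact_mod_cast this
  have hlq : Real.log 3 ≤ Real.log q := Real.log_le_log (by norm_num) hq3
  have hl3 : 0 < Real.log 3 := Real.log_pos (by norm_num)
  have hlB0 : 0 ≤ Real.log B := Real.log_nonneg hBr
  have hlB : 2 * Real.log B ≤ Real.log q := by
    have := Real.log_le_log (by positivity) hBqr
    rwa [Real.log_pow] at this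
  have hX : 3 * ((q:ℝ) / B) / q^2 = 3 / (q * B) := by field_simp
  have hu : |((-a1 : ℤ):ℝ) + b1 * α + c1 * α^2| ≤ 3 / (q * B) := by
    rw [← hX]
    exact lform q hq1 p r α h0 h1 hp hr _ _ _ hlinu _ (hb1'.trans hBle) (hc1'.trans hBle)
  have hbc2 : |(b2:ℝ)| ≤ q / B ∧ |(c2:ℝ)| ≤ q / B := by
    rcases hor with ⟨h, h'⟩ | ⟨h, h'⟩
    · exact ⟨(habs _ _ h).trans hBle, habs2 _ h'⟩
    · exact ⟨habs2 _ h', (habs _ _ h).trans hBle⟩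
  have hv : |((-a2 : ℤ):ℝ) + b2 * α + c2 * α^2| ≤ 3 / (q * B) := by
    rw [← hX]
    exact lform q hq1 p r α h0 h1 hp hr _ _ _ hlinv _ hbc2.1 hbc2.2
  -- Liouville
  have hLB : Real.log q ≤ K1 + (n+1) * Real.log B := by
    have hqB1 : 3 / ((q:ℝ) * B) ≤ 3 * B := by
      rw [div_le_iff₀ (by positivity)]
      nlinarith [mul_pos hqr hB0]
    have haB : |((-a1 : ℤ):ℝ)| ≤ 5 * B := by
      have e : ((-a1 : ℤ):ℝ) = (((-a1 : ℤ):ℝ) + b1 * α + c1 * α^2) - (b1 * α + c1 * α^2) := by ring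
      rw [e]
      refine (abs_sub _ _).trans ?_
      have h5 : |(b1:ℝ) * α + c1 * α^2| ≤ B + B := by
        refine (abs_add_le _ _).trans ?_
        rw [abs_mul, abs_mul, abs_of_pos h0, abs_of_nonneg (by positivity : 0 ≤ α^2)]
        have : α^2 ≤ 1 := by nlinarith
        have i1 : |(b1:ℝ)| * α ≤ B * 1 := by gcongr
        have i2 : |(c1:ℝ)| * α^2 ≤ B * 1 := by gcongr
        linarith
      linarith
    have h6 := hL (-a1) b1 c1 (5 * B) (by linarith) haB (by linarith) (by linarith) (by
      rintro ⟨_, h, h'⟩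
      apply hdet
      rw [h, h']; ring)
    have h7 : 1 ≤ κ * (5 * B)^n * (3 / (q * B)) := h6.trans (by gcongr)
    have h8 : (q:ℝ) ≤ (κ * 5^n * 3) * B^(n+1) := by
      have h9 : κ * (5 * (B:ℝ))^n * (3 / (q * B)) ≤ (κ * 5^n * 3) * B^(n+1) / q := by
        rw [mul_pow, pow_succ]
        rw [show κ * (5 ^ n * (B:ℝ) ^ n) * (3 / (q * B)) = (κ * 5^n * 3) * B^n / B / q by field_simp]
        gcongr
        rw [div_le_iff₀ hB0]
        have : (κ * 5 ^ n * 3) * (B:ℝ) ^ n ≤ (κ * 5 ^ n * 3) * (B:ℝ) ^ n * (B * B) := by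
          apply le_mul_of_one_le_right (by positivity)
          nlinarith
        linarith
      have := h7.trans h9
      rwa [one_le_div hqr] at this
    have h10 := Real.log_le_log hqr h8
    rw [Real.log_mul (by positivity) (by positivity), Real.log_pow] at h10
    push_cast at h10
    exact h10
  have hbig : 2 * (K1 + (n+1) * Real.log 3) ≤ Real.log q := by
    rw [Real.le_log_iff_exp_le hqr]
    refine (Nat.le_ceil _).trans ?_
    have hce : ⌈Real.exp (2 * (K1 + (n+1) * Real.log 3))⌉₊ ≤ q := by omega
    exact_mod_cast hce
  have hmain : Real.log 3 - Real.log B ≤ - (1 / (2 * (n+1))) * Real.log q := by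
    have h11 : Real.log q ≤ 2 * (n+1) * (Real.log B - Real.log 3) := by linarith
    have : Real.log q / (2 * (n+1)) ≤ Real.log B - Real.log 3 := by
      rw [div_le_iff₀ hn]; linarith
    have e : - (1 / (2 * ((n:ℝ)+1))) * Real.log q = - (Real.log q / (2 * (n+1))) := by ring
    rw [e]; linarith
  have hexp0 : Real.exp (Real.log 3 - Real.log q - Real.log B) = 3 / (q * B) := by
    rw [Real.exp_sub, Real.exp_sub, Real.exp_log hqr, Real.exp_log hB0, Real.exp_log (by norm_num)]
    field_simp
  have hexpq : Real.exp (Real.log q - Real.log B) = q / B := by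
    rw [Real.exp_sub, Real.exp_log hqr, Real.exp_log hB0]
  rcases hor with ⟨h, h'⟩ | ⟨h, h'⟩
  · refine ⟨![-a1, b1, c1], ![-a2, b2, c2],
      ![Real.log 3 - Real.log q - Real.log B, Real.log B, Real.log q - Real.log B], ?_⟩
    simp only [Matrix.cons_val_zero, Matrix.cons_val_one, Matrix.cons_val, hexp0, hexpq, Real.exp_log hB0]
    refine ⟨hlinu, hlinv, hdet, hu, hv, hb1', habs _ _ h, hc1'.trans hBle, habs2 _ h', by linarith, ?_⟩
    intro i
    rw [abs_le]
    fin_cases i <;> simp <;> constructor <;> linarith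
  · refine ⟨![-a1, b1, c1], ![-a2, b2, c2],
      ![Real.log 3 - Real.log q - Real.log B, Real.log q - Real.log B, Real.log B], ?_⟩
    simp only [Matrix.cons_val_zero, Matrix.cons_val_one, Matrix.cons_val, hexp0, hexpq, Real.exp_log hB0]
    refine ⟨hlinu, hlinv, hdet, hu, hv, hb1'.trans hBle, habs2 _ h', hc1', habs _ _ h, by linarith, ?_⟩
    intro i
    rw [abs_le]
    fin_cases i <;> simp <;> constructor <;> linarith

end PalCF

namespace PalCF

def SS (r : ℕ) : Finset (Fin 3 → ℕ) := Finset.piAntidiag Finset.univ r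

lemma mem_SS (r : ℕ) (e : Fin 3 → ℕ) : e ∈ SS r ↔ e 0 + e 1 + e 2 = r := by
  simp [SS, Finset.mem_piAntidiag, Fin.sum_univ_three]

lemma SS_nonempty (r : ℕ) : (SS r).Nonempty := ⟨![r, 0, 0], by simp [mem_SS]⟩

lemma SS_le {r : ℕ} {e : Fin 3 → ℕ} (h : e ∈ SS r) (i : Fin 3) : e i ≤ r := by
  rw [mem_SS] at h
  fin_cases i <;> simp <;> omega

lemma SS_card_le (r : ℕ) : (SS r).card ≤ 8 ^ r := by
  have h : SS r ⊆ Fintype.piFinset (fun _ => Finset.range (r+1)) := by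
    intro e he
    rw [Fintype.mem_piFinset]
    intro i
    have := SS_le he i
    simp; omega
  refine (Finset.card_le_card h).trans ?_
  rw [Fintype.card_piFinset]
  simp only [Finset.card_range, Finset.prod_const, Finset.card_univ, Fintype.card_fin]
  have h1 : r + 1 ≤ 2 ^ r := Nat.lt_two_pow_self
  calc (r+1)^3 ≤ (2^r)^3 := by gcongr
    _ = 8 ^ r := by rw [← pow_mul, mul_comm, pow_mul]; norm_num

lemma sum_coord_eq (r : ℕ) (i j : Fin 3) : ∑ e ∈ SS r, (e i : ℝ) = ∑ e ∈ SS r, (e j : ℝ) := by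
  have hm : ∀ e ∈ SS r, e ∘ Equiv.swap i j ∈ SS r := by
    intro e he
    rw [SS, Finset.mem_piAntidiag] at he ⊢
    refine ⟨?_, by simp⟩
    rw [← he.1]
    exact Equiv.sum_comp (Equiv.swap i j) e
  refine Finset.sum_nbij' (fun e => e ∘ Equiv.swap i j) (fun e => e ∘ Equiv.swap i j) hm hm ?_ ?_ ?_
  · intro e _; funext x; simp
  · intro e _; funext x; simp
  · intro e _; simp

lemma sum_coord (r : ℕ) (i : Fin 3) : ∑ e ∈ SS r, (e i : ℝ) = (SS r).card * (r / 3 : ℝ) := by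
  have h : ∑ e ∈ SS r, ((e 0 : ℝ) + e 1 + e 2) = (SS r).card * (r:ℝ) := by
    rw [Finset.sum_congr rfl (g := fun _ => (r:ℝ))]
    · simp
    · intro e he
      rw [mem_SS] at he
      exact_mod_cast he
  rw [Finset.sum_add_distrib, Finset.sum_add_distrib, sum_coord_eq r 0 i, sum_coord_eq r 1 i,
    sum_coord_eq r 2 i] at h
  linarith

lemma exp_le_quad (x : ℝ) (h : |x| ≤ 1) : Real.exp x ≤ 1 + x + x^2 := by
  have := Real.abs_exp_sub_one_sub_id_le h
  have := (abs_le.mp this).2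
  linarith

lemma moment (r : ℕ) (l : Fin 3 → ℝ) (R τ lam : ℝ) (hR : 0 < R) (hlam : 0 ≤ lam) (hlam1 : 4 * lam ≤ 1)
    (hl : ∀ i, (r:ℝ) * |l i| ≤ 4 * R) (hs : (r:ℝ) * (l 0 + l 1 + l 2) ≤ -τ * R) :
    ∑ e ∈ SS r, Real.exp (lam / R * ∑ i, l i * e i) ≤
      (SS r).card * Real.exp (- lam * τ / 3 + 16 * lam^2) := by
  have hb : ∀ e ∈ SS r, |lam / R * ∑ i, l i * (e i : ℝ)| ≤ 4 * lam := by
    intro e he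
    have he' := (mem_SS r e).mp he
    have hRr : (e 0 : ℝ) + e 1 + e 2 = r := by exact_mod_cast he'
    have h1 : r * |∑ i, l i * (e i : ℝ)| ≤ 4 * R * r := by
      calc r * |∑ i, l i * (e i : ℝ)| ≤ r * ∑ i, |l i * (e i : ℝ)| := by
            gcongr; exact Finset.abs_sum_le_sum_abs _ _
        _ = ∑ i, (r * |l i|) * (e i : ℝ) := by
            rw [Finset.mul_sum]
            refine Finset.sum_congr rfl fun i _ => ?_
            rw [abs_mul, Nat.abs_cast]; ring
        _ ≤ ∑ i, (4 * R) * (e i : ℝ) := by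
            exact Finset.sum_le_sum fun i _ => mul_le_mul_of_nonneg_right (hl i) (by positivity)
        _ = 4 * R * r := by rw [← Finset.mul_sum, Fin.sum_univ_three, hRr]
    have h2 : |∑ i, l i * (e i : ℝ)| ≤ 4 * R := by
      rcases Nat.eq_zero_or_pos r with h0 | h0
      · have : ∀ i, e i = 0 := fun i => by have := SS_le he i; omega
        simp [this]; positivity
      · have : (0:ℝ) < r := by exact_mod_cast h0
        nlinarith
    rw [abs_mul, abs_of_nonneg (by positivity : 0 ≤ lam / R)]
    calc lam / R * |∑ i, l i * (e i : ℝ)| ≤ lam / R * (4 * R) := by gcongr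
      _ = 4 * lam := by field_simp
  calc ∑ e ∈ SS r, Real.exp (lam / R * ∑ i, l i * e i)
      ≤ ∑ e ∈ SS r, (1 + lam / R * ∑ i, l i * (e i : ℝ) + 16 * lam^2) := by
        refine Finset.sum_le_sum fun e he => ?_
        have h := hb e he
        refine (exp_le_quad _ (h.trans hlam1)).trans ?_
        have : (lam / R * ∑ i, l i * (e i : ℝ))^2 ≤ (4*lam)^2 := sq_le_sq' (abs_le.mp h).1 (abs_le.mp h).2
        nlinarith
    _ = (SS r).card * (1 + lam / R * (r * (l 0 + l 1 + l 2) / 3) + 16 * lam^2) := by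
        rw [Finset.sum_add_distrib, Finset.sum_add_distrib, ← Finset.mul_sum, Finset.sum_comm]
        simp only [← Finset.mul_sum, sum_coord, Fin.sum_univ_three, Finset.sum_const, nsmul_eq_mul]
        ring
    _ ≤ (SS r).card * (1 + (- lam * τ / 3 + 16 * lam^2)) := by
        have : lam / R * (r * (l 0 + l 1 + l 2) / 3) ≤ lam / R * (-τ * R / 3) := by gcongr
        have e : lam / R * (-τ * R / 3) = - lam * τ / 3 := by field_simp
        rw [e] at this
        gcongr ?_ * ?_
        linarith
    _ ≤ _ := by
        gcongr
        rw [add_comm]; exact Real.add_one_le_exp _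

def TT {m : ℕ} (r : Fin m → ℕ) : Finset (Fin m → Fin 3 → ℕ) := Fintype.piFinset (fun h => SS (r h))

lemma mem_TT {m : ℕ} (r : Fin m → ℕ) (t : Fin m → Fin 3 → ℕ) : t ∈ TT r ↔ ∀ h, t h ∈ SS (r h) := by
  simp [TT]

lemma TT_card {m : ℕ} (r : Fin m → ℕ) : (TT r).card = ∏ h, (SS (r h)).card := by
  simp [TT, Fintype.card_piFinset]

lemma TT_card_le {m : ℕ} (r : Fin m → ℕ) : (TT r).card ≤ 8 ^ (∑ h, r h) := by
  rw [TT_card, ← Finset.prod_pow_eq_pow_sum]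
  exact Finset.prod_le_prod' fun h _ => SS_card_le _

lemma bad_count {m : ℕ} (r : Fin m → ℕ) (l : Fin m → Fin 3 → ℝ) (R τ : ℝ) (hR : 0 < R) (hτ : 0 < τ)
    (hτ1 : τ ≤ 1) (hl : ∀ h i, (r h:ℝ) * |l h i| ≤ 4 * R)
    (hs : ∀ h, (r h:ℝ) * (l h 0 + l h 1 + l h 2) ≤ -τ * R) :
    (((TT r).filter (fun t => -(τ/6) * m * R ≤ ∑ h, ∑ i, l h i * (t h i : ℝ))).card : ℝ)
      ≤ (TT r).card * Real.exp (- m * τ^2 / 2304) := by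
  set lam : ℝ := τ / 192 with hlam
  calc (((TT r).filter (fun t => -(τ/6) * m * R ≤ ∑ h, ∑ i, l h i * (t h i : ℝ))).card : ℝ)
      = ∑ t ∈ (TT r).filter (fun t => -(τ/6) * m * R ≤ ∑ h, ∑ i, l h i * (t h i : ℝ)), (1:ℝ) := by simp
    _ ≤ ∑ t ∈ (TT r).filter (fun t => -(τ/6) * m * R ≤ ∑ h, ∑ i, l h i * (t h i : ℝ)),
          Real.exp (lam * (τ/6) * m) * ∏ h, Real.exp (lam / R * ∑ i, l h i * (t h i : ℝ)) := by
        refine Finset.sum_le_sum fun t ht => ?_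
        rw [← Real.exp_sum, ← Real.exp_add, ← Finset.mul_sum]
        rw [Finset.mem_filter] at ht
        apply Real.one_le_exp
        have h1 : lam / R * (-(τ/6) * m * R) ≤ lam / R * ∑ h, ∑ i, l h i * (t h i : ℝ) := by
          gcongr; exact ht.2
        have e : lam / R * (-(τ/6) * m * R) = - (lam * (τ/6) * m) := by field_simp
        linarith
    _ ≤ ∑ t ∈ TT r,
          Real.exp (lam * (τ/6) * m) * ∏ h, Real.exp (lam / R * ∑ i, l h i * (t h i : ℝ)) := by
        refine Finset.sum_le_sum_of_subset_of_nonneg (Finset.filter_subset _ _) fun t _ _ => ?_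
        positivity
    _ = Real.exp (lam * (τ/6) * m) * ∏ h, ∑ e ∈ SS (r h), Real.exp (lam / R * ∑ i, l h i * (e i : ℝ)) := by
        rw [← Finset.mul_sum, TT, Finset.prod_univ_sum]
    _ ≤ Real.exp (lam * (τ/6) * m) * ∏ h : Fin m, ((SS (r h)).card * Real.exp (- lam * τ / 3 + 16 * lam^2)) := by
        gcongr with h _
        exact moment (r h) (l h) R τ lam hR (by positivity) (by linarith) (hl h) (hs h)
    _ = (TT r).card * Real.exp (- m * τ^2 / 2304) := by
        rw [Finset.prod_mul_distrib, Finset.prod_const, TT_card, Finset.card_univ, Fintype.card_fin,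
          ← Real.exp_nat_mul]
        push_cast
        rw [mul_left_comm, ← Real.exp_add]
        congr 2
        rw [hlam]; ring

end PalCF

namespace PalCF
open MvPolynomial

section
attribute [local instance] Matrix.seminormedAddCommGroup
lemma siegel {ι κ : Type*} (S : Finset ι) (B : Finset κ) (M : κ → ι → ℤ) (H : ℝ)
    (hH : 1 ≤ H) (hM : ∀ k ∈ B, ∀ i ∈ S, |(M k i : ℝ)| ≤ H) (hS : S.Nonempty)
    (hc : 2 * B.card ≤ S.card) :
    ∃ x : ι → ℤ, (∃ i ∈ S, x i ≠ 0) ∧ (∀ i ∈ S, |(x i : ℝ)| ≤ S.card * H) ∧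
      ∀ k ∈ B, ∑ i ∈ S, M k i * x i = 0 := by
  classical
  have hS1 : 1 ≤ S.card := hS.card_pos
  rcases B.eq_empty_or_nonempty with hB | hB
  · subst hB
    refine ⟨fun _ => 1, ?_, ?_, by simp⟩
    · obtain ⟨i, hi⟩ := hS
      exact ⟨i, hi, one_ne_zero⟩
    · intro i _
      have : (1:ℝ) ≤ S.card := by exact_mod_cast hS1
      simp only [Int.cast_one, abs_one]
      nlinarith
  have hB1 := hB.card_pos
  set A : Matrix B S ℤ := fun k i => M k.1 i.1 with hA
  obtain ⟨t, ht0, htA, htn⟩ := Int.Matrix.exists_ne_zero_int_vec_norm_le A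
    (by simp only [Fintype.card_coe]; omega) (by simpa only [Fintype.card_coe] using hB1)
  simp only [Fintype.card_coe] at htn
  have hAn : ‖A‖ ≤ H := by
    rw [Matrix.norm_le_iff (by linarith)]
    intro k i
    rw [Int.norm_eq_abs]
    exact hM k.1 k.2 i.1 i.2
  have hScr : (2:ℝ) * B.card ≤ S.card := by exact_mod_cast hc
  have hBcr : (1:ℝ) ≤ B.card := by exact_mod_cast hB1
  have hbound : ‖t‖ ≤ S.card * H := by
    refine htn.trans ?_
    have h1 : (1:ℝ) ≤ S.card * max 1 ‖A‖ := by
      have : (1:ℝ) ≤ max 1 ‖A‖ := le_max_left _ _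
      nlinarith
    calc ((S.card:ℝ) * max 1 ‖A‖) ^ ((B.card:ℝ) / (S.card - B.card))
        ≤ ((S.card:ℝ) * max 1 ‖A‖) ^ (1:ℝ) := by
          apply Real.rpow_le_rpow_of_exponent_le h1
          rw [div_le_one (by linarith)]
          linarith
      _ = S.card * max 1 ‖A‖ := Real.rpow_one _
      _ ≤ _ := by gcongr; exact max_le hH hAn
  refine ⟨fun i => if h : i ∈ S then t ⟨i, h⟩ else 0, ?_, ?_, ?_⟩
  · by_contra hcon
    push Not at hcon
    apply ht0
    funext i
    have := hcon i.1 i.2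
    simpa using this
  · intro i hi
    simp only [hi, dite_true]
    have := (norm_le_pi_norm t ⟨i, hi⟩).trans hbound
    rwa [Int.norm_eq_abs] at this
  · intro k hk
    have := congrFun htA ⟨k, hk⟩
    simp only [Matrix.mulVec, dotProduct, Pi.zero_apply] at this
    rw [← this, ← Finset.sum_attach S]
    refine Finset.sum_congr rfl fun i _ => ?_
    simp [hA]

end

/-- the polynomial `(X0 - X1 - X2)^e0 X1^e1 X2^e2` -/
noncomputable def QQ (e : Fin 3 → ℕ) : MvPolynomial (Fin 3) ℤ :=
  (X 0 - X 1 - X 2) ^ e 0 * X 1 ^ e 1 * X 2 ^ e 2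

noncomputable def nn (e e' : Fin 3 → ℕ) : ℤ := coeff (Finsupp.equivFunOnFinite.symm e') (QQ e)

lemma QQ_homog (r : ℕ) (e : Fin 3 → ℕ) (he : e ∈ SS r) : (QQ e).IsHomogeneous r := by
  rw [mem_SS] at he
  have hX := fun i : Fin 3 => isHomogeneous_X ℤ i
  have h0 : (X 0 - X 1 - X 2 : MvPolynomial (Fin 3) ℤ).IsHomogeneous 1 := ((hX 0).sub (hX 1)).sub (hX 2)
  have := ((h0.pow (e 0)).mul ((hX 1).pow (e 1))).mul ((hX 2).pow (e 2))
  simp only [one_mul] at this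
  rw [he] at this
  exact this

lemma nn_le (r : ℕ) (e e' : Fin 3 → ℕ) (he : e ∈ SS r) : |(nn e e' : ℝ)| ≤ 3 ^ r := by
  refine (coeff_le_zn _ _).trans ?_
  have hX : ∀ i : Fin 3, zn (X i : MvPolynomial (Fin 3) ℤ) = 1 := by
    intro i; rw [X, zn_monomial]; simp
  have h0 : zn (X 0 - X 1 - X 2 : MvPolynomial (Fin 3) ℤ) ≤ 3 := by
    have e : (X 0 - X 1 - X 2 : MvPolynomial (Fin 3) ℤ) = ∑ i : Fin 3, (![X 0, - X 1, - X 2] : Fin 3 → MvPolynomial (Fin 3) ℤ) i := by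
      rw [Fin.sum_univ_three]; simp; ring
    rw [e]
    refine (zn_sum_le _ _).trans ?_
    rw [Fin.sum_univ_three]
    simp [zn_neg, hX]; norm_num
  have hp : ∀ (P : MvPolynomial (Fin 3) ℤ) (n : ℕ), zn (P ^ n) ≤ zn P ^ n := by
    intro P n
    have := zn_prod_le (Finset.range n) (fun _ => P)
    simpa using this
  unfold QQ
  have hz := @zn_nonneg (Fin 3)
  calc zn ((X 0 - X 1 - X 2 : MvPolynomial (Fin 3) ℤ) ^ e 0 * X 1 ^ e 1 * X 2 ^ e 2)
      ≤ zn ((X 0 - X 1 - X 2 : MvPolynomial (Fin 3) ℤ) ^ e 0) * zn (X 1 ^ e 1 : MvPolynomial (Fin 3) ℤ) * zn (X 2 ^ e 2 : MvPolynomial (Fin 3) ℤ) := by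
        refine (zn_mul_le _ _).trans ?_
        exact mul_le_mul_of_nonneg_right (zn_mul_le _ _) (hz _)
    _ ≤ 3 ^ e 0 * 1 * 1 := by
        have h1 := (hp (X 1) (e 1))
        have h2 := (hp (X 2) (e 2))
        have h3 := (hp (X 0 - X 1 - X 2) (e 0))
        rw [hX, one_pow] at h1 h2
        have h4 : zn (X 0 - X 1 - X 2 : MvPolynomial (Fin 3) ℤ) ^ e 0 ≤ 3 ^ e 0 := by
          gcongr; exact hz _
        exact mul_le_mul (mul_le_mul (h3.trans h4) h1 (hz _) (by positivity)) h2 (hz _) (by positivity)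
    _ ≤ 3 ^ r := by
        rw [mul_one, mul_one]
        exact pow_le_pow_right₀ (by norm_num) (SS_le he 0)

lemma QQ_aeval {R : Type*} [CommRing R] (r : ℕ) (e : Fin 3 → ℕ) (he : e ∈ SS r) (y : Fin 3 → R) :
    (y 0 - y 1 - y 2) ^ e 0 * y 1 ^ e 1 * y 2 ^ e 2 =
      ∑ e' ∈ SS r, (nn e e' : R) * ∏ i, y i ^ e' i := by
  have h : aeval y (QQ e) = (y 0 - y 1 - y 2) ^ e 0 * y 1 ^ e 1 * y 2 ^ e 2 := by
    simp [QQ]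
  rw [← h, aeval_def, eval₂_eq']
  have hs : (QQ e).support ⊆ (SS r).map Finsupp.equivFunOnFinite.symm.toEmbedding := by
    intro d hd
    rw [Finset.mem_map_equiv]
    have := (QQ_homog r e he) (mem_support_iff.mp hd)
    rw [Finsupp.weight_apply, Finsupp.sum_fintype _ _ (by simp), Fin.sum_univ_three] at this
    rw [mem_SS]
    simpa using this
  rw [Finset.sum_subset hs, Finset.sum_map]
  · refine Finset.sum_congr rfl fun e' _ => ?_
    simp [nn]
  · intro d _ hd
    rw [notMem_support_iff.mp hd]; simp

def ww {m : ℕ} (t : Fin m → Fin 3 → ℕ) : ℕ := ∑ h, (t h 1 + 2 * t h 2)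

noncomputable def NN {m : ℕ} (t t' : Fin m → Fin 3 → ℕ) : ℤ := ∏ h, nn (t h) (t' h)

lemma ww_le {m : ℕ} (r : Fin m → ℕ) (t : Fin m → Fin 3 → ℕ) (ht : t ∈ TT r) : ww t ≤ 2 * ∑ h, r h := by
  rw [Finset.mul_sum]
  refine Finset.sum_le_sum fun h _ => ?_
  have := (mem_SS _ _).mp ((mem_TT r t).mp ht h)
  omega

lemma NN_le {m : ℕ} (r : Fin m → ℕ) (t t' : Fin m → Fin 3 → ℕ) (ht : t ∈ TT r) :
    |(NN t t' : ℝ)| ≤ 3 ^ (∑ h, r h) := by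
  unfold NN
  push_cast
  rw [Finset.abs_prod, ← Finset.prod_pow_eq_pow_sum]
  exact Finset.prod_le_prod (fun _ _ => abs_nonneg _) fun h _ => nn_le _ _ _ ((mem_TT r t).mp ht h)

/-- key expansion -/
lemma expand {R : Type*} [CommRing R] {m : ℕ} (r : Fin m → ℕ) (t : Fin m → Fin 3 → ℕ) (ht : t ∈ TT r)
    (a b : R) (hab : a * b = 1) (L B C : Fin m → R) :
    ∏ h, ((L h - a * B h - a^2 * C h) ^ t h 0 * B h ^ t h 1 * C h ^ t h 2) =
      b ^ ww t * ∑ t' ∈ TT r, (NN t t' : R) *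
        ∏ h, (L h ^ t' h 0 * (a * B h) ^ t' h 1 * (a^2 * C h) ^ t' h 2) := by
  have h1 : ∀ h, (L h - a * B h - a^2 * C h) ^ t h 0 * B h ^ t h 1 * C h ^ t h 2 =
      b ^ (t h 1 + 2 * t h 2) * ∑ e' ∈ SS (r h), (nn (t h) e' : R) *
        (L h ^ e' 0 * (a * B h) ^ e' 1 * (a^2 * C h) ^ e' 2) := by
    intro h
    have := QQ_aeval (r h) (t h) ((mem_TT r t).mp ht h) (![L h, a * B h, a^2 * C h] : Fin 3 → R)
    simp only [Fin.prod_univ_three, Matrix.cons_val_zero, Matrix.cons_val_one, Matrix.cons_val] at this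
    rw [← this]
    have e1 : b ^ t h 1 * (a * B h) ^ t h 1 = B h ^ t h 1 := by
      rw [← mul_pow, ← mul_assoc, mul_comm b a, hab, one_mul]
    have e2 : (b^2) ^ t h 2 * (a^2 * C h) ^ t h 2 = C h ^ t h 2 := by
      rw [← mul_pow, ← mul_assoc, ← mul_pow, mul_comm b a, hab, one_pow, one_mul]
    rw [pow_add, pow_mul]
    linear_combination (-(L h - a * B h - a^2 * C h) ^ t h 0 * C h ^ t h 2) * e1 
      - (L h - a * B h - a^2 * C h) ^ t h 0 * (b ^ t h 1 * (a * B h) ^ t h 1) * e2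
  rw [Finset.prod_congr rfl fun h _ => h1 h, Finset.prod_mul_distrib, Finset.prod_pow_eq_pow_sum,
    Finset.prod_univ_sum]
  unfold ww TT NN
  congr 1
  refine Finset.sum_congr rfl fun t' _ => ?_
  rw [Finset.prod_mul_distrib]
  push_cast
  rfl

lemma mat_pow_le {d : ℕ} (A : Matrix (Fin (d+1)) (Fin (d+1)) ℤ) (c : ℝ) (hc : 1 ≤ c)
    (hA : ∀ i j, |(A i j : ℝ)| ≤ c) (k : ℕ) : ∀ i j, |((A ^ k) i j : ℝ)| ≤ ((d+1) * c) ^ k := by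
  induction k with
  | zero =>
    intro i j
    rw [pow_zero, pow_zero, Matrix.one_apply]
    split_ifs <;> simp
  | succ k ih =>
    intro i j
    rw [pow_succ, Matrix.mul_apply]
    push_cast
    refine (Finset.abs_sum_le_sum_abs _ _).trans ?_
    calc ∑ l, |((A ^ k) i l : ℝ) * A l j| ≤ ∑ l : Fin (d+1), ((d+1) * c) ^ k * c := by
          refine Finset.sum_le_sum fun l _ => ?_
          rw [abs_mul]
          gcongr
          · exact ih i l
          · exact hA l j
      _ = _ := by
          rw [Finset.sum_const, Finset.card_univ, Fintype.card_fin, nsmul_eq_mul, pow_succ]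
          push_cast; ring

lemma mat_pow_eig {d : ℕ} (A : Matrix (Fin (d+1)) (Fin (d+1)) ℤ) (μ : ℝ) (e : Fin (d+1) → ℝ)
    (hA : ∀ i, ∑ j, (A i j:ℝ) * e j = μ * e i) (k : ℕ) :
    ∀ i, ∑ j, ((A ^ k) i j : ℝ) * e j = μ ^ k * e i := by
  induction k with
  | zero =>
    intro i
    simp [Matrix.one_apply]
  | succ k ih =>
    intro i
    rw [pow_succ]
    simp only [Matrix.mul_apply]
    push_cast
    simp only [Finset.sum_mul]
    rw [Finset.sum_comm]
    calc ∑ y, ∑ x, ((A ^ k) i y : ℝ) * A y x * e x = ∑ y, ((A ^ k) i y : ℝ) * (μ * e y) := by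
          refine Finset.sum_congr rfl fun y _ => ?_
          rw [← hA y, Finset.mul_sum]
          exact Finset.sum_congr rfl fun x _ => by ring
      _ = μ * ∑ y, ((A ^ k) i y : ℝ) * e y := by
          rw [Finset.mul_sum]
          exact Finset.sum_congr rfl fun x _ => by ring
      _ = _ := by rw [ih, pow_succ]; ring

theorem aux_exists (α : ℝ) (hα : IsAlgebraic ℚ α) (h0 : 0 < α) (h1 : α ≤ 1) (τ : ℝ) (hτ : 0 < τ) (hτ1 : τ ≤ 1) :
    ∃ (m : ℕ) (c : ℝ), 1 ≤ m ∧ 1 ≤ c ∧ ∀ (r : Fin m → ℕ) (l : Fin m → Fin 3 → ℝ) (R : ℝ), 0 < R →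
      (∀ h i, (r h:ℝ) * |l h i| ≤ 4 * R) →
      (∀ h, (r h:ℝ) * (l h 0 + l h 1 + l h 2) ≤ -τ * R) →
      ∃ x : (Fin m → Fin 3 → ℕ) → ℤ, (∃ t ∈ TT r, x t ≠ 0) ∧
        (∀ t ∈ TT r, |(x t : ℝ)| ≤ c ^ (∑ h, r h)) ∧
        (∀ t' ∈ TT r, |∑ t ∈ TT r, (x t : ℝ) * (α⁻¹ ^ ww t * NN t t')| ≤ c ^ (∑ h, r h)) ∧
        (∀ t' ∈ TT r, -(τ/6) * m * R ≤ ∑ h, ∑ i, l h i * (t' h i : ℝ) →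
          ∑ t ∈ TT r, (x t : ℝ) * (α⁻¹ ^ ww t * NN t t') = 0) := by
  obtain ⟨d, D, A, e, hD, he0, hA, hind⟩ := exists_mat α hα
  obtain ⟨m, hm⟩ := exists_nat_ge (2 * ((d:ℝ)+1) * (2304 / τ^2) + 1)
  have hDr : (1:ℝ) ≤ D := by exact_mod_cast hD
  have hm1 : 1 ≤ m := by
    have : (1:ℝ) ≤ m := le_trans (by have : (0:ℝ) ≤ 2 * ((d:ℝ)+1) * (2304 / τ^2) := by positivity
                                     linarith) hm
    exact_mod_cast this
  obtain ⟨a, ha1, ha⟩ : ∃ a : ℝ, 1 ≤ a ∧ ∀ i j, |(A i j : ℝ)| ≤ a := by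
    refine ⟨1 + ∑ i, ∑ j, |(A i j : ℝ)|, ?_, ?_⟩
    · have : 0 ≤ ∑ i, ∑ j, |(A i j : ℝ)| := by positivity
      linarith
    · intro i j
      have h2 : |(A i j : ℝ)| ≤ ∑ j, |(A i j : ℝ)| :=
        Finset.single_le_sum (f := fun j => |(A i j : ℝ)|) (fun _ _ => abs_nonneg _) (Finset.mem_univ j)
      have h3 : ∑ j, |(A i j : ℝ)| ≤ ∑ i, ∑ j, |(A i j : ℝ)| :=
        Finset.single_le_sum (f := fun i => ∑ j, |(A i j : ℝ)|) (fun _ _ => by positivity) (Finset.mem_univ i)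
      linarith
  set M : ℝ := D * ((d+1) * a) with hMdef
  have hda : (1:ℝ) ≤ (d+1) * a := by
    have : (0:ℝ) ≤ d := by positivity
    nlinarith
  have hM1 : 1 ≤ M := by nlinarith
  have hαi : 1 ≤ α⁻¹ := (one_le_inv₀ h0).mpr h1
  set c1 : ℝ := 8 * (3 * M^2) with hc1
  have hc1' : 1 ≤ c1 := by nlinarith [one_le_pow₀ hM1 (n := 2)]
  refine ⟨m, 8 * (c1 * ((α⁻¹)^2 * 3)), hm1, ?_, ?_⟩
  · have : 1 ≤ (α⁻¹)^2 := one_le_pow₀ hαi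
    nlinarith [mul_le_mul hc1' this zero_le_one (by linarith)]
  intro r l R hR hl hs
  set Sg := ∑ h, r h with hSg
  set W := 2 * Sg with hW
  classical
  set Bad := (TT r).filter (fun t => -(τ/6) * m * R ≤ ∑ h, ∑ i, l h i * (t h i : ℝ)) with hBad
  have hbc := bad_count r l R τ hR hτ hτ1 hl hs
  have hTne : (TT r).Nonempty := by
    simp only [TT, Fintype.piFinset_nonempty]
    exact fun h => SS_nonempty _
  have hcount : 2 * ((Bad ×ˢ (Finset.univ : Finset (Fin (d+1)))).card) ≤ (TT r).card := by
    rw [Finset.card_product, Finset.card_univ, Fintype.card_fin]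
    have h5 : Real.exp (- m * τ^2 / 2304) * (2 * (d+1)) ≤ 1 := by
      have e5 : - (m:ℝ) * τ^2 / 2304 = - (m * τ^2 / 2304) := by ring
      rw [e5, Real.exp_neg, inv_mul_le_iff₀ (Real.exp_pos _), mul_one]
      refine le_trans ?_ (Real.add_one_le_exp _)
      have h6 : 2 * ((d:ℝ)+1) * (2304 / τ^2) ≤ m := by linarith
      have h7 : 2 * ((d:ℝ)+1) * (2304 / τ^2) * (τ^2 / 2304) ≤ m * (τ^2 / 2304) := by gcongr
      have e7 : 2 * ((d:ℝ)+1) * (2304 / τ^2) * (τ^2 / 2304) = 2 * (d+1) := by field_simp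
      rw [e7] at h7
      have e8 : (m:ℝ) * (τ^2 / 2304) = m * τ^2/2304 := by ring
      linarith
    have h8 : (2:ℝ) * (Bad.card * (d+1)) ≤ (TT r).card := by
      calc (2:ℝ) * (Bad.card * (d+1)) = Bad.card * (2 * (d+1)) := by ring
        _ ≤ ((TT r).card * Real.exp (- m * τ^2 / 2304)) * (2 * (d+1)) := by gcongr
        _ = (TT r).card * (Real.exp (- m * τ^2 / 2304) * (2 * (d+1))) := by ring
        _ ≤ (TT r).card * 1 := by gcongr
        _ = _ := mul_one _
    exact_mod_cast h8
  have hMW : M ^ W = (M^2) ^ Sg := by rw [hW, pow_mul]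
  obtain ⟨x, hx0, hxb, hxe⟩ := siegel (TT r) (Bad ×ˢ (Finset.univ : Finset (Fin (d+1))))
    (fun k t => NN t k.1 * (D ^ ww t * (A ^ (W - ww t)) 0 k.2)) (3 ^ Sg * M ^ W)
    (by have i1 : (1:ℝ) ≤ 3 ^ Sg := one_le_pow₀ (by norm_num)
        have i2 : (1:ℝ) ≤ M ^ W := one_le_pow₀ hM1
        nlinarith)
    (by
      intro k _ t ht
      push_cast
      rw [abs_mul, abs_mul]
      have j1 := NN_le r t k.1 ht
      have hwW := ww_le r t ht
      have j2 : |(D:ℝ) ^ ww t| ≤ D ^ W := by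
        rw [abs_of_nonneg (by positivity)]
        exact pow_le_pow_right₀ hDr hwW
      have j3 : |((A ^ (W - ww t)) 0 k.2 : ℝ)| ≤ ((d+1) * a) ^ W :=
        (mat_pow_le A a ha1 ha _ _ _).trans (pow_le_pow_right₀ hda (Nat.sub_le _ _))
      rw [hMdef, mul_pow]
      gcongr)
    hTne hcount
  have hcard : ((TT r).card : ℝ) ≤ 8 ^ Sg := by exact_mod_cast TT_card_le r
  have hxb' : ∀ t ∈ TT r, |(x t : ℝ)| ≤ c1 ^ Sg := by
    intro t ht
    refine (hxb t ht).trans ?_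
    have e2 : c1 ^ Sg = 8 ^ Sg * (3 ^ Sg * (M^2) ^ Sg) := by rw [hc1, mul_pow, mul_pow]
    rw [e2, hMW]
    gcongr
  have hc2 : (1:ℝ) ≤ (α⁻¹)^2 * 3 := by nlinarith [one_le_pow₀ hαi (n := 2)]
  refine ⟨x, hx0, ?_, ?_, ?_⟩
  · intro t ht
    refine (hxb' t ht).trans ?_
    gcongr
    nlinarith
  · intro t' _
    refine (Finset.abs_sum_le_sum_abs _ _).trans ?_
    calc ∑ t ∈ TT r, |(x t : ℝ) * (α⁻¹ ^ ww t * NN t t')| ≤ ∑ t ∈ TT r, c1 ^ Sg * (((α⁻¹)^2 * 3) ^ Sg) := by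
          refine Finset.sum_le_sum fun t ht => ?_
          have e3 : ((α⁻¹)^2 * 3) ^ Sg = α⁻¹ ^ (2 * Sg) * 3 ^ Sg := by rw [mul_pow, ← pow_mul]
          rw [abs_mul, abs_mul, e3]
          have j1 := NN_le r t t' ht
          have j2 : |α⁻¹ ^ ww t| ≤ α⁻¹ ^ (2 * Sg) := by
            rw [abs_of_nonneg (by positivity)]
            exact pow_le_pow_right₀ hαi (ww_le r t ht)
          have j3 := hxb' t ht
          gcongr
      _ = (TT r).card * (c1 ^ Sg * (((α⁻¹)^2 * 3) ^ Sg)) := by rw [Finset.sum_const, nsmul_eq_mul]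
      _ ≤ 8 ^ Sg * (c1 ^ Sg * (((α⁻¹)^2 * 3) ^ Sg)) := by gcongr
      _ = _ := by rw [← mul_pow, ← mul_pow]
  · intro t' ht' hb
    have hbad : t' ∈ Bad := by rw [hBad, Finset.mem_filter]; exact ⟨ht', hb⟩
    have key : ∑ i, (∑ t ∈ TT r, (NN t t' : ℝ) * ((D:ℝ) ^ ww t * ((A ^ (W - ww t)) 0 i : ℝ)) * x t) * e i = 0 := by
      refine Finset.sum_eq_zero fun i _ => ?_
      have := hxe (t', i) (by simp [hbad])
      have h9 : (∑ t ∈ TT r, (NN t t' : ℝ) * ((D:ℝ) ^ ww t * ((A ^ (W - ww t)) 0 i : ℝ)) * x t) = 0 := by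
        exact_mod_cast this
      rw [h9, zero_mul]
    have key2 : ∑ i, (∑ t ∈ TT r, (NN t t' : ℝ) * ((D:ℝ) ^ ww t * ((A ^ (W - ww t)) 0 i : ℝ)) * x t) * e i
        = (D * α) ^ W * ∑ t ∈ TT r, (x t : ℝ) * (α⁻¹ ^ ww t * NN t t') := by
      simp only [Finset.sum_mul]
      rw [Finset.sum_comm, Finset.mul_sum]
      refine Finset.sum_congr rfl fun t ht => ?_
      have h10 := mat_pow_eig A (D * α) e hA (W - ww t) 0
      rw [he0, mul_one] at h10
      calc ∑ i, (NN t t' : ℝ) * ((D:ℝ) ^ ww t * ((A ^ (W - ww t)) 0 i : ℝ)) * x t * e i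
          = (NN t t' * x t * D ^ ww t) * ∑ i, ((A ^ (W - ww t)) 0 i : ℝ) * e i := by
            rw [Finset.mul_sum]
            exact Finset.sum_congr rfl fun i _ => by ring
        _ = (NN t t' * x t) * (D ^ ww t * (D * α) ^ (W - ww t)) := by rw [h10]; ring
        _ = (NN t t' * x t) * ((D * α) ^ W * α⁻¹ ^ ww t) := by
            congr 1
            have e1 : ((D:ℝ) * α) ^ W = (D * α) ^ (W - ww t) * (D * α) ^ ww t := by
              rw [← pow_add, Nat.sub_add_cancel (ww_le r t ht)]
            rw [e1, mul_pow _ _ (ww t), inv_pow]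
            field_simp
        _ = _ := by ring
    rw [key2] at key
    rcases mul_eq_zero.mp key with h | h
    · exact absurd h (by positivity)
    · exact h

end PalCF

namespace PalCF
open MvPolynomial

/-- linear form `y·X(h,0) + a·X(h,1) + b·X(h,2)` -/
noncomputable def lf {R : Type*} [CommRing R] {m : ℕ} (h : Fin m) (y a b : R) : MvPolynomial (Fin m × Fin 3) R :=
  C y * X (h, 0) + C a * X (h, 1) + C b * X (h, 2)

noncomputable def GG {m : ℕ} (r : Fin m → ℕ) (u v : Fin m → Fin 3 → ℤ) (x : (Fin m → Fin 3 → ℕ) → ℤ) :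
    MvPolynomial (Fin m × Fin 3) ℤ :=
  ∑ t ∈ TT r, C (x t) * ∏ h, (lf h 1 (u h 0) (v h 0) ^ t h 0 * lf h 0 (u h 1) (v h 1) ^ t h 1 *
    lf h 0 (u h 2) (v h 2) ^ t h 2)

lemma lf_map {R S : Type*} [CommRing R] [CommRing S] {m : ℕ} (f : R →+* S) (h : Fin m) (y a b : R) :
    map f (lf h y a b) = lf h (f y) (f a) (f b) := by
  simp [lf]

lemma wn_lf {m : ℕ} (ρ : Fin m × Fin 3 → ℝ) (hρ : ∀ w, 0 ≤ ρ w) (h : Fin m) (y a b : ℝ) :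
    wn ρ (lf h y a b) ≤ |y| * ρ (h, 0) + |a| * ρ (h, 1) + |b| * ρ (h, 2) := by
  unfold lf
  refine (wn_add_le hρ _ _).trans ?_
  refine add_le_add ((wn_add_le hρ _ _).trans (add_le_add ?_ ?_)) ?_ <;>
  · refine (wn_mul_le hρ _ _).trans ?_
    rw [wn_C, wn_X]

lemma GG_expand {m : ℕ} (r : Fin m → ℕ) (u v : Fin m → Fin 3 → ℤ) (x : (Fin m → Fin 3 → ℕ) → ℤ)
    (α : ℝ) (h0 : 0 < α) :
    map (Int.castRingHom ℝ) (GG r u v x) = ∑ t' ∈ TT r,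
      C (∑ t ∈ TT r, (x t : ℝ) * (α⁻¹ ^ ww t * NN t t')) *
      ∏ h, (lf h 1 (u h 0 + u h 1 * α + u h 2 * α^2) (v h 0 + v h 1 * α + v h 2 * α^2) ^ t' h 0 *
        (C α * lf h 0 (u h 1 : ℝ) (v h 1 : ℝ)) ^ t' h 1 *
        ((C α)^2 * lf h 0 (u h 2 : ℝ) (v h 2 : ℝ)) ^ t' h 2) := by
  have hA : ∀ h : Fin m, (lf h 1 (u h 0 : ℝ) (v h 0 : ℝ)) =
      lf h 1 (u h 0 + u h 1 * α + u h 2 * α^2) (v h 0 + v h 1 * α + v h 2 * α^2)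
        - C α * lf h 0 (u h 1 : ℝ) (v h 1 : ℝ) - (C α)^2 * lf h 0 (u h 2 : ℝ) (v h 2 : ℝ) := by
    intro h
    simp only [lf, map_add, map_mul, map_pow, map_zero, map_one]
    ring
  have hab : (C α * C α⁻¹ : MvPolynomial (Fin m × Fin 3) ℝ) = 1 := by
    rw [← C_mul, mul_inv_cancel₀ h0.ne', C_1]
  unfold GG
  rw [map_sum]
  calc ∑ t ∈ TT r, map (Int.castRingHom ℝ) (C (x t) * ∏ h, (lf h 1 (u h 0) (v h 0) ^ t h 0 * lf h 0 (u h 1) (v h 1) ^ t h 1 *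
        lf h 0 (u h 2) (v h 2) ^ t h 2))
      = ∑ t ∈ TT r, ∑ t' ∈ TT r, C ((x t : ℝ) * (α⁻¹ ^ ww t * NN t t')) *
      ∏ h, (lf h 1 (u h 0 + u h 1 * α + u h 2 * α^2) (v h 0 + v h 1 * α + v h 2 * α^2) ^ t' h 0 *
        (C α * lf h 0 (u h 1 : ℝ) (v h 1 : ℝ)) ^ t' h 1 *
        ((C α)^2 * lf h 0 (u h 2 : ℝ) (v h 2 : ℝ)) ^ t' h 2) := by
        refine Finset.sum_congr rfl fun t ht => ?_
        simp only [map_mul, map_prod, map_pow, lf_map, map_C, Int.coe_castRingHom, Int.cast_one, Int.cast_zero]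
        simp only [hA]
        rw [expand r t ht (C α) (C α⁻¹) hab, Finset.mul_sum, Finset.mul_sum]
        refine Finset.sum_congr rfl fun t' _ => ?_
        have : (C (NN t t' : ℝ) : MvPolynomial (Fin m × Fin 3) ℝ) = (NN t t' : MvPolynomial (Fin m × Fin 3) ℝ) := by
          simp
        rw [this]
        ring
    _ = _ := by
        rw [Finset.sum_comm]
        refine Finset.sum_congr rfl fun t' _ => ?_
        rw [← Finset.sum_mul, map_sum]

theorem GG_vanish {m : ℕ} (hm : 1 ≤ m) (r : Fin m → ℕ) (hr : ∀ h, 1 ≤ r h) (u v : Fin m → Fin 3 → ℤ)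
    (x : (Fin m → Fin 3 → ℕ) → ℤ)
    (α : ℝ) (h0 : 0 < α) (h1 : α ≤ 1) (l : Fin m → Fin 3 → ℝ) (R τ c : ℝ) (hR : 0 < R) (hτ : 0 < τ)
    (hc : 1 ≤ c)
    (hl : ∀ h i, (r h:ℝ) * |l h i| ≤ 4 * R)
    (hu0 : ∀ h, |(u h 0:ℝ) + u h 1 * α + u h 2 * α^2| ≤ Real.exp (l h 0))
    (hv0 : ∀ h, |(v h 0:ℝ) + v h 1 * α + v h 2 * α^2| ≤ Real.exp (l h 0))
    (hu1 : ∀ h, |(u h 1:ℝ)| ≤ Real.exp (l h 1)) (hv1 : ∀ h, |(v h 1:ℝ)| ≤ Real.exp (l h 1))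
    (hu2 : ∀ h, |(u h 2:ℝ)| ≤ Real.exp (l h 2)) (hv2 : ∀ h, |(v h 2:ℝ)| ≤ Real.exp (l h 2))
    (hxc : ∀ t' ∈ TT r, |∑ t ∈ TT r, (x t : ℝ) * (α⁻¹ ^ ww t * NN t t')| ≤ c ^ (∑ h, r h))
    (hxz : ∀ t' ∈ TT r, -(τ/6) * m * R ≤ ∑ h, ∑ i, l h i * (t' h i : ℝ) →
          ∑ t ∈ TT r, (x t : ℝ) * (α⁻¹ ^ ww t * NN t t') = 0)
    (hbig : ((∑ h, r h : ℕ) : ℝ) * Real.log (24 * c) < τ * m * R / 12)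
    (e : Fin m × Fin 3 →₀ ℕ) (he : ∑ h, (e (h, 0) : ℝ) / r h < τ / 48) :
    coeff e (GG r u v x) = 0 := by
  set Sg := ∑ h, r h with hSg
  set ρ : Fin m × Fin 3 → ℝ := fun w => if w.2 = 0 then Real.exp (l w.1 0) else 1 with hρdef
  have hρ : ∀ w, 0 ≤ ρ w := by
    intro w; simp only [hρdef]; split_ifs <;> positivity
  have hρ0 : ∀ h, ρ (h, 0) = Real.exp (l h 0) := fun h => by simp [hρdef]
  have hρ1 : ∀ h, ρ (h, 1) = 1 := fun h => by simp [hρdef]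
  have hρ2 : ∀ h, ρ (h, 2) = 1 := fun h => by simp [hρdef]
  have hwC : wn ρ (C α) ≤ 1 := by rw [wn_C, abs_of_pos h0]; exact h1
  have hnn := fun P => wn_nonneg hρ P
  -- norm of G
  have hwG : wn ρ (map (Int.castRingHom ℝ) (GG r u v x)) ≤ (24 * c) ^ Sg * Real.exp (-(τ/6) * m * R) := by
    rw [GG_expand r u v x α h0]
    refine (wn_sum_le hρ _ _).trans ?_
    have hterm : ∀ t' ∈ TT r, wn ρ (C (∑ t ∈ TT r, (x t : ℝ) * (α⁻¹ ^ ww t * NN t t')) *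
      ∏ h, (lf h 1 (u h 0 + u h 1 * α + u h 2 * α^2) (v h 0 + v h 1 * α + v h 2 * α^2) ^ t' h 0 *
        (C α * lf h 0 (u h 1 : ℝ) (v h 1 : ℝ)) ^ t' h 1 *
        ((C α)^2 * lf h 0 (u h 2 : ℝ) (v h 2 : ℝ)) ^ t' h 2)) ≤
        c ^ Sg * (3 ^ Sg * Real.exp (-(τ/6) * m * R)) := by
      intro t' ht'
      by_cases hb : -(τ/6) * m * R ≤ ∑ h, ∑ i, l h i * (t' h i : ℝ)
      · rw [hxz t' ht' hb, C_0, zero_mul, wn_zero]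
        positivity
      refine (wn_mul_le hρ _ _).trans ?_
      rw [wn_C]
      refine mul_le_mul (hxc t' ht') ?_ (hnn _) (by positivity)
      refine (wn_prod_le hρ _ _).trans ?_
      have hh : ∀ h, wn ρ (lf h 1 (u h 0 + u h 1 * α + u h 2 * α^2) (v h 0 + v h 1 * α + v h 2 * α^2) ^ t' h 0 *
        (C α * lf h 0 (u h 1 : ℝ) (v h 1 : ℝ)) ^ t' h 1 *
        ((C α)^2 * lf h 0 (u h 2 : ℝ) (v h 2 : ℝ)) ^ t' h 2) ≤ 3 ^ r h * Real.exp (∑ i, l h i * (t' h i : ℝ)) := by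
        intro h
        have b0 : wn ρ (lf h 1 (u h 0 + u h 1 * α + u h 2 * α^2) (v h 0 + v h 1 * α + v h 2 * α^2)) ≤ 3 * Real.exp (l h 0) := by
          refine (wn_lf ρ hρ _ _ _ _).trans ?_
          rw [hρ0, hρ1, hρ2, abs_one]
          linarith [hu0 h, hv0 h]
        have b1' : wn ρ (lf h 0 (u h 1 : ℝ) (v h 1 : ℝ)) ≤ 3 * Real.exp (l h 1) := by
          refine (wn_lf ρ hρ _ _ _ _).trans ?_
          rw [hρ1, hρ2, abs_zero]
          linarith [hu1 h, hv1 h, Real.exp_pos (l h 1)]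
        have b2' : wn ρ (lf h 0 (u h 2 : ℝ) (v h 2 : ℝ)) ≤ 3 * Real.exp (l h 2) := by
          refine (wn_lf ρ hρ _ _ _ _).trans ?_
          rw [hρ1, hρ2, abs_zero]
          linarith [hu2 h, hv2 h, Real.exp_pos (l h 2)]
        have b1 : wn ρ (C α * lf h 0 (u h 1 : ℝ) (v h 1 : ℝ)) ≤ 3 * Real.exp (l h 1) := by
          refine (wn_mul_le hρ _ _).trans ?_
          have := mul_le_mul hwC b1' (hnn _) zero_le_one
          linarith
        have b2 : wn ρ ((C α)^2 * lf h 0 (u h 2 : ℝ) (v h 2 : ℝ)) ≤ 3 * Real.exp (l h 2) := by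
          refine (wn_mul_le hρ _ _).trans ?_
          have h5 : wn ρ ((C α)^2) ≤ 1 := (wn_pow_le hρ _ _).trans (pow_le_one₀ (hnn _) hwC)
          have := mul_le_mul h5 b2' (hnn _) zero_le_one
          linarith
        have bp : ∀ (P : MvPolynomial (Fin m × Fin 3) ℝ) (k : ℝ) (n : ℕ), wn ρ P ≤ k → wn ρ (P ^ n) ≤ k ^ n :=
          fun P k n hk => (wn_pow_le hρ _ _).trans (pow_le_pow_left₀ (hnn _) hk n)
        refine (wn_mul_le hρ _ _).trans ?_
        refine (mul_le_mul ((wn_mul_le hρ _ _).trans (mul_le_mul (bp _ _ _ b0) (bp _ _ _ b1) (hnn _) (by positivity)))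
          (bp _ _ _ b2) (hnn _) (by positivity)).trans ?_
        have hsum := (mem_SS _ _).mp ((mem_TT r t').mp ht' h)
        rw [← hsum, Fin.sum_univ_three, Real.exp_add, Real.exp_add, mul_pow, mul_pow, mul_pow,
          ← Real.exp_nat_mul, ← Real.exp_nat_mul, ← Real.exp_nat_mul, pow_add, pow_add]
        apply le_of_eq
        rw [mul_comm (l h 0), mul_comm (l h 1), mul_comm (l h 2)]
        ring
      refine (Finset.prod_le_prod (fun h _ => hnn _) fun h _ => hh h).trans ?_
      rw [Finset.prod_mul_distrib, Finset.prod_pow_eq_pow_sum, ← Real.exp_sum]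
      push Not at hb
      gcongr
    refine (Finset.sum_le_sum hterm).trans ?_
    rw [Finset.sum_const, nsmul_eq_mul]
    have hcard : ((TT r).card : ℝ) ≤ 8 ^ Sg := by exact_mod_cast TT_card_le r
    calc ((TT r).card : ℝ) * (c ^ Sg * (3 ^ Sg * Real.exp (-(τ/6) * m * R)))
        ≤ 8 ^ Sg * (c ^ Sg * (3 ^ Sg * Real.exp (-(τ/6) * m * R))) := by gcongr
      _ = _ := by
        rw [show (24:ℝ) * c = 8 * (3 * c) by ring, mul_pow, mul_pow]; ring
  have hco := (coeff_le_wn hρ (map (Int.castRingHom ℝ) (GG r u v x)) e).trans hwG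
  rw [coeff_map] at hco
  have hew : Real.exp (- (τ * R / 12)) ≤ ew ρ e := by
    have h2 : ew ρ e = ∏ h, Real.exp (l h 0) ^ (e (h, 0)) := by
      unfold ew
      first
        | rw [Finsupp.prod_fintype _ _ (by simp)]
        | skip
      rw [Fintype.prod_prod_type]
      refine Finset.prod_congr rfl fun h _ => ?_
      rw [Fin.prod_univ_three, hρ0, hρ1, hρ2]; simp
    rw [h2]
    simp only [← Real.exp_nat_mul]
    rw [← Real.exp_sum]
    apply Real.exp_le_exp.mpr
    have h3 : ∀ h, -(4 * R) * ((e (h,0) : ℝ) / r h) ≤ (e (h, 0) : ℝ) * l h 0 := by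
      intro h
      have hrp : (0:ℝ) < r h := by exact_mod_cast hr h
      have h4 := hl h 0
      have h5 : -(4 * R) / r h ≤ l h 0 := by
        rw [div_le_iff₀ hrp]
        have := neg_abs_le (l h 0)
        nlinarith
      calc -(4 * R) * ((e (h,0) : ℝ) / r h) = e (h, 0) * (-(4 * R) / r h) := by ring
        _ ≤ _ := by gcongr
    have h6 := Finset.sum_le_sum (fun h (_ : h ∈ Finset.univ) => h3 h)
    rw [← Finset.mul_sum] at h6
    refine le_trans ?_ h6
    nlinarith
  by_contra hne
  have hone : (1:ℝ) ≤ |((Int.castRingHom ℝ) (coeff e (GG r u v x)) : ℝ)| := by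
    rw [eq_intCast]
    exact_mod_cast Int.one_le_abs hne
  have h7 : Real.exp (- (τ * R / 12)) ≤ (24 * c) ^ Sg * Real.exp (-(τ/6) * m * R) := by
    calc Real.exp (- (τ * R / 12)) ≤ ew ρ e := hew
      _ ≤ |((Int.castRingHom ℝ) (coeff e (GG r u v x)) : ℝ)| * ew ρ e := by
          apply le_mul_of_one_le_left ((Real.exp_pos _).le.trans hew) hone
      _ ≤ _ := hco
  have h8 : ((24:ℝ) * c) ^ Sg = Real.exp (Sg * Real.log (24 * c)) := by
    rw [Real.exp_nat_mul, Real.exp_log (by linarith)]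
  rw [h8, ← Real.exp_add, Real.exp_le_exp] at h7
  have hmr : (1:ℝ) ≤ m := by exact_mod_cast hm
  have h9 : τ * R ≤ τ * m * R := by
    have : 0 < τ * R := by positivity
    nlinarith
  linarith

end PalCF

namespace PalCF
open MvPolynomial

/-- images of the variables `s`, `t` -/
noncomputable def gv {m : ℕ} (u v : Fin m → Fin 3 → ℤ) (h : Fin m) (i : Fin 3) : MvPolynomial (Fin m) ℚ :=
  if i = 1 then C (((u h 1 * v h 2 - u h 2 * v h 1 : ℤ) : ℚ)⁻¹) * (C (v h 2 : ℚ) - C (v h 1 : ℚ) * X h)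
  else C (((u h 1 * v h 2 - u h 2 * v h 1 : ℤ) : ℚ)⁻¹) * (C (-u h 2 : ℚ) + C (u h 1 : ℚ) * X h)

noncomputable def fv {m : ℕ} (u v : Fin m → Fin 3 → ℤ) (w : Fin m × Fin 3) :
    MvPolynomial (Fin m) (MvPolynomial (Fin m) ℚ) :=
  if w.2 = 0 then C (X w.1) else MvPolynomial.map C (gv u v w.1 w.2)

noncomputable def Th {m : ℕ} (u v : Fin m → Fin 3 → ℤ) :
    MvPolynomial (Fin m × Fin 3) ℤ →+* MvPolynomial (Fin m) (MvPolynomial (Fin m) ℚ) :=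
  eval₂Hom (Int.castRingHom _) (fv u v)

lemma Th_lf {m : ℕ} (u v : Fin m → Fin 3 → ℤ) (h : Fin m) (y a b : ℤ) :
    Th u v (lf h y a b) = (y : MvPolynomial (Fin m) (MvPolynomial (Fin m) ℚ)) * C (X h) +
      MvPolynomial.map C (C (a:ℚ) * gv u v h 1 + C (b:ℚ) * gv u v h 2) := by
  have e1 : (C (C (a:ℚ)) : MvPolynomial (Fin m) (MvPolynomial (Fin m) ℚ)) = (a : MvPolynomial (Fin m) (MvPolynomial (Fin m) ℚ)) := by
    simp
  have e2 : (C (C (b:ℚ)) : MvPolynomial (Fin m) (MvPolynomial (Fin m) ℚ)) = (b : MvPolynomial (Fin m) (MvPolynomial (Fin m) ℚ)) := by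
    simp
  simp only [Th, lf, map_add, map_mul, coe_eval₂Hom, eval₂_C, eval₂_X, map_C, e1, e2, Int.coe_castRingHom]
  simp [fv, add_assoc]

lemma lin1 {m : ℕ} (u v : Fin m → Fin 3 → ℤ) (h : Fin m) (hd : u h 1 * v h 2 - u h 2 * v h 1 ≠ 0) :
    (C (u h 1:ℚ) * gv u v h 1 + C (v h 1:ℚ) * gv u v h 2) = 1 := by
  have hd' : ((u h 1 * v h 2 - u h 2 * v h 1 : ℤ) : ℚ) ≠ 0 := by exact_mod_cast hd
  have e : (1 : MvPolynomial (Fin m) ℚ) = C (((u h 1 * v h 2 - u h 2 * v h 1 : ℤ) : ℚ)⁻¹ * ((u h 1 * v h 2 - u h 2 * v h 1 : ℤ) : ℚ)) := by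
    rw [inv_mul_cancel₀ hd', C_1]
  rw [e]
  simp only [gv, if_true, if_neg (by decide : ¬ (2 : Fin 3) = 1), Int.cast_sub, Int.cast_mul, map_sub, map_mul, map_neg]
  ring

lemma lin2 {m : ℕ} (u v : Fin m → Fin 3 → ℤ) (h : Fin m) (hd : u h 1 * v h 2 - u h 2 * v h 1 ≠ 0) :
    (C (u h 2:ℚ) * gv u v h 1 + C (v h 2:ℚ) * gv u v h 2) = X h := by
  have hd' : ((u h 1 * v h 2 - u h 2 * v h 1 : ℤ) : ℚ) ≠ 0 := by exact_mod_cast hd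
  have e : (X h : MvPolynomial (Fin m) ℚ) = C (((u h 1 * v h 2 - u h 2 * v h 1 : ℤ) : ℚ)⁻¹ * ((u h 1 * v h 2 - u h 2 * v h 1 : ℤ) : ℚ)) * X h := by
    rw [inv_mul_cancel₀ hd', C_1, one_mul]
  rw [e]
  simp only [gv, if_true, if_neg (by decide : ¬ (2 : Fin 3) = 1), Int.cast_sub, Int.cast_mul, map_sub, map_mul, map_neg]
  ring

lemma lin0 {m : ℕ} (u v : Fin m → Fin 3 → ℤ) (h : Fin m) (hd : u h 1 * v h 2 - u h 2 * v h 1 ≠ 0)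
    (p q s : ℤ) (hq : q ≠ 0) (hu : q * u h 0 + p * u h 1 + s * u h 2 = 0)
    (hv : q * v h 0 + p * v h 1 + s * v h 2 = 0) :
    (C (u h 0:ℚ) * gv u v h 1 + C (v h 0:ℚ) * gv u v h 2) = C (-(p:ℚ)/q) - C ((s:ℚ)/q) * X h := by
  have hq' : (q:ℚ) ≠ 0 := by exact_mod_cast hq
  have hu' : (q:ℚ) * u h 0 + p * u h 1 + s * u h 2 = 0 := by exact_mod_cast hu
  have hv' : (q:ℚ) * v h 0 + p * v h 1 + s * v h 2 = 0 := by exact_mod_cast hv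
  have eu : (u h 0 : ℚ) = -(p:ℚ)/q * u h 1 - (s:ℚ)/q * u h 2 := by
    field_simp; linarith
  have ev : (v h 0 : ℚ) = -(p:ℚ)/q * v h 1 - (s:ℚ)/q * v h 2 := by
    field_simp; linarith
  rw [eu, ev]
  have h1 := lin1 u v h hd
  have h2 := lin2 u v h hd
  simp only [map_sub, map_mul]
  linear_combination (C (-(p:ℚ)/q)) * h1 - C ((s:ℚ)/q) * h2

lemma Th_coeff {m : ℕ} (u v : Fin m → Fin 3 → ℤ) (G : MvPolynomial (Fin m × Fin 3) ℤ) (κ I : Fin m →₀ ℕ)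
    (hI : coeff I (coeff κ (Th u v G)) ≠ 0) :
    ∃ e : Fin m × Fin 3 →₀ ℕ, coeff e G ≠ 0 ∧ ∀ h, e (h, 0) = I h := by
  classical
  have h1 : Th u v G = ∑ e ∈ G.support, ((coeff e G : ℤ) : MvPolynomial (Fin m) (MvPolynomial (Fin m) ℚ)) *
      ∏ w, fv u v w ^ e w := by
    unfold Th
    rw [coe_eval₂Hom, eval₂_eq']
    rfl
  rw [h1, coeff_sum, coeff_sum] at hI
  obtain ⟨e, he, hne⟩ := Finset.exists_ne_zero_of_sum_ne_zero hI
  refine ⟨e, mem_support_iff.mp he, ?_⟩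
  have h2 : ((coeff e G : ℤ) : MvPolynomial (Fin m) (MvPolynomial (Fin m) ℚ)) * ∏ w, fv u v w ^ e w =
      C (monomial (Finsupp.equivFunOnFinite.symm (fun h => e (h, 0))) 1) *
      MvPolynomial.map C (C ((coeff e G : ℤ) : ℚ) * ∏ h, (gv u v h 1 ^ e (h, 1) * gv u v h 2 ^ e (h, 2))) := by
    have e1 : (C (C ((coeff e G : ℤ) : ℚ)) : MvPolynomial (Fin m) (MvPolynomial (Fin m) ℚ)) = ((coeff e G : ℤ) : MvPolynomial (Fin m) (MvPolynomial (Fin m) ℚ)) := by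
      simp
    have e2 : (monomial (Finsupp.equivFunOnFinite.symm (fun h => e (h, 0))) 1 : MvPolynomial (Fin m) ℚ) =
        ∏ h, X h ^ e (h, 0) := by
      rw [monomial_eq, C_1, one_mul, Finsupp.prod_fintype _ _ (by simp)]
      simp
    rw [Fintype.prod_prod_type, e2, map_prod, map_mul, map_C, e1, map_prod, mul_left_comm, ← Finset.prod_mul_distrib]
    congr 1
    refine Finset.prod_congr rfl fun h _ => ?_
    rw [Fin.prod_univ_three]
    simp [fv]
    ring
  rw [h2, coeff_C_mul, coeff_map] at hne
  intro h
  rw [mul_comm, coeff_C_mul, coeff_monomial] at hne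
  have : Finsupp.equivFunOnFinite.symm (fun h => e (h, 0)) = I := by
    by_contra hc
    rw [if_neg hc] at hne
    simp at hne
  rw [← this]; simp

/-- the polynomial `P_κ` -/
noncomputable def PP {m : ℕ} (r : Fin m → ℕ) (x : (Fin m → Fin 3 → ℕ) → ℤ) (κ : Fin m → ℕ) :
    MvPolynomial (Fin m) ℤ :=
  ∑ t ∈ (TT r).filter (fun t => ∀ h, t h 2 = κ h),
    monomial (Finsupp.equivFunOnFinite.symm (fun h => t h 0)) (x t)

lemma Th_GG {m : ℕ} (r : Fin m → ℕ) (u v : Fin m → Fin 3 → ℤ) (x : (Fin m → Fin 3 → ℕ) → ℤ)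
    (hd : ∀ h, u h 1 * v h 2 - u h 2 * v h 1 ≠ 0)
    (p q s : Fin m → ℤ) (hq : ∀ h, q h ≠ 0) (hu : ∀ h, q h * u h 0 + p h * u h 1 + s h * u h 2 = 0)
    (hv : ∀ h, q h * v h 0 + p h * v h 1 + s h * v h 2 = 0) :
    Th u v (GG r u v x) = ∑ t ∈ TT r, C (C (x t : ℚ)) *
      ((∏ h, (C (X h + C (-(p h:ℚ)/q h)) - C (C ((s h:ℚ)/q h)) * X h) ^ t h 0) *
        monomial (Finsupp.equivFunOnFinite.symm (fun h => t h 2)) 1) := by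
  unfold GG
  rw [map_sum]
  refine Finset.sum_congr rfl fun t _ => ?_
  have e1 : Th u v (C (x t)) = C (C (x t : ℚ)) := by
    simp [Th]
  have e2 : (monomial (Finsupp.equivFunOnFinite.symm (fun h => t h 2)) 1 : MvPolynomial (Fin m) (MvPolynomial (Fin m) ℚ)) =
      ∏ h, X h ^ t h 2 := by
    rw [monomial_eq, C_1, one_mul, Finsupp.prod_fintype _ _ (by simp)]
    simp
  rw [map_mul, e1, map_prod, e2, ← Finset.prod_mul_distrib]
  congr 1
  refine Finset.prod_congr rfl fun h _ => ?_
  rw [map_mul, map_mul, map_pow, map_pow, map_pow, Th_lf, Th_lf, Th_lf, lin1 u v h (hd h), lin2 u v h (hd h),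
    lin0 u v h (hd h) (p h) (q h) (s h) (hq h) (hu h) (hv h)]
  simp only [Int.cast_zero, Int.cast_one, one_mul, zero_mul, zero_add, map_one, one_pow, mul_one, map_X, map_sub,
    map_mul, map_C, map_add]
  congr 2
  ring

lemma Th_GG_coeff {m : ℕ} (r : Fin m → ℕ) (u v : Fin m → Fin 3 → ℤ) (x : (Fin m → Fin 3 → ℕ) → ℤ)
    (hd : ∀ h, u h 1 * v h 2 - u h 2 * v h 1 ≠ 0)
    (p q s : Fin m → ℤ) (hq : ∀ h, q h ≠ 0) (hu : ∀ h, q h * u h 0 + p h * u h 1 + s h * u h 2 = 0)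
    (hv : ∀ h, q h * v h 0 + p h * v h 1 + s h * v h 2 = 0) (κ : Fin m → ℕ)
    (hmin : ∀ t ∈ TT r, x t ≠ 0 → (∀ h, t h 2 ≤ κ h) → ∀ h, t h 2 = κ h) :
    coeff (Finsupp.equivFunOnFinite.symm κ) (Th u v (GG r u v x)) =
      Sh (fun h => ((-p h : ℤ):ℚ)/q h) (MvPolynomial.map (Int.castRingHom ℚ) (PP r x κ)) := by
  classical
  rw [Th_GG r u v x hd p q s hq hu hv, coeff_sum, PP, map_sum, map_sum, Finset.sum_filter]
  refine Finset.sum_congr rfl fun t ht => ?_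
  rw [coeff_C_mul, coeff_mul_monomial']
  by_cases hx : x t = 0
  · simp [hx]
  by_cases hle : ∀ h, t h 2 ≤ κ h
  · have heq := hmin t ht hx hle
    have hf : (fun h => t h 2) = κ := funext heq
    rw [hf, if_pos le_rfl, tsub_self, if_pos heq, mul_one, ← constantCoeff_eq, map_prod, map_monomial,
      monomial_eq, Finsupp.prod_fintype _ _ (by simp), map_mul, map_prod]
    congr 1
    · simp [Sh]
    · refine Finset.prod_congr rfl fun h _ => ?_
      simp [Sh]
  · have h1 : ¬ (Finsupp.equivFunOnFinite.symm (fun h => t h 2) ≤ Finsupp.equivFunOnFinite.symm κ) := by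
      intro h; apply hle; intro i; have := h i; simpa using this
    have h2 : ¬ (∀ h, t h 2 = κ h) := fun h => hle fun i => (h i).le
    rw [if_neg h1, if_neg h2, mul_zero]

lemma PP_coeff {m : ℕ} (r : Fin m → ℕ) (x : (Fin m → Fin 3 → ℕ) → ℤ) (t : Fin m → Fin 3 → ℕ) (ht : t ∈ TT r) :
    coeff (Finsupp.equivFunOnFinite.symm (fun h => t h 0)) (PP r x (fun h => t h 2)) = x t := by
  classical
  unfold PP
  rw [coeff_sum, Finset.sum_eq_single t]
  · simp
  · intro t' ht' hne
    rw [coeff_monomial, if_neg]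
    intro heq
    apply hne
    have h1 : ∀ h, t' h 0 = t h 0 := fun h => by
      have := DFunLike.congr_fun heq h
      simpa using this
    rw [Finset.mem_filter] at ht'
    funext h i
    have a1 := (mem_SS _ _).mp ((mem_TT r t).mp ht h)
    have a2 := (mem_SS _ _).mp ((mem_TT r t').mp ht'.1 h)
    have a3 : t' h 2 = t h 2 := ht'.2 h
    have a4 := h1 h
    fin_cases i <;> simp <;> omega
  · intro h
    exact absurd (by simp [ht]) h

lemma PP_degree {m : ℕ} (r : Fin m → ℕ) (x : (Fin m → Fin 3 → ℕ) → ℤ) (κ : Fin m → ℕ) (h : Fin m) :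
    degreeOf h (PP r x κ) ≤ r h := by
  classical
  unfold PP
  refine (degreeOf_sum_le _ _ _).trans ?_
  refine Finset.sup_le fun t ht => ?_
  rw [Finset.mem_filter] at ht
  have := SS_le ((mem_TT r t).mp ht.1 h) 0
  by_cases hx : x t = 0
  · simp [hx]
  · rw [degreeOf_monomial_eq _ _ hx]
    simpa using this

lemma PP_zn {m : ℕ} (r : Fin m → ℕ) (x : (Fin m → Fin 3 → ℕ) → ℤ) (κ : Fin m → ℕ) (c : ℝ) (hc : 1 ≤ c)
    (hx : ∀ t ∈ TT r, |(x t : ℝ)| ≤ c ^ (∑ h, r h)) : zn (PP r x κ) ≤ (8 * c) ^ (∑ h, r h) := by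
  classical
  unfold PP
  refine (zn_sum_le _ _).trans ?_
  have hcard : ((TT r).card : ℝ) ≤ 8 ^ (∑ h, r h) := by exact_mod_cast TT_card_le r
  calc ∑ t ∈ (TT r).filter (fun t => ∀ h, t h 2 = κ h), zn (monomial (Finsupp.equivFunOnFinite.symm (fun h => t h 0)) (x t))
      ≤ ∑ t ∈ (TT r).filter (fun t => ∀ h, t h 2 = κ h), c ^ (∑ h, r h) := by
        refine Finset.sum_le_sum fun t ht => ?_
        rw [zn_monomial]
        exact hx t (Finset.mem_filter.mp ht).1
    _ ≤ ∑ t ∈ TT r, c ^ (∑ h, r h) :=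
        Finset.sum_le_sum_of_subset_of_nonneg (Finset.filter_subset _ _) fun _ _ _ => by positivity
    _ = (TT r).card * c ^ (∑ h, r h) := by rw [Finset.sum_const, nsmul_eq_mul]
    _ ≤ 8 ^ (∑ h, r h) * c ^ (∑ h, r h) := by gcongr
    _ = _ := by rw [mul_pow]

lemma exists_min {m : ℕ} (r : Fin m → ℕ) (x : (Fin m → Fin 3 → ℕ) → ℤ) (hx : ∃ t ∈ TT r, x t ≠ 0) :
    ∃ t0 ∈ TT r, x t0 ≠ 0 ∧ ∀ t ∈ TT r, x t ≠ 0 → (∀ h, t h 2 ≤ t0 h 2) → ∀ h, t h 2 = t0 h 2 := by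
  classical
  obtain ⟨t1, ht1, hx1⟩ := hx
  obtain ⟨t0, h0, hmin⟩ := Finset.exists_min_image ((TT r).filter (fun t => x t ≠ 0)) (fun t => ∑ h, t h 2)
    ⟨t1, by simp [ht1, hx1]⟩
  rw [Finset.mem_filter] at h0
  refine ⟨t0, h0.1, h0.2, fun t ht hxt hle h => ?_⟩
  have h2 := hmin t (by simp [ht, hxt])
  by_contra hne
  have : ∑ h, t h 2 < ∑ h, t0 h 2 :=
    Finset.sum_lt_sum (fun i _ => hle i) ⟨h, Finset.mem_univ _, lt_of_le_of_ne (hle h) hne⟩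
  omega

end PalCF

namespace PalCF
open MvPolynomial

theorem no_sequence (α : ℝ) (hα : IsAlgebraic ℚ α) (h0 : 0 < α) (h1 : α ≤ 1)
    (h3 : ∀ a b c : ℤ, (a:ℝ) + b * α + c * α^2 = 0 → a = 0 ∧ b = 0 ∧ c = 0)
    (hseq : ∀ N : ℕ, ∃ (q : ℕ) (p s : ℤ), N ≤ q ∧ IsCoprime p (q:ℤ) ∧ |(q:ℝ) * α - p| ≤ 1 / q ∧
      |(p:ℝ) * α - s| ≤ 1 / q) : False := by
  obtain ⟨τ, q0, hτ, hτ1, hlat⟩ := lattice_main α hα h0 h1 h3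
  obtain ⟨m, c, hm, hc, haux⟩ := aux_exists α hα h0 h1 τ hτ hτ1
  obtain ⟨ω0, hω0, hroth⟩ := roth_lemma m (τ/48) (by positivity)
  set ω := min ω0 1 with hω
  have hωp : 0 < ω := lt_min hω0 one_pos
  have hω1 : ω ≤ 1 := min_le_right _ _
  have hωle : ω ≤ ω0 := min_le_left _ _
  have hmr : (1:ℝ) ≤ m := by exact_mod_cast hm
  have hlc : 0 < Real.log (24 * c) := Real.log_pos (by linarith)
  have hlc8 : 0 < Real.log (8 * c) := Real.log_pos (by linarith)
  -- threshold
  obtain ⟨Q0, hQ01, hQ02, hQ03, hQ04⟩ : ∃ Q0 : ℝ, 1 ≤ Q0 ∧ 24 * Real.log (24 * c) / τ < Q0 ∧ 2 / ω ≤ Q0 ∧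
      2 * m * Real.log (8 * c) / ω ≤ Q0 := by
    refine ⟨1 + 24 * Real.log (24 * c) / τ + 2 / ω + 2 * m * Real.log (8 * c) / ω, ?_, ?_, ?_, ?_⟩ <;>
    · have i1 : 0 ≤ 24 * Real.log (24 * c) / τ := by positivity
      have i2 : 0 ≤ 2 / ω := by positivity
      have i3 : 0 ≤ 2 * m * Real.log (8 * c) / ω := by positivity
      linarith
  choose fq fp fs hfN hfc hf1 hf2 using hseq
  -- sequence of thresholds
  let NS : ℕ → ℕ := fun k => Nat.rec (q0 + ⌈Real.exp Q0⌉₊ + 1)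
    (fun _ N => N + ⌈Real.exp (2 / ω * Real.log (fq N))⌉₊) k
  have hNS0 : NS 0 = q0 + ⌈Real.exp Q0⌉₊ + 1 := rfl
  have hNSs : ∀ k, NS (k+1) = NS k + ⌈Real.exp (2 / ω * Real.log (fq (NS k)))⌉₊ := fun k => rfl
  have hNSge : ∀ k, NS 0 ≤ NS k := by
    intro k
    induction k with
    | zero => exact le_rfl
    | succ k ih => rw [hNSs]; omega
  set Lg : ℕ → ℝ := fun k => Real.log (fq (NS k)) with hLg
  have hqpos : ∀ k, (0:ℝ) < fq (NS k) := by
    intro k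
    have h5 := hfN (NS k)
    have h6 := hNSge k
    have : 0 < fq (NS k) := by omega
    exact_mod_cast this
  have hLgQ : ∀ k, Q0 ≤ Lg k := by
    intro k
    rw [hLg, Real.le_log_iff_exp_le (hqpos k)]
    refine (Nat.le_ceil _).trans ?_
    have h5 := hfN (NS k)
    have h6 := hNSge k
    have h7 : ⌈Real.exp Q0⌉₊ ≤ fq (NS k) := by omega
    exact_mod_cast h7
  have hLgpos : ∀ k, 0 < Lg k := fun k => by linarith [hLgQ k]
  have hstep : ∀ k, 2 / ω * Lg k ≤ Lg (k+1) := by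
    intro k
    have : Real.exp (2 / ω * Lg k) ≤ fq (NS (k+1)) := by
      refine (Nat.le_ceil _).trans ?_
      have h5 := hfN (NS (k+1))
      have h6 := hNSs k
      have h7 : ⌈Real.exp (2 / ω * Lg k)⌉₊ ≤ fq (NS (k+1)) := by
        simp only [hLg]; omega
      exact_mod_cast h7
    rw [hLg] at *
    rwa [← Real.le_log_iff_exp_le (hqpos (k+1))] at this
  have hω2 : 1 ≤ 2 / ω := by rw [le_div_iff₀ hωp]; linarith
  have hLmono : Monotone Lg := monotone_nat_of_le_succ fun k => by
    have := hstep k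
    have i : Lg k ≤ 2 / ω * Lg k := le_mul_of_one_le_left (hLgpos k).le hω2
    linarith
  have hgap : ∀ i j, j < i → 2 / ω * Lg j ≤ Lg i := fun i j hij =>
    (hstep j).trans (hLmono hij)
  -- data
  let idx : Fin m → ℕ := fun h => m - 1 - h
  let N : Fin m → ℕ := fun h => NS (idx h)
  set R := Lg (m-1) with hRdef
  have hR : 0 < R := hLgpos _
  set lq : Fin m → ℝ := fun h => Lg (idx h) with hlq
  have hlqR : ∀ h, lq h ≤ R := fun h => hLmono (Nat.sub_le _ _)
  have hlqp : ∀ h, 0 < lq h := fun h => hLgpos _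
  have hlqQ : ∀ h, Q0 ≤ lq h := fun h => hLgQ _
  set r : Fin m → ℕ := fun h => ⌈R / lq h⌉₊ with hrdef
  have hr_ge : ∀ h, R ≤ r h * lq h := by
    intro h
    have := Nat.le_ceil (R / lq h)
    rwa [div_le_iff₀ (hlqp h)] at this
  have hr_le : ∀ h, (r h : ℝ) * lq h ≤ 2 * R := by
    intro h
    have h5 : (r h : ℝ) ≤ R / lq h + 1 := (Nat.ceil_lt_add_one (by have := hlqp h; positivity)).le
    calc (r h : ℝ) * lq h ≤ (R / lq h + 1) * lq h := by gcongr
      _ = R + lq h := by have := (hlqp h).ne'; field_simp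
      _ ≤ 2 * R := by linarith [hlqR h]
  have hr1 : ∀ h, 1 ≤ r h := by
    intro h
    rw [hrdef, Nat.one_le_ceil_iff]
    have := hlqp h
    positivity
  have hrQ : ∀ h, (r h : ℝ) * Q0 ≤ 2 * R := by
    intro h
    refine le_trans ?_ (hr_le h)
    gcongr; exact hlqQ h
  have hSgQ : ((∑ h, r h : ℕ) : ℝ) * Q0 ≤ 2 * m * R := by
    push_cast
    rw [Finset.sum_mul]
    calc ∑ h, (r h : ℝ) * Q0 ≤ ∑ h : Fin m, 2 * R := Finset.sum_le_sum fun h _ => hrQ h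
      _ = _ := by simp; ring
  have hqN : ∀ h, q0 ≤ fq (N h) ∧ 1 ≤ fq (N h) := by
    intro h
    have h5 := hfN (N h)
    have h6 : NS 0 ≤ N h := hNSge _
    omega
  have hlqe : ∀ h, Real.log (fq (N h)) = lq h := fun h => rfl
  choose u v l hu hv hd hu0 hv0 hu1 hv1 hu2 hv2 hls hlb using fun h =>
    hlat (fq (N h)) (fp (N h)) (fs (N h)) (hqN h).1 (hqN h).2 (hf1 (N h)) (hf2 (N h))
  simp only [hlqe] at hls hlb
  have hl4 : ∀ h i, (r h : ℝ) * |l h i| ≤ 4 * R := by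
    intro h i
    calc (r h : ℝ) * |l h i| ≤ r h * (2 * lq h) := by gcongr; exact hlb h i
      _ ≤ 4 * R := by linarith [hr_le h]
  have hlsum : ∀ h, (r h : ℝ) * (l h 0 + l h 1 + l h 2) ≤ -τ * R := by
    intro h
    calc (r h : ℝ) * (l h 0 + l h 1 + l h 2) ≤ r h * (-τ * lq h) := by gcongr; exact hls h
      _ = -τ * (r h * lq h) := by ring
      _ ≤ -τ * R := by nlinarith [hr_ge h]
  obtain ⟨x, hx0, hxb, hxc, hxz⟩ := haux r l R hR hl4 hlsum
  have hbig : ((∑ h, r h : ℕ) : ℝ) * Real.log (24 * c) < τ * m * R / 12 := by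
    have h5 : 24 * Real.log (24 * c) < Q0 * τ := by rwa [div_lt_iff₀ hτ] at hQ02
    have hSp : (0:ℝ) < ((∑ h, r h : ℕ) : ℝ) := by
      have : 0 < ∑ h, r h := Finset.sum_pos (fun h _ => hr1 h) ⟨⟨0, hm⟩, Finset.mem_univ _⟩
      exact_mod_cast this
    have h6 : ((∑ h, r h : ℕ) : ℝ) * (24 * Real.log (24 * c)) < ((∑ h, r h : ℕ) : ℝ) * (Q0 * τ) := by
      gcongr
    have h7 : ((∑ h, r h : ℕ) : ℝ) * Q0 * τ ≤ 2 * m * R * τ := by gcongr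
    linarith
  have hvan := GG_vanish hm r hr1 u v x α h0 h1 l R τ c hR hτ hc hl4 hu0 hv0 hu1 hv1 hu2 hv2 hxc hxz hbig
  obtain ⟨t0, ht0, hxt0, hmin⟩ := exists_min r x hx0
  have hco := Th_GG_coeff r u v x hd (fun h => fp (N h)) (fun h => (fq (N h) : ℤ)) (fun h => fs (N h))
    (fun h => by have := (hqN h).2; omega) hu hv (fun h => t0 h 2) hmin
  set P := PP r x (fun h => t0 h 2) with hP
  have hP0 : P ≠ 0 := by
    intro h
    have := PP_coeff r x t0 ht0
    rw [← hP, h, coeff_zero] at this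
    exact hxt0 this.symm
  have hroth' := hroth r (fun h => - fp (N h)) (fun h => (fq (N h) : ℤ)) R P hP0 (PP_degree r x _) hr1
    (fun h => by have := (hqN h).2; omega) (fun h => (hfc (N h)).neg_left)
    (by
      intro i j hij
      have h5 : 2 / ω * lq j ≤ lq i := by
        apply hgap
        simp only [idx]
        have := i.2; have := j.2
        have : (i:ℕ) < j := hij
        omega
      have h6 := hr_le i
      have h7 := hr_ge j
      have h8 : 2 * lq j ≤ ω * lq i := by
        have : ω * (2 / ω * lq j) ≤ ω * lq i := by gcongr
        have e : ω * (2 / ω * lq j) = 2 * lq j := by field_simp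
        linarith
      have h9 : (r i : ℝ) * lq i ≤ (ω * r j) * lq i := by
        calc (r i : ℝ) * lq i ≤ 2 * R := h6
          _ ≤ 2 * (r j * lq j) := by linarith
          _ = r j * (2 * lq j) := by ring
          _ ≤ r j * (ω * lq i) := by gcongr
          _ = _ := by ring
      have h10 := le_of_mul_le_mul_right h9 (hlqp i)
      refine h10.trans ?_
      gcongr)
    (by
      intro h
      have := hr_ge h
      rw [← hlqe] at this
      simpa using this)
    (by
      intro h
      have h5 := hrQ h
      have h6 : 2 ≤ Q0 * ω := by rwa [div_le_iff₀ hωp] at hQ03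
      have h7 : (r h : ℝ) * 2 ≤ r h * (Q0 * ω) := by gcongr
      have h8 : (r h : ℝ) * Q0 * ω ≤ 2 * R * ω := by gcongr
      have h9 : ω * R ≤ ω0 * R := by gcongr
      linarith)
    (by
      have h5 := PP_zn r x (fun h => t0 h 2) c hc hxb
      have h6 : Real.log (zn P) ≤ ((∑ h, r h : ℕ) : ℝ) * Real.log (8 * c) := by
        rw [← Real.log_pow]
        exact Real.log_le_log (by linarith [one_le_zn hP0]) h5
      refine h6.trans ?_
      have h7 : 2 * m * Real.log (8 * c) ≤ Q0 * ω := by rwa [div_le_iff₀ hωp] at hQ04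
      have h8 : ((∑ h, r h : ℕ) : ℝ) * (2 * m * Real.log (8 * c)) ≤ ((∑ h, r h : ℕ) : ℝ) * (Q0 * ω) := by gcongr
      have h9 : ((∑ h, r h : ℕ) : ℝ) * Q0 * ω ≤ 2 * m * R * ω := by gcongr
      have h10 : (((∑ h, r h : ℕ) : ℝ) * Real.log (8 * c)) * (2 * m) ≤ (ω * R) * (2 * m) := by linarith
      have h11 := le_of_mul_le_mul_right h10 (by positivity)
      have h12 : ω * R ≤ ω0 * R := by gcongr
      linarith)
  obtain ⟨I, hI, hIs⟩ := hroth'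
  rw [← hco] at hI
  obtain ⟨e, he, heI⟩ := Th_coeff u v _ _ I hI
  apply he
  apply hvan
  simp only [heI]
  exact hIs

end PalCF

namespace PalCF

lemma cfDen_pos (a : ℕ → ℕ) (ha : ∀ n, 1 ≤ n → 1 ≤ a n) : ∀ n, 1 ≤ cfDen a n ∧ 1 ≤ cfDen a (n+1) := by
  intro n
  induction n with
  | zero => exact ⟨by simp [cfDen], by simpa [cfDen] using ha 1 le_rfl⟩
  | succ n ih =>
    refine ⟨ih.2, ?_⟩
    have : cfDen a (n+2) = a (n + 2) * cfDen a (n + 1) + cfDen a n := rfl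
    rw [this]; omega

lemma cfDen_mono (a : ℕ → ℕ) (ha : ∀ n, 1 ≤ n → 1 ≤ a n) (n : ℕ) : cfDen a n ≤ cfDen a (n+1) := by
  cases n with
  | zero => simpa [cfDen] using ha 1 le_rfl
  | succ n =>
    have : cfDen a (n+2) = a (n + 2) * cfDen a (n + 1) + cfDen a n := rfl
    have h1 := ha (n+2) (by omega)
    rw [this]; nlinarith

lemma cfDen_ge (a : ℕ → ℕ) (ha : ∀ n, 1 ≤ n → 1 ≤ a n) (n : ℕ) : n + 1 ≤ cfDen a (n+1) := by
  induction n with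
  | zero => exact (cfDen_pos a ha 0).2
  | succ n ih =>
    have : cfDen a (n+2) = a (n + 2) * cfDen a (n + 1) + cfDen a n := rfl
    have h1 := ha (n+2) (by omega)
    have h2 := (cfDen_pos a ha n).1
    rw [this]; nlinarith

lemma cf_det (a : ℕ → ℕ) (n : ℕ) :
    (cfNum a (n+1) : ℤ) * cfDen a n - cfNum a n * cfDen a (n+1) = (-1)^n := by
  induction n with
  | zero => simp [cfNum, cfDen]
  | succ n ih =>
    have e1 : cfDen a (n+2) = a (n + 2) * cfDen a (n + 1) + cfDen a n := rfl
    have e2 : cfNum a (n+2) = a (n + 2) * cfNum a (n + 1) + cfNum a n := rfl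
    rw [e1, e2, pow_succ, ← ih]
    push_cast; ring

lemma cf_dist (a : ℕ → ℕ) (ha : ∀ n, 1 ≤ n → 1 ≤ a n) (n k : ℕ) :
    (0 ≤ (-1)^n * ((cfDen a n : ℤ) * cfNum a (n+k) - cfNum a n * cfDen a (n+k)) ∧
     (-1)^n * ((cfDen a n : ℤ) * cfNum a (n+k) - cfNum a n * cfDen a (n+k)) * cfDen a (n+1) ≤ cfDen a (n+k)) ∧
    (0 ≤ (-1)^n * ((cfDen a n : ℤ) * cfNum a (n+k+1) - cfNum a n * cfDen a (n+k+1)) ∧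
     (-1)^n * ((cfDen a n : ℤ) * cfNum a (n+k+1) - cfNum a n * cfDen a (n+k+1)) * cfDen a (n+1) ≤ cfDen a (n+k+1)) := by
  induction k with
  | zero =>
    have h := cf_det a n
    have e : (cfDen a n : ℤ) * cfNum a (n+0+1) - cfNum a n * cfDen a (n+0+1) = (-1)^n := by
      rw [← h]; simp only [add_zero]; ring
    have e' : (cfDen a n : ℤ) * cfNum a (n+0) - cfNum a n * cfDen a (n+0) = 0 := by
      simp only [add_zero]; ring
    rw [e, e', ← mul_pow]
    simp
  | succ k ih =>
    refine ⟨ih.2, ?_⟩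
    have e1 : cfDen a (n+(k+1)+1) = a (n + k + 2) * cfDen a (n + k + 1) + cfDen a (n+k) := rfl
    have e2 : cfNum a (n+(k+1)+1) = a (n + k + 2) * cfNum a (n + k + 1) + cfNum a (n+k) := rfl
    obtain ⟨⟨i1, i2⟩, i3, i4⟩ := ih
    have e3 : (-1)^n * ((cfDen a n : ℤ) * cfNum a (n+(k+1)+1) - cfNum a n * cfDen a (n+(k+1)+1)) =
      a (n+k+2) * ((-1)^n * ((cfDen a n : ℤ) * cfNum a (n+k+1) - cfNum a n * cfDen a (n+k+1)))
      + (-1)^n * ((cfDen a n : ℤ) * cfNum a (n+k) - cfNum a n * cfDen a (n+k)) := by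
      rw [e1, e2]; push_cast; ring
    rw [e3]
    refine ⟨by positivity, ?_⟩
    rw [e1]
    push_cast
    have ha0 : (0:ℤ) ≤ a (n+k+2) := by positivity
    have := mul_le_mul_of_nonneg_left i4 ha0
    linarith

lemma cf_approx (a : ℕ → ℕ) (ha : ∀ n, 1 ≤ n → 1 ≤ a n) (α : ℝ)
    (hα : Tendsto (fun n => (cfNum a n : ℝ) / cfDen a n) atTop (𝓝 α)) (n : ℕ) :
    |(cfDen a n : ℝ) * α - cfNum a n| ≤ 1 / cfDen a (n+1) := by
  have h1 : Tendsto (fun j => |(cfDen a n : ℝ) * ((cfNum a j : ℝ) / cfDen a j) - cfNum a n|) atTop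
      (𝓝 |(cfDen a n : ℝ) * α - cfNum a n|) := ((hα.const_mul _).sub_const _).abs
  refine le_of_tendsto h1 ?_
  filter_upwards [eventually_ge_atTop n] with j hj
  obtain ⟨k, rfl⟩ := Nat.exists_eq_add_of_le hj
  obtain ⟨⟨i1, i2⟩, -⟩ := cf_dist a ha n k
  have hp : (0:ℝ) < cfDen a (n+k) := by exact_mod_cast (cfDen_pos a ha (n+k)).1
  have hp1 : (0:ℝ) < cfDen a (n+1) := by exact_mod_cast (cfDen_pos a ha n).2
  have e : (cfDen a n : ℝ) * ((cfNum a (n+k) : ℝ) / cfDen a (n+k)) - cfNum a n =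
    ((cfDen a n : ℝ) * cfNum a (n+k) - cfNum a n * cfDen a (n+k)) / cfDen a (n+k) := by
    field_simp
  have hab : |(cfDen a n : ℤ) * cfNum a (n+k) - cfNum a n * cfDen a (n+k)| * cfDen a (n+1) ≤ cfDen a (n+k) := by
    have e2 : |(cfDen a n : ℤ) * cfNum a (n+k) - cfNum a n * cfDen a (n+k)| =
        (-1)^n * ((cfDen a n : ℤ) * cfNum a (n+k) - cfNum a n * cfDen a (n+k)) := by
      rw [← abs_of_nonneg i1, abs_mul, abs_pow, abs_neg, abs_one, one_pow, one_mul]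
    rw [e2]; exact i2
  have habr : |(cfDen a n : ℝ) * cfNum a (n+k) - cfNum a n * cfDen a (n+k)| * cfDen a (n+1) ≤ cfDen a (n+k) := by
    exact_mod_cast hab
  rw [e, abs_div, abs_of_pos hp, div_le_div_iff₀ hp hp1]
  linarith

lemma cf_irrational (a : ℕ → ℕ) (ha : ∀ n, 1 ≤ n → 1 ≤ a n) (α : ℝ)
    (hα : Tendsto (fun n => (cfNum a n : ℝ) / cfDen a n) atTop (𝓝 α)) : Irrational α := by
  rintro ⟨x, rfl⟩
  have hz : ∀ n, x.den ≤ n → (cfDen a n : ℤ) * x.num - cfNum a n * x.den = 0 := by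
    intro n hn
    have h1 := cf_approx a ha x hα n
    have hd : (0:ℝ) < x.den := by exact_mod_cast x.den_pos
    have hq : (x.den : ℝ) < cfDen a (n+1) := by
      have := cfDen_ge a ha n
      have : x.den < cfDen a (n+1) := by omega
      exact_mod_cast this
    have hx : (x:ℝ) = x.num / x.den := by exact_mod_cast (Rat.num_div_den x).symm
    have e : (((cfDen a n : ℤ) * x.num - cfNum a n * x.den : ℤ) : ℝ) = ((cfDen a n : ℝ) * x - cfNum a n) * x.den := by
      rw [hx]; push_cast; field_simp
    have h2 : |(((cfDen a n : ℤ) * x.num - cfNum a n * x.den : ℤ) : ℝ)| < 1 := by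
      rw [e, abs_mul, abs_of_pos hd]
      calc _ ≤ 1 / (cfDen a (n+1) : ℝ) * x.den := by gcongr
        _ < 1 := by
          rw [one_div_mul_eq_div, div_lt_one (by linarith)]
          exact hq
    rw [← Int.cast_abs] at h2
    have h3 : |(cfDen a n : ℤ) * x.num - cfNum a n * x.den| < 1 := by exact_mod_cast h2
    exact Int.abs_lt_one_iff.mp h3
  have h1 := hz x.den le_rfl
  have h2 := hz (x.den + 1) (by omega)
  have h3 := cf_det a x.den
  have h4 : (x.den : ℤ) * (-1)^x.den = 0 := by
    rw [← h3]
    linear_combination (cfDen a (x.den+1) : ℤ) * h1 - (cfDen a x.den : ℤ) * h2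
  have h5 : (x.den : ℤ) ≠ 0 := by exact_mod_cast x.den_nz
  have h6 : ((-1:ℤ))^x.den ≠ 0 := pow_ne_zero _ (by norm_num)
  exact (mul_ne_zero h5 h6) h4

lemma cf_matrix (a : ℕ → ℕ) (n : ℕ) :
    ((List.range (n+1)).map (fun i => !![a (i+1), 1; 1, 0])).prod =
      !![cfDen a (n+1), cfDen a n; cfNum a (n+1), cfNum a n] := by
  induction n with
  | zero => simp [cfDen, cfNum]
  | succ n ih =>
    rw [List.range_succ, List.map_append, List.prod_append, ih]
    have e1 : cfDen a (n+1+1) = a (n + 2) * cfDen a (n + 1) + cfDen a n := rfl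
    have e2 : cfNum a (n+1+1) = a (n + 2) * cfNum a (n + 1) + cfNum a n := rfl
    rw [e1, e2]
    simp [Matrix.mul_fin_two, mul_comm]

lemma cf_pal (a : ℕ → ℕ) (n : ℕ) (h : ∀ j, 1 ≤ j → j ≤ n + 1 → a j = a (n + 1 + 1 - j)) :
    cfNum a (n+1) = cfDen a n := by
  have h1 := cf_matrix a n
  set l := (List.range (n+1)).map (fun i => (!![a (i+1), 1; 1, 0] : Matrix (Fin 2) (Fin 2) ℕ)) with hl
  have hT : l.map Matrix.transpose = l := by
    rw [hl, List.map_map]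
    apply List.map_congr_left
    intro i _
    ext x y
    fin_cases x <;> fin_cases y <;> rfl
  have hrev : l.reverse = l := by
    apply List.ext_getElem
    · simp
    · intro i h1 h2
      have hi : i < n + 1 := by simpa [hl] using h2
      rw [List.getElem_reverse]
      simp only [hl, List.getElem_map, List.getElem_range, List.length_map, List.length_range]
      have := h (i+1) (by omega) (by omega)
      rw [this]
      congr 5
      omega
  have h2 : Matrix.transpose l.prod = l.prod := by
    rw [Matrix.transpose_list_prod, hT, hrev]
  rw [h1] at h2
  have := congrFun (congrFun h2 0) 1
  simpa using this

lemma cf_final (a : ℕ → ℕ) (ha : ∀ n, 1 ≤ n → 1 ≤ a n)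
    (hpal : ∀ N : ℕ, ∃ n, N ≤ n ∧ ∀ j, 1 ≤ j → j ≤ n → a j = a (n + 1 - j))
    (α : ℝ)
    (hα : Tendsto (fun n => (cfNum a n : ℝ) / cfDen a n) atTop (𝓝 α)) :
    Transcendental ℚ α ∨ (Irrational α ∧ (minpoly ℚ α).natDegree = 2) := by
  by_contra hcon
  push Not at hcon
  obtain ⟨halg, hdeg⟩ := hcon
  have halg : IsAlgebraic ℚ α := by simpa [Transcendental] using halg
  have hirr := cf_irrational a ha α hα
  have hdeg := hdeg hirr
  have hnn : 0 ≤ α := ge_of_tendsto' hα fun n => by positivity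
  have h0 : 0 < α := lt_of_le_of_ne hnn (fun h => hirr.ne_zero h.symm)
  have h1 : α ≤ 1 := by
    have := cf_approx a ha α hα 0
    simp only [cfDen, cfNum, Nat.cast_one, Nat.cast_zero, one_mul, sub_zero, abs_of_pos h0, zero_add] at this
    refine this.trans ?_
    have h5 : (1:ℝ) ≤ a 1 := by exact_mod_cast ha 1 le_rfl
    rw [div_le_one (by linarith)]
    exact h5
  have hintg : IsIntegral ℚ α := halg.isIntegral
  have h3 : ∀ x y z : ℤ, (x:ℝ) + y * α + z * α^2 = 0 → x = 0 ∧ y = 0 ∧ z = 0 := by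
    intro x y z h
    have hz : z = 0 := by
      by_contra hz
      have hzq : (z:ℚ) ≠ 0 := by exact_mod_cast hz
      have hdegP := Polynomial.natDegree_quadratic (a := (z:ℚ)) (b := (y:ℚ)) (c := (x:ℚ)) hzq
      set P : Polynomial ℚ := Polynomial.C (z:ℚ) * Polynomial.X ^ 2 + Polynomial.C (y:ℚ) * Polynomial.X + Polynomial.C (x:ℚ) with hP
      have hP0 : P ≠ 0 := by intro h; rw [h] at hdegP; simp at hdegP
      have hroot : Polynomial.aeval α P = 0 := by
        simp [hP]; linarith
      have hle : (minpoly ℚ α).natDegree ≤ 2 := by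
        rw [← hdegP]
        exact Polynomial.natDegree_le_of_dvd (minpoly.dvd ℚ α hroot) hP0
      have hpos := minpoly.natDegree_pos hintg
      have hne1 : (minpoly ℚ α).natDegree ≠ 1 := by
        intro h
        rw [minpoly.natDegree_eq_one_iff] at h
        obtain ⟨w, hw⟩ := h
        exact hirr ⟨w, by simpa using hw⟩
      omega
    subst hz
    have hy : y = 0 := by
      by_contra hy
      have hyr : (y:ℝ) ≠ 0 := by exact_mod_cast hy
      apply hirr
      refine ⟨-(x:ℚ)/y, ?_⟩
      push_cast
      field_simp
      simp at h
      linarith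
    subst hy
    simp at h
    exact ⟨h, rfl, rfl⟩
  refine no_sequence α halg h0 h1 h3 fun N => ?_
  obtain ⟨n, hn, hp⟩ := hpal (N+1)
  obtain ⟨k, rfl⟩ : ∃ k, n = k + 1 := ⟨n - 1, by omega⟩
  have hpk := cf_pal a k hp
  refine ⟨cfDen a (k+1), cfNum a (k+1), cfNum a k, ?_, ?_, ?_, ?_⟩
  · have := cfDen_ge a ha k; omega
  · have hdet := cf_det a k
    refine ⟨(-1)^k * cfDen a k, -((-1)^k * cfNum a k), ?_⟩
    have e : ((-1:ℤ)^k) * (-1)^k = 1 := by rw [← mul_pow]; simp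
    linear_combination ((-1:ℤ)^k) * hdet + e
  · refine le_trans (by simpa using cf_approx a ha α hα (k+1)) ?_
    have h5 : (0:ℝ) < cfDen a (k+1) := by exact_mod_cast (cfDen_pos a ha k).2
    have h6 : (cfDen a (k+1) : ℝ) ≤ cfDen a (k+1+1) := by exact_mod_cast cfDen_mono a ha (k+1)
    rw [← one_div]
    exact one_div_le_one_div_of_le h5 h6
  · rw [hpk]
    simpa using cf_approx a ha α hα k

end PalCF

/-- If the sequence of partial quotients of `α = [0; a 1, a 2, ...]` begins in
arbitrarily long palindromes, then `α` is quadratic irrational or transcendental. -/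
theorem statement0 (a : ℕ → ℕ) (ha : ∀ n, 1 ≤ n → 1 ≤ a n)
    (hpal : ∀ N : ℕ, ∃ n, N ≤ n ∧ ∀ j, 1 ≤ j → j ≤ n → a j = a (n + 1 - j))
    (α : ℝ)
    (hα : Tendsto (fun n => (cfNum a n : ℝ) / cfDen a n) atTop (𝓝 α)) :
    Transcendental ℚ α ∨ (Irrational α ∧ (minpoly ℚ α).natDegree = 2) := by
  exact PalCF.cf_final a ha hpal α hα
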